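/- For every integer n ≥ 2 and every real number p with 1 ≤ p < n/(n-1) there exists a constant C = C(n,p) > 0, depending only on n and p, with the following property. Let (α,β) ⊆ ℝ be a bounded open interval, let a_j ∈ C^{n-1,1}([α,β], ℂ) for j = 1,…,n, and let λ : (α,β) → ℂ be a continuous function such that λ(t)^n + Σ_{j=1}^n a_j(t) λ(t)^{n-j} = 0 for all t ∈ (α,β). Then λ is absolutely continuous on (α,β), its almost-everywhere derivative λ' belongs to L^p((α,β)), and ‖λ'‖_{L^p((α,β))} ≤ C · max{1, (β-α)^{1/p}} · max_{1≤j≤n} ‖a_j‖_{C^{n-1,1}([α,β])}^{1/j}. -/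

import Mathlib

open Set MeasureTheory Real

noncomputable section

/-- `f` is absolutely continuous on the set `S` : for every `ε > 0` there is `δ > 0` such
that for any finitely many non-overlapping intervals `[u i, v i] ⊆ S` of total length `< δ`
the sum `∑ ‖f (v i) - f (u i)‖` is `< ε`. -/
def AbsContOn {E : Type*} [NormedAddCommGroup E] (f : ℝ → E) (S : Set ℝ) : Prop :=
  ∀ ε : ℝ, 0 < ε → ∃ δ : ℝ, 0 < δ ∧
    ∀ (N : ℕ) (u v : Fin N → ℝ),
      (∀ i, u i ≤ v i ∧ Set.Icc (u i) (v i) ⊆ S) →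
      (∀ i j, i ≠ j → Disjoint (Set.Ioo (u i) (v i)) (Set.Ioo (u j) (v j))) →
      (∑ i, (v i - u i)) < δ →
      (∑ i, ‖f (v i) - f (u i)‖) < ε

/-- `d (i+1)` is the derivative of `d i` on `S` for all `i < k`; thus `d i` is the `i`-th
derivative of `d 0` on `S` for `i ≤ k`. -/
def DerivChain {E : Type*} [NormedAddCommGroup E] [NormedSpace ℝ E]
    (d : ℕ → ℝ → E) (k : ℕ) (S : Set ℝ) : Prop :=
  ∀ i < k, ∀ x ∈ S, HasDerivWithinAt (d i) (d (i + 1) x) S x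

/-- Hölder constant of exponent `a` of `g` on `S`. -/
def HolderConst {E : Type*} [NormedAddCommGroup E] (a : ℝ) (S : Set ℝ) (g : ℝ → E) : ℝ :=
  sSup {r : ℝ | ∃ x ∈ S, ∃ y ∈ S, x ≠ y ∧ r = ‖g x - g y‖ / |x - y| ^ a}

/-- Membership in `C^{k,1}(S)`, encoded via the chain of derivatives `d`:
`d 0` is `k` times differentiable with `i`-th derivative `d i`, and the top
derivative `d k` is Lipschitz. -/
def MemCk1 {E : Type*} [NormedAddCommGroup E] [NormedSpace ℝ E]
    (d : ℕ → ℝ → E) (k : ℕ) (S : Set ℝ) : Prop :=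
  DerivChain d k S ∧ ∃ L : ℝ, ∀ x ∈ S, ∀ y ∈ S, ‖d k x - d k y‖ ≤ L * |x - y|

/-- The `C^{k,1}`-norm: sup of all derivatives up to order `k` plus the Lipschitz
(Hölder-1) constant of the `k`-th derivative. -/
def CNorm {E : Type*} [NormedAddCommGroup E] (d : ℕ → ℝ → E) (k : ℕ) (S : Set ℝ) : ℝ :=
  sSup {r : ℝ | ∃ i ≤ k, ∃ x ∈ S, r = ‖d i x‖} + HolderConst 1 S (d k)

/-- existence of a finite partition of `[x,y]` of mesh `≤ δ` with Riesz sum `≤ B`. -/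
inductive HasPart (f : ℝ → ℂ) (p δ : ℝ) : ℝ → ℝ → ℝ → Prop
  | base {x y B : ℝ} (hxy : x ≤ y) (hd : y - x ≤ δ)
      (hB : ‖f y - f x‖ ^ p * (y - x) ^ (1 - p) ≤ B) : HasPart f p δ x y B
  | glue {x z y B₁ B₂ B : ℝ} (h₁ : HasPart f p δ x z B₁) (h₂ : HasPart f p δ z y B₂)
      (hB : B₁ + B₂ ≤ B) : HasPart f p δ x y B

theorem HasPart.mono {f : ℝ → ℂ} {p δ x y B B' : ℝ} (h : HasPart f p δ x y B) (hB : B ≤ B') :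
    HasPart f p δ x y B' := by
  cases h with
  | base hxy hd h => exact .base hxy hd (h.trans hB)
  | glue h₁ h₂ h => exact .glue h₁ h₂ (h.trans hB)

theorem HasPart.le {f : ℝ → ℂ} {p δ x y B : ℝ} (h : HasPart f p δ x y B) : x ≤ y := by
  induction h with
  | base hxy _ _ => exact hxy
  | glue _ _ _ ih₁ ih₂ => exact ih₁.trans ih₂

theorem HasPart.refl {f : ℝ → ℂ} {p δ x : ℝ} (hp : 1 ≤ p) (hd : 0 ≤ δ) : HasPart f p δ x x 0 := by
  refine .base le_rfl (by simpa using hd) ?_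
  have : (0:ℝ) ^ p = 0 := Real.zero_rpow (by linarith)
  simp [this]

/-- affine change of variables -/
theorem HasPart.scale {f g : ℝ → ℂ} {p δ x y B : ℝ} {m r s : ℝ} (hm : 0 ≤ m) (hr : 0 < r)
    (hfg : ∀ t, f (s + r * t) = (m : ℂ) * g t)
    (h : HasPart g p δ x y B) :
    HasPart f p (r * δ) (s + r * x) (s + r * y) (m ^ p * r ^ (1 - p) * B) := by
  induction h with
  | @base x y B hxy hd hB =>
    refine .base (by nlinarith) (by nlinarith) ?_
    have e : s + r * y - (s + r * x) = r * (y - x) := by ring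
    rw [hfg, hfg, ← mul_sub, norm_mul, e, Real.mul_rpow (by positivity) (by positivity),
      Real.mul_rpow hr.le (by linarith)]
    have : ‖(m:ℂ)‖ = m := by simp [abs_of_nonneg hm]
    rw [this]
    calc m ^ p * ‖g y - g x‖ ^ p * (r ^ (1 - p) * (y - x) ^ (1 - p))
        = m ^ p * r ^ (1 - p) * (‖g y - g x‖ ^ p * (y - x) ^ (1 - p)) := by ring
      _ ≤ _ := by gcongr
  | @glue x z y B₁ B₂ B _ _ hB ih₁ ih₂ =>
    refine .glue ih₁ ih₂ ?_
    rw [← mul_add]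
    gcongr

theorem HasPart.iter {f : ℝ → ℂ} {p δ : ℝ} (hp : 1 ≤ p) (hd : 0 ≤ δ) (c B : ℕ → ℝ) (N : ℕ)
    (h : ∀ j < N, HasPart f p δ (c j) (c (j + 1)) (B j)) :
    HasPart f p δ (c 0) (c N) (∑ j ∈ Finset.range N, B j) := by
  induction N with
  | zero => simpa using HasPart.refl hp hd
  | succ N ih =>
    refine .glue (ih fun j hj => h j (by omega)) (h N (by omega)) ?_
    rw [Finset.sum_range_succ]

/-- gluing over the uniform grid of `[0,1]` -/
theorem HasPart.grid {f : ℝ → ℂ} {p δ : ℝ} (hp : 1 ≤ p) (hd : 0 ≤ δ) (N : ℕ) (hN : 0 < N)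
    (B : ℕ → ℝ) (hB : ∀ j < N, 0 ≤ B j) {u v : ℝ} (hu : 0 ≤ u) (huv : u ≤ v) (hv : v ≤ 1)
    (h : ∀ j < N, ∀ x y : ℝ, 0 ≤ x → x ≤ y → y ≤ 1 →
      u ≤ (j + x) / N → (j + y) / N ≤ v →
      HasPart (fun s => f ((j + s) / N)) p (N * δ) x y (B j)) :
    HasPart f p δ u v (∑ j ∈ Finset.range N, (N : ℝ) ^ (p - 1) * B j) := by
  have hN' : (0:ℝ) < N := by exact_mod_cast hN
  set c : ℕ → ℝ := fun j => max u (min v (j / N)) with hc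
  have h0 : c 0 = u := by simp [hc]; right; linarith
  have h1 : c N = v := by
    have : (N:ℝ) / N = 1 := div_self hN'.ne'
    simp [hc, this, hv, huv]
  have := HasPart.iter (f := f) hp hd c (fun j => (N : ℝ) ^ (p - 1) * B j) N ?_
  · rwa [h0, h1] at this
  intro j hj
  have hjj : (j:ℝ) / N ≤ ((j + 1 : ℕ) : ℝ) / N := by
    gcongr; simp
  rcases eq_or_lt_of_le (show c j ≤ c (j+1) from max_le_max le_rfl (min_le_min le_rfl hjj)) with e | e
  · rw [← e]
    exact (HasPart.refl hp hd).mono (mul_nonneg (by positivity) (hB j hj))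
  · have hcv : ∀ j, c j ≤ v := fun j => max_le huv (min_le_left _ _)
    have hcu : ∀ j, u ≤ c j := fun j => le_max_left _ _
    have a1 : (j:ℝ) / N ≤ c j := by
      by_contra hh
      push Not at hh
      have : v ≤ c j := by
        simp only [hc] at hh ⊢
        rcases le_total v ((j:ℝ)/N) with h | h
        · rw [min_eq_left h]; exact le_max_right _ _
        · rw [min_eq_right h] at hh; exact absurd (le_max_right u ((j:ℝ)/N)) (not_le.2 hh)
      linarith [hcv (j+1)]
    have a2 : c (j+1) ≤ ((j + 1 : ℕ) : ℝ) / N := by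
      by_contra hh
      push Not at hh
      have : c (j+1) ≤ u := by
        simp only [hc] at hh ⊢
        rcases lt_max_iff.1 hh with h | h
        · exact max_le le_rfl ((min_le_right _ _).trans h.le)
        · exact absurd (min_le_right v (((j + 1 : ℕ) : ℝ)/N)) (not_le.2 h)
      linarith [hcu j]
    push_cast at a2
    rw [div_le_iff₀ hN'] at a1
    rw [le_div_iff₀ hN'] at a2
    have e1 : ∀ j', ((j:ℝ) + (N * c j' - j)) / N = c j' := by intro j'; field_simp; ring
    have := h j hj (N * c j - j) (N * c (j+1) - j) (by linarith) (by nlinarith) (by linarith)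
      (by rw [e1]; exact hcu j) (by rw [e1]; exact hcv _)
    have := HasPart.scale (f := f) (m := 1) (r := 1 / N) (s := j / N) zero_le_one (by positivity)
      (fun t => by simp only [Complex.ofReal_one, one_mul]; congr 1; field_simp) this
    have e2 : (1 / (N:ℝ)) * (N * δ) = δ := by field_simp
    have e3 : ∀ j', (j:ℝ) / N + 1 / N * (N * c j' - j) = c j' := by intro j'; field_simp; ring
    rw [e2, e3, e3] at this
    refine this.mono (le_of_eq ?_)
    rw [Real.one_rpow, one_mul, one_div, Real.inv_rpow hN'.le, ← Real.rpow_neg hN'.le]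
    congr 2; ring

theorem HasPart.congr_const_mul {f g : ℝ → ℂ} {p δ x y B m : ℝ} (hm : 0 ≤ m)
    (hfg : ∀ t, f t = (m : ℂ) * g t) (h : HasPart g p δ x y B) :
    HasPart f p δ x y (m ^ p * B) := by
  have := HasPart.scale (f := f) (s := 0) (r := 1) hm one_pos (fun t => by simpa using hfg t) h
  simpa using this

/-- adding a Lipschitz function -/
theorem HasPart.add_lip {f g : ℝ → ℂ} {p δ x y B L : ℝ} (hp : 1 ≤ p) (hL : 0 ≤ L) (S : Set ℝ)
    (h : HasPart g p δ x y B) (hS : Icc x y ⊆ S)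
    (hfg : ∀ s ∈ S, ∀ t ∈ S, s ≤ t → ‖(f t - f s) - (g t - g s)‖ ≤ L * (t - s)) :
    HasPart f p δ x y (2 ^ (p - 1) * (B + L ^ p * (y - x))) := by
  induction h with
  | @base x y B hxy hd hB =>
    refine .base hxy hd ?_
    rcases eq_or_lt_of_le hxy with e | e
    · subst e
      have : (0:ℝ) ^ p = 0 := Real.zero_rpow (by linarith)
      simp [this] at hB ⊢
      positivity
    have h1 := hfg x (hS (left_mem_Icc.2 hxy)) y (hS (right_mem_Icc.2 hxy)) hxy
    have h2 : ‖f y - f x‖ ≤ ‖g y - g x‖ + L * (y - x) := by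
      calc ‖f y - f x‖ = ‖(g y - g x) + ((f y - f x) - (g y - g x))‖ := by congr 1; ring
        _ ≤ _ := (norm_add_le _ _).trans (by gcongr)
    have hyx : 0 < y - x := by linarith
    have h3 : ‖f y - f x‖ ^ p ≤ 2 ^ (p-1) * (‖g y - g x‖ ^ p + (L * (y-x)) ^ p) := by
      refine (Real.rpow_le_rpow (norm_nonneg _) h2 (by linarith)).trans ?_
      have := NNReal.rpow_add_le_mul_rpow_add_rpow ⟨‖g y - g x‖, norm_nonneg _⟩
        ⟨L * (y - x), by positivity⟩ hp
      exact_mod_cast this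
    calc _ ≤ 2 ^ (p-1) * (‖g y - g x‖ ^ p + (L * (y-x)) ^ p) * (y - x) ^ (1 - p) := by gcongr
      _ = 2 ^ (p-1) * (‖g y - g x‖ ^ p * (y - x) ^ (1 - p) +
            L ^ p * ((y-x) ^ p * (y - x) ^ (1 - p))) := by
          rw [Real.mul_rpow hL hyx.le]; ring
      _ ≤ _ := by
          rw [← Real.rpow_add hyx]
          have : p + (1 - p) = 1 := by ring
          rw [this, Real.rpow_one]
          gcongr
  | @glue x z y B₁ B₂ B h1 h2 hB ih₁ ih₂ =>
    refine .glue (ih₁ ((Icc_subset_Icc le_rfl h2.le).trans hS))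
      (ih₂ ((Icc_subset_Icc h1.le le_rfl).trans hS)) ?_
    rw [← mul_add]
    refine mul_le_mul_of_nonneg_left ?_ (by positivity)
    nlinarith

/-- truncated power series -/
def tp (n : ℕ) (c : ℕ → ℂ) (x : ℂ) : ℂ := ∑ k ∈ Finset.range n, c k * x ^ k

/-- order `n` polynomial approximability at each point of `[0,1]`. -/
def Wc (n : ℕ) (κ : ℝ) (f : ℝ → ℂ) : Prop :=
  ∀ t₀ ∈ Icc (0:ℝ) 1, ∃ c : ℕ → ℂ, ∀ t ∈ Icc (0:ℝ) 1,
    ‖f t - tp n c ((t - t₀ : ℝ) : ℂ)‖ ≤ κ * |t - t₀| ^ n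

/-- order `n` polynomial approximability with bounds for the coefficients. -/
def Cl (n : ℕ) (B : ℝ) (f : ℝ → ℂ) : Prop :=
  ∀ t₀ ∈ Icc (0:ℝ) 1, ∃ c : ℕ → ℂ, (∀ k, ‖c k‖ ≤ B) ∧ ∀ t ∈ Icc (0:ℝ) 1,
    ‖f t - tp n c ((t - t₀ : ℝ) : ℂ)‖ ≤ B * |t - t₀| ^ n

theorem Cl.wc {n : ℕ} {B : ℝ} {f : ℝ → ℂ} (h : Cl n B f) : Wc n B f := fun t₀ h₀ => by
  obtain ⟨c, -, hc⟩ := h t₀ h₀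
  exact ⟨c, hc⟩

theorem Cl.nonneg {n : ℕ} {B : ℝ} {f : ℝ → ℂ} (h : Cl n B f) : 0 ≤ B := by
  obtain ⟨c, hc, -⟩ := h 0 (by simp)
  exact (norm_nonneg _).trans (hc 0)

theorem Cl.mono {n : ℕ} {B B' : ℝ} {f : ℝ → ℂ} (h : Cl n B f) (hB : B ≤ B') : Cl n B' f :=
  fun t₀ h₀ => by
    obtain ⟨c, hc, h⟩ := h t₀ h₀
    exact ⟨c, fun k => (hc k).trans hB, fun t ht => (h t ht).trans (by gcongr)⟩

theorem Wc.mono {n : ℕ} {B B' : ℝ} {f : ℝ → ℂ} (h : Wc n B f) (hB : B ≤ B') : Wc n B' f :=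
  fun t₀ h₀ => by
    obtain ⟨c, h⟩ := h t₀ h₀
    exact ⟨c, fun t ht => (h t ht).trans (by gcongr)⟩

theorem tp_zero {n : ℕ} (hn : 1 ≤ n) (c : ℕ → ℂ) : tp n c 0 = c 0 := by
  unfold tp
  rw [Finset.sum_eq_single_of_mem 0 (by simp; omega)]
  · simp
  · intro k _ hk; simp [hk]

theorem tp_sub_le {n : ℕ} {c : ℕ → ℂ} {B : ℝ} (hc : ∀ k, ‖c k‖ ≤ B) {x : ℂ} (hx : ‖x‖ ≤ 1)
    (hn : 1 ≤ n) : ‖tp n c x - c 0‖ ≤ n * B * ‖x‖ := by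
  have hB : 0 ≤ B := (norm_nonneg _).trans (hc 0)
  obtain ⟨m, rfl⟩ : ∃ m, n = m + 1 := ⟨n - 1, by omega⟩
  unfold tp
  rw [Finset.sum_range_succ']
  simp only [pow_zero, mul_one, add_sub_cancel_right]
  refine (norm_sum_le _ _).trans ?_
  calc ∑ k ∈ Finset.range m, ‖c (k+1) * x ^ (k+1)‖ ≤ ∑ k ∈ Finset.range m, B * ‖x‖ := by
        refine Finset.sum_le_sum fun k _ => ?_
        rw [norm_mul, norm_pow]
        refine mul_le_mul (hc _) ?_ (by positivity) hB
        exact pow_le_of_le_one (norm_nonneg _) hx (by omega)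
    _ ≤ _ := by
        simp only [Finset.sum_const, Finset.card_range, nsmul_eq_mul]
        push_cast
        nlinarith [mul_nonneg hB (norm_nonneg x)]

theorem abs_sub_le_one {s t : ℝ} (hs : s ∈ Icc (0:ℝ) 1) (ht : t ∈ Icc (0:ℝ) 1) : |t - s| ≤ 1 := by
  rw [abs_le]; constructor <;> linarith [hs.1, hs.2, ht.1, ht.2]

theorem Wc.val {n : ℕ} {t₀ : ℝ} {f : ℝ → ℂ} {κ : ℝ} {c : ℕ → ℂ} (hn : 1 ≤ n)
    (h₀ : t₀ ∈ Icc (0:ℝ) 1) (h : ∀ t ∈ Icc (0:ℝ) 1,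
    ‖f t - tp n c ((t - t₀ : ℝ) : ℂ)‖ ≤ κ * |t - t₀| ^ n) : f t₀ = c 0 := by
  have := h t₀ h₀
  rw [sub_self, Complex.ofReal_zero, tp_zero hn, abs_zero, zero_pow (by omega), mul_zero] at this
  exact sub_eq_zero.1 (norm_le_zero_iff.1 this)

theorem Cl.bound {n : ℕ} {B : ℝ} {f : ℝ → ℂ} (hn : 1 ≤ n) (h : Cl n B f) {t : ℝ}
    (ht : t ∈ Icc (0:ℝ) 1) : ‖f t‖ ≤ B := by
  obtain ⟨c, hc, h⟩ := h t ht
  rw [Wc.val hn ht h]; exact hc 0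

theorem Cl.lip {n : ℕ} {B : ℝ} {f : ℝ → ℂ} (hn : 1 ≤ n) (h : Cl n B f) {s t : ℝ}
    (hs : s ∈ Icc (0:ℝ) 1) (ht : t ∈ Icc (0:ℝ) 1) : ‖f t - f s‖ ≤ (n + 1) * B * |t - s| := by
  have hB := h.nonneg
  obtain ⟨c, hc, h⟩ := h s hs
  have h1 := h t ht
  have h2 := tp_sub_le hc (x := ((t - s : ℝ) : ℂ)) (by simpa [-Complex.ofReal_sub] using abs_sub_le_one hs ht) hn
  rw [← Wc.val hn hs h] at h2
  have h3 : |t - s| ^ n ≤ |t - s| := pow_le_of_le_one (abs_nonneg _) (abs_sub_le_one hs ht) (by omega)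
  have h4 : ‖((t - s : ℝ) : ℂ)‖ = |t - s| := by simp [-Complex.ofReal_sub]
  rw [h4] at h2
  calc ‖f t - f s‖ = ‖(f t - tp n c ((t - s : ℝ) : ℂ)) + (tp n c ((t - s : ℝ) : ℂ) - f s)‖ := by
        congr 1; ring
    _ ≤ B * |t - s| ^ n + n * B * |t - s| := (norm_add_le _ _).trans (by gcongr)
    _ ≤ B * |t - s| + n * B * |t - s| := by gcongr
    _ = _ := by ring

/-- restriction to a subinterval -/
theorem Wc.restrict {n : ℕ} {κ : ℝ} {f : ℝ → ℂ} (h : Wc n κ f) {x r : ℝ} (hx : 0 ≤ x) (hr : 0 ≤ r)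
    (hxr : x + r ≤ 1) : Wc n (κ * r ^ n) (fun s => f (x + r * s)) := by
  intro s₀ hs₀
  have hm : ∀ s ∈ Icc (0:ℝ) 1, x + r * s ∈ Icc (0:ℝ) 1 := fun s hs =>
    ⟨by nlinarith [hs.1, hs.2], by nlinarith [hs.1, hs.2]⟩
  obtain ⟨c, hc⟩ := h _ (hm s₀ hs₀)
  refine ⟨fun k => c k * r ^ k, fun s hs => ?_⟩
  have := hc _ (hm s hs)
  have e : x + r * s - (x + r * s₀) = r * (s - s₀) := by ring
  rw [e, abs_mul, mul_pow, abs_of_nonneg hr, ← mul_assoc] at this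
  convert this using 3
  unfold tp
  refine Finset.sum_congr rfl fun k _ => ?_
  rw [Complex.ofReal_mul, mul_pow]; ring

theorem Cl.restrict {n : ℕ} {B : ℝ} {f : ℝ → ℂ} (h : Cl n B f) {x r : ℝ} (hx : 0 ≤ x) (hr : 0 ≤ r)
    (hxr : x + r ≤ 1) : Cl n B (fun s => f (x + r * s)) := by
  intro s₀ hs₀
  have hB := h.nonneg
  have hm : ∀ s ∈ Icc (0:ℝ) 1, x + r * s ∈ Icc (0:ℝ) 1 := fun s hs =>
    ⟨by nlinarith [hs.1, hs.2], by nlinarith [hs.1, hs.2]⟩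
  obtain ⟨c, hc', hc⟩ := h _ (hm s₀ hs₀)
  have hr1 : r ≤ 1 := by linarith
  refine ⟨fun k => c k * r ^ k, fun k => ?_, fun s hs => ?_⟩
  · have h1 : ‖(r:ℂ) ^ k‖ ≤ 1 := by
      rw [norm_pow]; simp only [Complex.norm_real, norm_eq_abs, abs_of_nonneg hr]
      exact pow_le_one₀ hr hr1
    rw [norm_mul]
    exact (mul_le_of_le_one_right (norm_nonneg _) h1).trans (hc' k)
  have := hc _ (hm s hs)
  have e : x + r * s - (x + r * s₀) = r * (s - s₀) := by ring
  rw [e, abs_mul, mul_pow, abs_of_nonneg hr] at this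
  have h2 : B * (r ^ n * |s - s₀| ^ n) ≤ B * |s - s₀| ^ n := by
    gcongr
    exact mul_le_of_le_one_left (by positivity) (pow_le_one₀ hr hr1)
  refine le_trans (le_of_eq ?_) (this.trans h2)
  congr 2
  unfold tp
  refine Finset.sum_congr rfl fun k _ => ?_
  rw [Complex.ofReal_mul, mul_pow]; ring

theorem Wc.const_mul {n : ℕ} {κ : ℝ} {f : ℝ → ℂ} (h : Wc n κ f) (m : ℂ) :
    Wc n (‖m‖ * κ) (fun s => m * f s) := by
  intro s₀ hs₀
  obtain ⟨c, hc⟩ := h s₀ hs₀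
  refine ⟨fun k => m * c k, fun s hs => ?_⟩
  have : tp n (fun k => m * c k) ((s - s₀ : ℝ):ℂ) = m * tp n c ((s - s₀ : ℝ):ℂ) := by
    unfold tp; rw [Finset.mul_sum]; exact Finset.sum_congr rfl fun k _ => by ring
  rw [this, ← mul_sub, norm_mul, mul_assoc]
  gcongr
  exact hc s hs

/-- Taylor expansion of bounded holomorphic functions -/
theorem taylor_holo (n : ℕ) : ∀ (σ B : ℝ), 0 < σ → σ ≤ 1 → ∀ G : ℂ → ℂ,
    DifferentiableOn ℂ G (Metric.ball 0 σ) → (∀ z ∈ Metric.ball (0:ℂ) σ, ‖G z‖ ≤ B) →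
    ∃ c : ℕ → ℂ, (∀ k, ‖c k‖ ≤ B * (2 / σ) ^ n) ∧
      ∀ z ∈ Metric.ball (0:ℂ) σ, ‖G z - tp n c z‖ ≤ B * (2 / σ) ^ n * ‖z‖ ^ n := by
  induction n with
  | zero =>
    intro σ B hσ hσ1 G hG hB
    have : 0 ≤ B := (norm_nonneg _).trans (hB 0 (by simpa using hσ))
    exact ⟨fun _ => 0, by simpa using this, fun z hz => by simpa [tp] using hB z hz⟩
  | succ n ih =>
    intro σ B hσ hσ1 G hG hB
    have h0 : (0:ℂ) ∈ Metric.ball (0:ℂ) σ := by simpa using hσ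
    have hB0 : 0 ≤ B := (norm_nonneg _).trans (hB 0 h0)
    have hd : DifferentiableOn ℂ (dslope G 0) (Metric.ball 0 σ) :=
      (Complex.differentiableOn_dslope (Metric.ball_mem_nhds _ hσ)).2 hG
    have hb : ∀ z ∈ Metric.ball (0:ℂ) σ, ‖dslope G 0 z‖ ≤ 2 * B / σ := fun z hz => by
      refine Complex.norm_dslope_le_div_of_mapsTo_ball hG (fun w hw => ?_) hz
      rw [Metric.mem_closedBall, dist_eq_norm]
      refine (norm_sub_le _ _).trans ?_
      linarith [hB w hw, hB 0 h0]
    obtain ⟨c, hc, h⟩ := ih σ (2 * B / σ) hσ hσ1 _ hd hb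
    have e : 2 * B / σ * (2 / σ) ^ n = B * (2 / σ) ^ (n + 1) := by rw [pow_succ]; ring
    rw [e] at hc h
    refine ⟨fun k => Nat.casesOn k (G 0) c, fun k => ?_, fun z hz => ?_⟩
    · cases k with
      | zero =>
        refine (hB 0 h0).trans (le_mul_of_one_le_right hB0 (one_le_pow₀ ?_))
        rw [le_div_iff₀ hσ]; linarith
      | succ k => exact hc k
    · have e2 : G z = G 0 + z * dslope G 0 z := by
        have := sub_smul_dslope G 0 z
        simp only [sub_zero, smul_eq_mul] at this
        rw [this]; ring
      have e3 : tp (n+1) (fun k => Nat.casesOn k (G 0) c) z = G 0 + z * tp n c z := by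
        unfold tp
        rw [Finset.sum_range_succ', Finset.mul_sum, add_comm]
        simp only [pow_zero, mul_one]
        congr 1
        exact Finset.sum_congr rfl fun k _ => by ring
      rw [e3]
      conv_lhs => rw [e2]
      rw [add_sub_add_left_eq_sub, ← mul_sub, norm_mul, pow_succ ‖z‖]
      nlinarith [h z hz, norm_nonneg z]

/-- composition with a holomorphic function -/
theorem Cl.comp {d n : ℕ} (hn : 1 ≤ n) {B r B' : ℝ} (hB : 0 ≤ B) (hr : 0 < r) (hB' : 0 ≤ B') :
    ∃ B'' : ℝ, 0 ≤ B'' ∧ ∀ (a : ℝ → Fin d → ℂ) (F : (Fin d → ℂ) → ℂ) (U : Set (Fin d → ℂ)),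
      (∀ i, Cl n B (fun t => a t i)) → (∀ t ∈ Icc (0:ℝ) 1, Metric.ball (a t) r ⊆ U) →
      IsOpen U →
      DifferentiableOn ℂ F U → (∀ x ∈ U, ‖F x‖ ≤ B') →
      (∀ x ∈ U, ∀ y ∈ U, ‖F x - F y‖ ≤ B' * ‖x - y‖) →
      Cl n B'' (fun t => F (a t)) := by
  set σ : ℝ := min 1 (r / (n * B + 1)) with hσ
  have hσ0 : 0 < σ := lt_min one_pos (by positivity)
  have hσ1 : σ ≤ 1 := min_le_left _ _
  set D := B' * (2 / σ) ^ n with hD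
  have hD0 : 0 ≤ D := by positivity
  refine ⟨D + (B' + n * D) / σ ^ n + B' * B + D, by positivity, ?_⟩
  intro a F U ha hU hUo hF hFB hFL t₀ ht₀
  have hBD : 0 ≤ (B' + n * D) / σ ^ n := by positivity
  have hBB : 0 ≤ B' * B := by positivity
  choose c hc h using fun i => ha i t₀ ht₀
  have hat : ∀ i, a t₀ i = c i 0 := fun i => Wc.val hn ht₀ (h i)
  have hT : ∀ z ∈ Metric.ball (0:ℂ) σ, (fun i => tp n (c i) z) ∈ U := fun z hz => by
    have hz' : ‖z‖ < σ := by simpa using hz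
    refine hU t₀ ht₀ ?_
    rw [Metric.mem_ball, dist_pi_lt_iff hr]
    intro i
    rw [dist_eq_norm, hat]
    refine (tp_sub_le (hc i) (hz'.le.trans hσ1) hn).trans_lt ?_
    have : ‖z‖ < r / (n * B + 1) := hz'.trans_le (min_le_right _ _)
    rw [lt_div_iff₀ (by positivity)] at this
    nlinarith [norm_nonneg z]
  have hG : DifferentiableOn ℂ (fun z => F (fun i => tp n (c i) z)) (Metric.ball 0 σ) := by
    refine hF.comp (t := U) ?_ hT
    refine Differentiable.differentiableOn ?_
    rw [differentiable_pi]
    intro i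
    unfold tp
    fun_prop
  obtain ⟨g, hg, hgt⟩ := taylor_holo n σ B' hσ0 hσ1 _ hG (fun z hz => hFB _ (hT z hz))
  refine ⟨g, fun k => (hg k).trans (by linarith), fun t ht => ?_⟩
  have haU : a t ∈ U := hU t ht (Metric.mem_ball_self hr)
  have hnn : ‖((t - t₀ : ℝ) : ℂ)‖ = |t - t₀| := by simp [-Complex.ofReal_sub]
  rcases lt_or_ge |t - t₀| σ with hlt | hge
  · have hz : ((t - t₀ : ℝ) : ℂ) ∈ Metric.ball (0:ℂ) σ := by simpa [-Complex.ofReal_sub] using hlt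
    have h1 := hgt _ hz
    have h2 := hFL _ haU _ (hT _ hz)
    have h3 : ‖a t - fun i => tp n (c i) ((t - t₀ : ℝ) : ℂ)‖ ≤ B * |t - t₀| ^ n := by
      rw [pi_norm_le_iff_of_nonneg (by positivity)]
      intro i
      exact h i t ht
    rw [hnn] at h1
    have h4 : ‖F (a t) - tp n g ((t - t₀ : ℝ) : ℂ)‖ ≤ B' * (B * |t - t₀| ^ n) + D * |t - t₀| ^ n := by
      refine (norm_sub_le_norm_sub_add_norm_sub _ (F fun i => tp n (c i) ((t - t₀ : ℝ) : ℂ)) _).trans ?_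
      exact add_le_add (h2.trans (by gcongr)) h1
    refine h4.trans ?_
    have : 0 ≤ |t - t₀| ^ n := by positivity
    nlinarith
  · have h1 : ‖tp n g ((t - t₀ : ℝ) : ℂ)‖ ≤ n * D := by
      unfold tp
      refine (norm_sum_le _ _).trans ?_
      calc _ ≤ ∑ k ∈ Finset.range n, D := by
            refine Finset.sum_le_sum fun k _ => ?_
            rw [norm_mul, norm_pow, hnn]
            exact (mul_le_of_le_one_right (norm_nonneg _)
              (pow_le_one₀ (abs_nonneg _) (abs_sub_le_one ht₀ ht))).trans (hg k)
        _ = _ := by simp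
    have h2 : ‖F (a t) - tp n g ((t - t₀ : ℝ) : ℂ)‖ ≤ B' + n * D :=
      (norm_sub_le _ _).trans (add_le_add (hFB _ haU) h1)
    have h3 : σ ^ n ≤ |t - t₀| ^ n := by gcongr
    have h4 : B' + n * D ≤ (B' + n * D) / σ ^ n * |t - t₀| ^ n := by
      rw [div_mul_eq_mul_div, le_div_iff₀ (by positivity)]
      gcongr
    have : 0 ≤ |t - t₀| ^ n := by positivity
    nlinarith

/-- coefficients of a polynomial are controlled by its values at `m / (2 * n)`. -/
theorem coef_bound (n : ℕ) (hn : 1 ≤ n) : ∃ C : ℝ, 1 ≤ C ∧ ∀ (c : ℕ → ℂ) (D : ℝ), 0 ≤ D →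
    (∀ m < n, ‖tp n c (((m:ℝ) / (2 * n) : ℝ) : ℂ)‖ ≤ D) → ∀ k < n, ‖c k‖ ≤ C * D := by
  set x : Fin n → ℂ := fun m => ((((m:ℕ):ℝ) / (2 * n) : ℝ) : ℂ) with hx
  have hn' : (0:ℝ) < n := by exact_mod_cast hn
  have hinj : Function.Injective x := by
    intro i j hij
    have h1 : (((i:ℕ):ℝ) / (2 * n)) = (((j:ℕ):ℝ) / (2 * n)) := Complex.ofReal_injective hij
    field_simp at h1
    exact Fin.ext (by exact_mod_cast h1)
  set V := Matrix.vandermonde x with hV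
  have hdet : IsUnit V.det := (Matrix.det_vandermonde_ne_zero_iff.2 hinj).isUnit
  refine ⟨1 + ∑ i, ∑ j, ‖V⁻¹ i j‖, by
    have : 0 ≤ ∑ i, ∑ j, ‖V⁻¹ i j‖ := by positivity
    linarith, fun c D hD h k hk => ?_⟩
  set w : Fin n → ℂ := fun i => c i with hw
  have h1 : ∀ m : Fin n, V.mulVec w m = tp n c (((m:ℝ) / (2 * n) : ℝ) : ℂ) := by
    intro m
    rw [tp, ← Fin.sum_univ_eq_sum_range (fun k => c k * (((m:ℝ) / (2 * n) : ℝ) : ℂ) ^ k)]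
    simp only [Matrix.mulVec, dotProduct, hV, Matrix.vandermonde_apply, hw, hx]
    exact Finset.sum_congr rfl fun i _ => mul_comm _ _
  have h2 : w = V⁻¹.mulVec (V.mulVec w) := by
    rw [Matrix.mulVec_mulVec, Matrix.nonsing_inv_mul _ hdet, Matrix.one_mulVec]
  have h3 : c k = ∑ j, V⁻¹ ⟨k, hk⟩ j * (V.mulVec w j) := congrFun h2 ⟨k, hk⟩
  rw [h3]
  calc _ ≤ ∑ j, ‖V⁻¹ ⟨k, hk⟩ j‖ * D := by
        refine (norm_sum_le _ _).trans (Finset.sum_le_sum fun j _ => ?_)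
        rw [norm_mul, h1]
        gcongr
        exact h j j.2
    _ = (∑ j, ‖V⁻¹ ⟨k, hk⟩ j‖) * D := by rw [Finset.sum_mul]
    _ ≤ _ := by
        gcongr
        have := Finset.single_le_sum (f := fun i => ∑ j, ‖V⁻¹ i j‖) (fun i _ => by positivity)
          (Finset.mem_univ (⟨k, hk⟩ : Fin n))
        linarith

theorem tp_congr {n : ℕ} {c c' : ℕ → ℂ} {x x' : ℂ} (h : ∀ k < n, c k * x ^ k = c' k * x' ^ k) :
    tp n c x = tp n c' x' :=
  Finset.sum_congr rfl fun k hk => h k (Finset.mem_range.1 hk)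

/-- a bounded function with the approximation property has bounded coefficients -/
theorem markov' (n : ℕ) (hn : 1 ≤ n) : ∃ C : ℝ, 1 ≤ C ∧ ∀ (B κ : ℝ) (f : ℝ → ℂ), κ ≤ B → Wc n κ f →
    (∀ t ∈ Icc (0:ℝ) 1, ‖f t‖ ≤ B) → ∀ t₀ ∈ Icc (0:ℝ) 1, ∃ c : ℕ → ℂ, (∀ k, ‖c k‖ ≤ C * B) ∧
      ∀ t ∈ Icc (0:ℝ) 1, ‖f t - tp n c ((t - t₀ : ℝ) : ℂ)‖ ≤ κ * |t - t₀| ^ n := by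
  obtain ⟨C, hC, h⟩ := coef_bound n hn
  have hn' : (0:ℝ) < n := by exact_mod_cast hn
  refine ⟨C * 2, by linarith, fun B κ f hκ hw hB t₀ ht₀ => ?_⟩
  have hB0 : 0 ≤ B := (norm_nonneg _).trans (hB 0 (by simp))
  obtain ⟨c, hc⟩ := hw t₀ ht₀
  have hval : ∀ t ∈ Icc (0:ℝ) 1, ‖tp n c ((t - t₀ : ℝ) : ℂ)‖ ≤ 2 * B := fun t ht => by
    have h1 := hc t ht
    have h2 := hB t ht
    have h3 : B * |t - t₀| ^ n ≤ B :=
      mul_le_of_le_one_right hB0 (pow_le_one₀ (abs_nonneg _) (abs_sub_le_one ht₀ ht))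
    have h4 : κ * |t - t₀| ^ n ≤ B * |t - t₀| ^ n := by gcongr
    calc _ = ‖f t - (f t - tp n c ((t - t₀ : ℝ) : ℂ))‖ := by congr 1; ring
      _ ≤ _ := (norm_sub_le _ _).trans (by linarith)
  have hck : ∀ k < n, ‖c k‖ ≤ C * (2 * B) := by
    have hm : ∀ m < n, (m:ℝ) / (2 * n) ≤ 1 / 2 := fun m hm => by
      rw [div_le_div_iff₀ (by positivity) (by norm_num)]
      have : (m:ℝ) ≤ n := by exact_mod_cast hm.le
      linarith
    rcases le_total t₀ (1/2) with h0 | h0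
    · refine h c _ (by positivity) fun m hmn => ?_
      have h1 : 0 ≤ (m:ℝ) / (2 * n) := by positivity
      have := hval (t₀ + m / (2 * n)) ⟨by linarith [ht₀.1], by linarith [hm m hmn]⟩
      rwa [add_sub_cancel_left] at this
    · have := h (fun k => c k * (-1) ^ k) (2 * B) (by positivity) fun m hmn => ?_
      · intro k hk
        simpa using this k hk
      have h1 : 0 ≤ (m:ℝ) / (2 * n) := by positivity
      have := hval (t₀ - m / (2 * n)) ⟨by linarith [hm m hmn], by linarith [ht₀.2]⟩
      rw [sub_sub_cancel_left] at this
      convert this using 2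
      refine tp_congr fun k _ => ?_
      rw [Complex.ofReal_neg, neg_pow]; ring
  refine ⟨fun k => if k < n then c k else 0, fun k => ?_, fun t ht => ?_⟩
  · dsimp only
    split_ifs with hk
    · rw [mul_assoc]; exact hck k hk
    · simp; positivity
  · have : tp n (fun k => if k < n then c k else 0) ((t - t₀ : ℝ) : ℂ) = tp n c ((t - t₀ : ℝ) : ℂ) :=
      tp_congr fun k hk => by simp [hk]
    rw [this]
    exact hc t ht

theorem markov (n : ℕ) (hn : 1 ≤ n) : ∃ C : ℝ, 1 ≤ C ∧ ∀ (B : ℝ) (f : ℝ → ℂ), Wc n B f →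
    (∀ t ∈ Icc (0:ℝ) 1, ‖f t‖ ≤ B) → Cl n (C * B) f := by
  obtain ⟨C, hC, h⟩ := markov' n hn
  refine ⟨C, hC, fun B f hw hB t₀ ht₀ => ?_⟩
  have hB0 : 0 ≤ B := (norm_nonneg _).trans (hB 0 (by simp))
  obtain ⟨c, h1, h2⟩ := h B B f le_rfl hw hB t₀ ht₀
  refine ⟨c, h1, fun t ht => (h2 t ht).trans ?_⟩
  gcongr
  nlinarith

theorem tp_lip {n : ℕ} {c : ℕ → ℂ} {B : ℝ} (hc : ∀ k, ‖c k‖ ≤ B) {x y : ℂ} (hx : ‖x‖ ≤ 3)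
    (hy : ‖y‖ ≤ 3) : ‖tp n c x - tp n c y‖ ≤ n * (B * (n * 3 ^ n)) * ‖x - y‖ := by
  have hB : 0 ≤ B := (norm_nonneg _).trans (hc 0)
  unfold tp
  rw [← Finset.sum_sub_distrib]
  refine (norm_sum_le _ _).trans ?_
  calc _ ≤ ∑ k ∈ Finset.range n, B * (n * 3 ^ n) * ‖x - y‖ := by
        refine Finset.sum_le_sum fun k hk => ?_
        rw [← mul_sub, norm_mul, mul_assoc]
        refine mul_le_mul (hc k) ?_ (norm_nonneg _) hB
        rw [← (Commute.all x y).geom_sum₂_mul k, norm_mul]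
        gcongr
        refine (norm_sum_le _ _).trans ?_
        have hk' := (Finset.mem_range.1 hk).le
        calc _ ≤ ∑ i ∈ Finset.range k, (3:ℝ) ^ n := by
              refine Finset.sum_le_sum fun i hi => ?_
              have hi' := Finset.mem_range.1 hi
              rw [norm_mul, norm_pow, norm_pow]
              calc _ ≤ (3:ℝ) ^ i * 3 ^ (k - 1 - i) := by gcongr
                _ = 3 ^ (k - 1) := by rw [← pow_add]; congr 1; omega
                _ ≤ 3 ^ n := pow_le_pow_right₀ (by norm_num) (by omega)
          _ = k * 3 ^ n := by simp
          _ ≤ _ := by gcongr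
    _ = _ := by simp; ring

theorem poly_grid (n : ℕ) (B : ℝ) : ∃ L : ℝ, 1 ≤ L ∧ ∀ (c : ℕ → ℂ) (N : ℕ), 1 ≤ N →
    (∀ k, ‖c k‖ ≤ B) → ∃ S : Finset ℕ,
    (∀ k < N, (k ∉ S → ∀ t ∈ Icc ((k:ℝ)/N) ((k+1)/N), (1/(2*N:ℝ))^n * (1/N) ≤ ‖tp n c (t:ℂ)‖) ∧
      (k ∈ S → ∀ t ∈ Icc ((k:ℝ)/N) ((k+1)/N), ‖tp n c (t:ℂ)‖ ≤ L / N)) ∧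
    ((∃ t ∈ Icc (0:ℝ) 1, 1/(N:ℝ) ≤ ‖tp n c (t:ℂ)‖) → S.card ≤ 4 * n) := by
  classical
  refine ⟨1 + |n * (B * (n * 3 ^ n)) * 2|, by linarith [abs_nonneg (n * (B * (n * 3 ^ n)) * 2)], ?_⟩
  intro c N hN hc
  have hN' : (1:ℝ) ≤ N := by exact_mod_cast hN
  have hN0 : (0:ℝ) < N := by linarith
  have hmem : ∀ k < N, ∀ t ∈ Icc ((k:ℝ)/N) ((k+1)/N), t ∈ Icc (0:ℝ) 1 := fun k hk t ht => by
    have : (k:ℝ) + 1 ≤ N := by exact_mod_cast hk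
    exact ⟨le_trans (by positivity) ht.1, ht.2.trans (by rw [div_le_one hN0]; exact this)⟩
  by_cases hex : ∃ t ∈ Icc (0:ℝ) 1, 1/(N:ℝ) ≤ ‖tp n c (t:ℂ)‖
  swap
  · refine ⟨Finset.range N, fun k hk => ⟨fun h => absurd (Finset.mem_range.2 hk) h, fun _ t ht => ?_⟩,
      fun h => absurd h hex⟩
    push Not at hex
    refine (hex t (hmem k hk t ht)).le.trans ?_
    gcongr
    linarith [abs_nonneg (n * (B * (n * 3 ^ n)) * 2)]
  obtain ⟨t₁, ht₁, hbig⟩ := hex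
  set q : Polynomial ℂ := ∑ k ∈ Finset.range n, Polynomial.C (c k) * Polynomial.X ^ k with hq
  have hqe : ∀ x, q.eval x = tp n c x := fun x => by
    simp [hq, Polynomial.eval_finsetSum, tp]
  have hq0 : q ≠ 0 := by
    intro h0
    rw [← hqe, h0] at hbig
    simp at hbig
    linarith
  have hdeg : q.natDegree ≤ n := by
    refine Polynomial.natDegree_sum_le_of_forall_le _ _ fun k hk => ?_
    exact (Polynomial.natDegree_C_mul_X_pow_le _ _).trans (Finset.mem_range.1 hk).le
  have hfac : ∀ x, ‖q.eval x‖ = ‖q.leadingCoeff‖ * (q.roots.map fun z => ‖x - z‖).prod := fun x => by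
    conv_lhs => rw [(IsAlgClosed.splits q).eq_prod_roots]
    rw [Polynomial.eval_mul, Polynomial.eval_C, norm_mul, Polynomial.eval_multiset_prod,
      Multiset.map_map]
    congr 1
    have hm : ∀ s : Multiset ℂ, ‖s.prod‖ = (s.map fun z => ‖z‖).prod := fun s =>
      (Multiset.prod_hom s (normHom (α := ℂ))).symm
    rw [hm, Multiset.map_map]
    congr 1
    refine Multiset.map_congr rfl fun z _ => ?_
    simp
  set S : Finset ℕ := (Finset.range N).filter fun k => ∃ z ∈ q.roots, ∃ t ∈ Icc ((k:ℝ)/N) ((k+1)/N),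
    ‖(t:ℂ) - z‖ ≤ 1 / N with hS
  refine ⟨S, fun k hk => ⟨fun hkS t ht => ?_, fun hkS t ht => ?_⟩, fun _ => ?_⟩
  · have hno : ∀ z ∈ q.roots, 1 / (N:ℝ) ≤ ‖(t:ℂ) - z‖ := fun z hz => by
      by_contra hlt
      push Not at hlt
      exact hkS (Finset.mem_filter.2 ⟨Finset.mem_range.2 hk, z, hz, t, ht, hlt.le⟩)
    have h1 : (1/(2*N:ℝ))^n * ‖q.eval (t₁:ℂ)‖ ≤ ‖q.eval (t:ℂ)‖ := by
      rw [hfac, hfac]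
      have h2 : (1/(2*N:ℝ))^n ≤ (1/(2*N:ℝ))^(q.roots.card) := by
        refine pow_le_pow_of_le_one (by positivity) ?_ ((Polynomial.card_roots' q).trans hdeg)
        rw [div_le_one (by positivity)]; linarith
      have h3 : (1/(2*N:ℝ))^(q.roots.card) * (q.roots.map fun z => ‖(t₁:ℂ) - z‖).prod ≤
          (q.roots.map fun z => ‖(t:ℂ) - z‖).prod := by
        have e : (1/(2*N:ℝ))^(q.roots.card) * (q.roots.map fun z => ‖(t₁:ℂ) - z‖).prod =
            (q.roots.map fun z => (1/(2*N:ℝ)) * ‖(t₁:ℂ) - z‖).prod := by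
          rw [Multiset.prod_map_mul]; simp
        rw [e]
        refine Multiset.prod_map_le_prod_map₀ _ _ (fun z _ => by positivity) fun z hz => ?_
        have h4 := hno z hz
        have h5 : ‖(t₁:ℂ) - z‖ ≤ 1 + ‖(t:ℂ) - z‖ := by
          calc _ = ‖((t₁ - t : ℝ) : ℂ) + ((t:ℂ) - z)‖ := by congr 1; push_cast; ring
            _ ≤ _ := (norm_add_le _ _).trans (by
              gcongr
              simpa [-Complex.ofReal_sub] using abs_sub_le_one (hmem k hk t ht) ht₁)
        rw [div_mul_eq_mul_div, one_mul, div_le_iff₀ (by positivity)]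
        rw [div_le_iff₀ hN0] at h4
        nlinarith [norm_nonneg ((t:ℂ) - z)]
      have h6 : 0 ≤ (q.roots.map fun z => ‖(t₁:ℂ) - z‖).prod :=
        Multiset.prod_nonneg fun x hx => by
          obtain ⟨z, -, rfl⟩ := Multiset.mem_map.1 hx; positivity
      calc _ = ‖q.leadingCoeff‖ * ((1/(2*N:ℝ))^n * (q.roots.map fun z => ‖(t₁:ℂ) - z‖).prod) := by ring
        _ ≤ ‖q.leadingCoeff‖ * ((1/(2*N:ℝ))^(q.roots.card) * (q.roots.map fun z => ‖(t₁:ℂ) - z‖).prod) := by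
          gcongr
        _ ≤ _ := by gcongr
    rw [← hqe]
    refine le_trans ?_ h1
    rw [hqe]
    gcongr
  · obtain ⟨-, z, hz, t', ht', hd⟩ := Finset.mem_filter.1 hkS
    have hz0 : tp n c z = 0 := by rw [← hqe]; exact (Polynomial.mem_roots'.1 hz).2
    have htt : |t - t'| ≤ 1 / N := by
      have : ((k:ℝ)+1)/N = k/N + 1/N := by ring
      rw [abs_le]; constructor <;> linarith [ht.1, ht.2, ht'.1, ht'.2]
    have hd2 : ‖(t:ℂ) - z‖ ≤ 2 / N := by
      calc _ = ‖((t - t' : ℝ) : ℂ) + ((t':ℂ) - z)‖ := by congr 1; push_cast; ring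
        _ ≤ 1 / N + 1 / N := (norm_add_le _ _).trans (by
              gcongr
              simpa [-Complex.ofReal_sub] using htt)
        _ = _ := by ring
    have ht01 := hmem k hk t ht
    have htn : ‖(t:ℂ)‖ ≤ 1 := by
      rw [Complex.norm_real, norm_eq_abs, abs_of_nonneg ht01.1]; exact ht01.2
    have hzn : ‖z‖ ≤ 3 := by
      have : ‖z‖ ≤ ‖(t:ℂ)‖ + ‖(t:ℂ) - z‖ := by
        calc ‖z‖ = ‖(t:ℂ) - ((t:ℂ) - z)‖ := by congr 1; ring
          _ ≤ _ := norm_sub_le _ _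
      have h2 : 2 / (N:ℝ) ≤ 2 := div_le_self (by norm_num) hN'
      linarith
    have := tp_lip (n := n) hc (htn.trans (by norm_num)) hzn
    rw [hz0, sub_zero] at this
    have hB : 0 ≤ B := (norm_nonneg _).trans (hc 0)
    refine this.trans ?_
    calc _ ≤ n * (B * (n * 3 ^ n)) * (2 / N) := by gcongr
      _ = (n * (B * (n * 3 ^ n)) * 2) / N := by ring
      _ ≤ _ := by gcongr; linarith [le_abs_self (n * (B * (n * 3 ^ n)) * 2)]
  · have hsub : S.map Nat.castEmbedding ⊆
        q.roots.toFinset.biUnion fun z => Finset.Icc (⌊N * z.re⌋ - 2) (⌊N * z.re⌋ + 1) := by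
      intro j hj
      obtain ⟨k, hk, rfl⟩ := Finset.mem_map.1 hj
      obtain ⟨hk, z, hz, t, ht, hd⟩ := Finset.mem_filter.1 hk
      refine Finset.mem_biUnion.2 ⟨z, Multiset.mem_toFinset.2 hz, ?_⟩
      have h1 : |t - z.re| ≤ 1 / N := by
        refine le_trans ?_ hd
        simpa using Complex.abs_re_le_norm ((t:ℂ) - z)
      rw [abs_le] at h1
      have a1 := ht.1
      have a2 := ht.2
      have a3 := h1.1
      have a4 := h1.2
      have e1 : t - 1 / N ≤ z.re := by linarith
      have e2 : z.re ≤ t + 1 / N := by linarith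
      have b1 : (k:ℝ) - 1 ≤ N * z.re := by
        have : (k:ℝ)/N - 1/N ≤ z.re := by linarith
        rw [← sub_div, div_le_iff₀ hN0] at this
        linarith
      have b2 : N * z.re ≤ (k:ℝ) + 2 := by
        have : z.re ≤ ((k:ℝ)+1)/N + 1/N := by linarith
        rw [← add_div, le_div_iff₀ hN0] at this
        linarith
      rw [Finset.mem_Icc]
      constructor
      · have : (⌊N * z.re⌋ : ℝ) ≤ k + 2 := (Int.floor_le _).trans b2
        have : ⌊N * z.re⌋ ≤ (k:ℤ) + 2 := by exact_mod_cast this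
        simp only [Nat.castEmbedding_apply]; omega
      · have : (k:ℤ) - 1 ≤ ⌊N * z.re⌋ := Int.le_floor.2 (by push_cast; exact b1)
        simp only [Nat.castEmbedding_apply]; omega
    have := Finset.card_le_card hsub
    rw [Finset.card_map] at this
    refine this.trans (Finset.card_biUnion_le.trans ?_)
    have h4 : ∀ z : ℂ, (Finset.Icc (⌊N * z.re⌋ - 2) (⌊N * z.re⌋ + 1)).card = 4 := fun z => by
      rw [Int.card_Icc]; omega
    simp only [h4, Finset.sum_const, smul_eq_mul]
    have := (Multiset.toFinset_card_le q.roots).trans ((Polynomial.card_roots' q).trans hdeg)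
    omega

/-- monic polynomial function with lower coefficients `a` -/
def evalP {d : ℕ} (a : Fin d → ℂ) (z : ℂ) : ℂ := z ^ d + ∑ i, a i * z ^ (i:ℕ)

/-- monic polynomial with lower coefficients `a` -/
def polyP {d : ℕ} (a : Fin d → ℂ) : Polynomial ℂ :=
  Polynomial.X ^ d + ∑ i, Polynomial.C (a i) * Polynomial.X ^ (i:ℕ)

theorem polyP_eval {d : ℕ} (a : Fin d → ℂ) (z : ℂ) : (polyP a).eval z = evalP a z := by
  simp [polyP, evalP, Polynomial.eval_finsetSum]

theorem lowP_degree {d : ℕ} (a : Fin d → ℂ) :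
    (∑ i, Polynomial.C (a i) * Polynomial.X ^ (i:ℕ)).degree < (d : WithBot ℕ) := by
  refine (Polynomial.degree_sum_le _ _).trans_lt ?_
  rw [Finset.sup_lt_iff (by exact WithBot.bot_lt_coe _)]
  intro i _
  refine (Polynomial.degree_C_mul_X_pow_le _ _).trans_lt ?_
  exact_mod_cast i.2

theorem polyP_monic {d : ℕ} (a : Fin d → ℂ) : (polyP a).Monic :=
  Polynomial.monic_X_pow_add (lowP_degree a)

theorem polyP_natDegree {d : ℕ} (a : Fin d → ℂ) : (polyP a).natDegree = d := by
  refine Polynomial.natDegree_eq_of_degree_eq_some ?_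
  rw [polyP, Polynomial.degree_add_eq_left_of_degree_lt] <;> rw [Polynomial.degree_X_pow]
  exact lowP_degree a

theorem evalP_norm {d : ℕ} (a : Fin d → ℂ) (z : ℂ) :
    ‖evalP a z‖ = ((polyP a).roots.map fun w => ‖z - w‖).prod := by
  rw [← polyP_eval]
  conv_lhs => rw [(IsAlgClosed.splits (polyP a)).eq_prod_roots_of_monic (polyP_monic a)]
  rw [Polynomial.eval_multiset_prod, Multiset.map_map]
  have hm : ∀ s : Multiset ℂ, ‖s.prod‖ = (s.map fun z => ‖z‖).prod := fun s =>
    (Multiset.prod_hom s (normHom (α := ℂ))).symm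
  rw [hm, Multiset.map_map]
  congr 1
  refine Multiset.map_congr rfl fun z _ => ?_
  simp

theorem card_rootsP {d : ℕ} (a : Fin d → ℂ) : (polyP a).roots.card = d := by
  rw [← (IsAlgClosed.splits (polyP a)).natDegree_eq_card_roots, polyP_natDegree]

theorem near_root {d : ℕ} (hd : 1 ≤ d) (a : Fin d → ℂ) (z : ℂ) {ε : ℝ} (hε : 0 < ε)
    (h : ‖evalP a z‖ ≤ ε ^ d) : ∃ w ∈ (polyP a).roots, ‖z - w‖ ≤ ε := by
  by_contra hcon
  push Not at hcon
  rw [evalP_norm] at h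
  have h2 : ε ^ d < ((polyP a).roots.map fun w => ‖z - w‖).prod := by
    have hc := card_rootsP a
    have : ∀ s : Multiset ℂ, s ≠ 0 → (∀ w ∈ s, ε < ‖z - w‖) →
        ε ^ s.card < (s.map fun w => ‖z - w‖).prod := by
      intro s
      induction s using Multiset.induction_on with
      | empty => simp
      | cons w s ih =>
        intro _ hw
        rw [Multiset.map_cons, Multiset.prod_cons, Multiset.card_cons, pow_succ']
        have h1 := hw w (by simp)
        by_cases hs : s = 0
        · subst hs; simpa using h1
        · exact mul_lt_mul h1 (ih hs fun w hw' => hw w (by simp [hw'])).le (by positivity)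
            (by positivity)
    have := this (polyP a).roots (by
      intro h0; rw [h0] at hc; simp at hc; omega) hcon
    rwa [hc] at this
  exact absurd h (not_le.2 h2)

theorem root_bound {d : ℕ} {a : Fin d → ℂ} {M : ℝ} (hM : 0 ≤ M) (ha : ∀ i, ‖a i‖ ≤ M ^ (d - (i:ℕ)))
    {z : ℂ} (hz : evalP a z = 0) : ‖z‖ ≤ d * M := by
  by_contra hlt
  push Not at hlt
  rcases Nat.eq_zero_or_pos d with h0 | hd
  · subst h0; simp [evalP] at hz
  have hd1 : (1:ℝ) ≤ d := by exact_mod_cast hd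
  have hx : 0 < ‖z‖ := lt_of_le_of_lt (by positivity) hlt
  have hMx : M ≤ ‖z‖ := by nlinarith
  have h1 : ‖z‖ ^ d ≤ ∑ i : Fin d, ‖a i * z ^ (i:ℕ)‖ := by
    have : z ^ d = - ∑ i, a i * z ^ (i:ℕ) := eq_neg_of_add_eq_zero_left hz
    rw [← norm_pow, this, norm_neg]
    exact norm_sum_le _ _
  have h2 : ∑ i : Fin d, ‖a i * z ^ (i:ℕ)‖ ≤ ∑ i : Fin d, M * ‖z‖ ^ (d - 1) := by
    refine Finset.sum_le_sum fun i _ => ?_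
    have hi := i.2
    rw [norm_mul, norm_pow]
    calc _ ≤ M ^ (d - (i:ℕ)) * ‖z‖ ^ (i:ℕ) := by gcongr; exact ha i
      _ = M * (M ^ (d - (i:ℕ) - 1) * ‖z‖ ^ (i:ℕ)) := by
        rw [← mul_assoc, ← pow_succ']; congr 2; omega
      _ ≤ M * (‖z‖ ^ (d - (i:ℕ) - 1) * ‖z‖ ^ (i:ℕ)) := by gcongr
      _ = _ := by rw [← pow_add]; congr 2; omega
  simp only [Finset.sum_const, Finset.card_univ, Fintype.card_fin, nsmul_eq_mul] at h2
  have h3 : ‖z‖ ^ d = ‖z‖ * ‖z‖ ^ (d - 1) := by rw [← pow_succ']; congr 1; omega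
  have h4 : 0 < ‖z‖ ^ (d - 1) := by positivity
  nlinarith

theorem evalP_scale {d : ℕ} (a : Fin d → ℂ) (m z : ℂ) :
    evalP (fun i => m ^ (d - (i:ℕ)) * a i) (m * z) = m ^ d * evalP a z := by
  unfold evalP
  rw [mul_add, Finset.mul_sum, mul_pow]
  congr 1
  refine Finset.sum_congr rfl fun i _ => ?_
  have : m ^ d = m ^ (d - (i:ℕ)) * m ^ (i:ℕ) := by rw [← pow_add]; congr 1; have := i.2; omega
  rw [this, mul_pow]; ring

theorem evalP_sub_le {d : ℕ} (a b : Fin d → ℂ) {z : ℂ} {R e : ℝ} (hR : 1 ≤ R) (hz : ‖z‖ ≤ R)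
    (he : 0 ≤ e) (h : ∀ i, ‖a i - b i‖ ≤ e) : ‖evalP a z - evalP b z‖ ≤ d * (e * R ^ d) := by
  unfold evalP
  rw [add_sub_add_left_eq_sub, ← Finset.sum_sub_distrib]
  refine (norm_sum_le _ _).trans ?_
  calc _ ≤ ∑ i : Fin d, e * R ^ d := by
        refine Finset.sum_le_sum fun i _ => ?_
        rw [← sub_mul, norm_mul, norm_pow]
        refine mul_le_mul (h i) ?_ (by positivity) he
        calc _ ≤ R ^ (i:ℕ) := by gcongr
          _ ≤ R ^ d := pow_le_pow_right₀ hR i.2.le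
    _ = _ := by simp

/-- A continuous function whose values stay close to a finite set does not move much. -/
theorem move_le {u v r : ℝ} (huv : u ≤ v) (hr : 0 ≤ r) {l : ℝ → ℂ} (hl : ContinuousOn l (Icc u v))
    (Z : Multiset ℂ) (h : ∀ t ∈ Icc u v, ∃ w ∈ Z, ‖l t - w‖ ≤ r) :
    ‖l v - l u‖ ≤ Z.card * (2 * r) := by
  classical
  set g : ℝ → ℝ := fun t => ‖l t - l u‖ with hg
  have hgc : ContinuousOn g (Icc u v) := (hl.sub continuousOn_const).norm
  have h1 : Icc (0:ℝ) ‖l v - l u‖ ⊆ ⋃ w ∈ Z.toFinset, Icc (‖w - l u‖ - r) (‖w - l u‖ + r) := by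
    have := intermediate_value_Icc huv hgc
    simp only [hg, sub_self, norm_zero] at this
    refine this.trans ?_
    rintro _ ⟨t, ht, rfl⟩
    obtain ⟨w, hw, hwr⟩ := h t ht
    refine mem_iUnion₂.2 ⟨w, Multiset.mem_toFinset.2 hw, ?_⟩
    have h2 : |‖l t - l u‖ - ‖w - l u‖| ≤ r := by
      refine (abs_norm_sub_norm_le _ _).trans ?_
      simpa using hwr
    rw [abs_le] at h2
    constructor <;> simp only <;> linarith [h2.1, h2.2]
  have h2 := (measure_mono (μ := volume) h1).trans (measure_biUnion_finset_le _ _)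
  simp only [Real.volume_Icc, sub_zero] at h2
  have h3 : ∀ w : ℂ, ‖w - l u‖ + r - (‖w - l u‖ - r) = 2 * r := fun w => by ring
  simp only [h3, Finset.sum_const, nsmul_eq_mul] at h2
  rw [← ENNReal.ofReal_natCast, ← ENNReal.ofReal_mul (by positivity),
    ENNReal.ofReal_le_ofReal_iff (by positivity)] at h2
  refine h2.trans ?_
  gcongr
  exact Multiset.toFinset_card_le Z

/-- Hölder estimate -/
theorem holder_base {n d : ℕ} (hn : 1 ≤ n) (hd : 1 ≤ d) {p : ℝ} (hp : 1 ≤ p)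
    (hpd : 0 ≤ 1 - p + p / d) (B : ℝ) (hB : 0 ≤ B) : ∃ C : ℝ, 0 ≤ C ∧ ∀ (a : ℝ → Fin d → ℂ) (l : ℝ → ℂ) (u v : ℝ),
      (∀ i, Cl n B (fun t => a t i)) → 0 ≤ u → u ≤ v → v ≤ 1 → ContinuousOn l (Icc u v) →
      (∀ t ∈ Icc u v, evalP (a t) (l t) = 0) → ‖l v - l u‖ ^ p * (v - u) ^ (1 - p) ≤ C := by
  set R : ℝ := d * (B + 1) with hR
  have hd1 : (1:ℝ) ≤ d := by exact_mod_cast hd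
  have hd0 : (0:ℝ) < d := by linarith
  have hR1 : 1 ≤ R := by nlinarith
  set K : ℝ := d * ((n + 1) * B * R ^ d) + 1 with hK
  have hK0 : 0 < K := by positivity
  refine ⟨(d * (2 * K ^ (1 / (d:ℝ)))) ^ p, by positivity, fun a l u v ha hu huv hv hl hroot => ?_⟩
  rcases eq_or_lt_of_le huv with rfl | huv'
  · simp only [sub_self, norm_zero]
    rw [Real.zero_rpow (by linarith), zero_mul]; positivity
  set h := v - u with hh
  have h0 : 0 < h := by linarith
  have hmem : ∀ t ∈ Icc u v, t ∈ Icc (0:ℝ) 1 := fun t ht => ⟨by linarith [ht.1], by linarith [ht.2]⟩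
  have hlR : ∀ t ∈ Icc u v, ‖l t‖ ≤ R := fun t ht => by
    refine root_bound (by positivity) (fun i => ?_) (hroot t ht)
    refine ((ha i).bound hn (hmem t ht)).trans ?_
    have : B + 1 ≤ (B + 1) ^ (d - (i:ℕ)) := le_self_pow₀ (by linarith) (by have := i.2; omega)
    linarith
  set r : ℝ := (K * h) ^ (1 / (d:ℝ)) with hr
  have hr0 : 0 < r := by positivity
  have hrd : r ^ d = K * h := by
    rw [hr, ← Real.rpow_natCast, ← Real.rpow_mul (by positivity), one_div, inv_mul_cancel₀ hd0.ne',
      Real.rpow_one]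
  have hu' : u ∈ Icc u v := ⟨le_rfl, huv⟩
  have hmv := move_le huv hr0.le hl (polyP (a u)).roots fun t ht => by
    refine near_root hd _ _ hr0 ?_
    have h1 := evalP_sub_le (a u) (a t) (e := (n + 1) * B * h) hR1 (hlR t ht) (by positivity) fun i => by
      rw [norm_sub_rev]
      refine ((ha i).lip hn (hmem u hu') (hmem t ht)).trans ?_
      gcongr
      rw [abs_of_nonneg (by linarith [ht.1])]
      linarith [ht.2]
    rw [hroot t ht, sub_zero] at h1
    rw [hrd]
    refine h1.trans ?_
    rw [hK]
    nlinarith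
  rw [card_rootsP] at hmv
  calc ‖l v - l u‖ ^ p * h ^ (1 - p) ≤ (d * (2 * r)) ^ p * h ^ (1 - p) := by gcongr
    _ = (d * (2 * K ^ (1 / (d:ℝ)))) ^ p * h ^ (1 - p + p / d) := by
      have e : d * (2 * r) = (d * (2 * K ^ (1 / (d:ℝ)))) * h ^ (1 / (d:ℝ)) := by
        rw [hr, Real.mul_rpow hK0.le h0.le]; ring
      rw [e, Real.mul_rpow (by positivity) (by positivity), ← Real.rpow_mul h0.le, mul_assoc,
        ← Real.rpow_add h0]
      congr 2; ring
    _ ≤ _ := mul_le_of_le_one_right (by positivity)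
        (Real.rpow_le_one h0.le (by linarith) hpd)

def lowP {d : ℕ} (a : Fin d → ℂ) : Polynomial ℂ :=
  ∑ i, Polynomial.C (a i) * Polynomial.X ^ (i:ℕ)

theorem polyP_eq {d : ℕ} (a : Fin d → ℂ) : polyP a = Polynomial.X ^ d + lowP a := rfl

theorem lowP_coeff {d : ℕ} (a : Fin d → ℂ) (j : ℕ) :
    (lowP a).coeff j = if h : j < d then a ⟨j, h⟩ else 0 := by
  simp only [lowP, Polynomial.finsetSum_coeff, Polynomial.coeff_C_mul_X_pow]
  split_ifs with h
  · rw [Finset.sum_eq_single ⟨j, h⟩]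
    · simp
    · intro i _ hi
      rw [if_neg]
      rintro rfl
      exact hi rfl
    · simp
  · refine Finset.sum_eq_zero fun i _ => ?_
    rw [if_neg]
    rintro rfl
    exact h i.2

theorem lowP_add_smul {d : ℕ} (a b : Fin d → ℂ) (s : ℂ) :
    lowP (a + s • b) = lowP a + Polynomial.C s * lowP b := by
  ext j
  simp only [lowP_coeff, Polynomial.coeff_add, Polynomial.coeff_C_mul]
  split_ifs <;> simp

theorem lowP_eq_zero {d : ℕ} {a : Fin d → ℂ} (h : lowP a = 0) : a = 0 := by
  funext i
  have := lowP_coeff a i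
  rw [h] at this
  simpa using this.symm

theorem monic_polyP {q : Polynomial ℂ} (hq : q.Monic) {k : ℕ} (hk : q.natDegree = k) :
    ∃ b : Fin k → ℂ, polyP b = q := by
  subst hk
  refine ⟨fun i => q.coeff i, ?_⟩
  conv_rhs => rw [hq.as_sum]
  rw [polyP, Fin.sum_univ_eq_sum_range (fun i => Polynomial.C (q.coeff i) * Polynomial.X ^ i)]

theorem polyP_inj {d : ℕ} {a b : Fin d → ℂ} (h : polyP a = polyP b) : a = b := by
  rw [polyP_eq, polyP_eq, add_right_inj] at h
  funext i
  have h1 := lowP_coeff a i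
  rw [h, lowP_coeff] at h1
  simpa using h1.symm

/-- multiplication of monic polynomials in terms of coefficients -/
def mulP (k m : ℕ) (x : (Fin k → ℂ) × (Fin m → ℂ)) : Fin (k + m) → ℂ :=
  fun i => (polyP x.1 * polyP x.2).coeff i

theorem mulP_spec {k m : ℕ} (x : (Fin k → ℂ) × (Fin m → ℂ)) :
    polyP (mulP k m x) = polyP x.1 * polyP x.2 := by
  obtain ⟨b, hb⟩ := monic_polyP ((polyP_monic x.1).mul (polyP_monic x.2)) (k := k + m) (by
    rw [(polyP_monic x.1).natDegree_mul (polyP_monic x.2), polyP_natDegree, polyP_natDegree])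
  have : mulP k m x = b := by
    funext i
    have hi := i.2
    rw [mulP, ← hb, polyP_eq, Polynomial.coeff_add, lowP_coeff, Polynomial.coeff_X_pow,
      if_neg (by omega)]
    simp
  rw [this, hb]

theorem mulP_contDiff (k m : ℕ) : ContDiff ℂ 1 (mulP k m) := by
  rw [contDiff_pi]
  intro i
  have h1 : ∀ j, ContDiff ℂ 1 fun x : (Fin k → ℂ) × (Fin m → ℂ) => (polyP x.1).coeff j := by
    intro j
    simp only [polyP_eq, Polynomial.coeff_add, lowP_coeff]
    refine contDiff_const.add ?_
    split_ifs with h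
    · fun_prop
    · exact contDiff_const
  have h2 : ∀ j, ContDiff ℂ 1 fun x : (Fin k → ℂ) × (Fin m → ℂ) => (polyP x.2).coeff j := by
    intro j
    simp only [polyP_eq, Polynomial.coeff_add, lowP_coeff]
    refine contDiff_const.add ?_
    split_ifs with h
    · fun_prop
    · exact contDiff_const
  simp only [mulP, Polynomial.coeff_mul]
  exact ContDiff.sum fun j _ => (h1 _).mul (h2 _)

theorem mulP_deriv {k m : ℕ} (x y : (Fin k → ℂ) × (Fin m → ℂ)) :
    fderiv ℂ (mulP k m) x y = fun i : Fin (k + m) =>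
      (lowP y.1 * polyP x.2 + polyP x.1 * lowP y.2).coeff i := by
  have hdf : HasFDerivAt (mulP k m) (fderiv ℂ (mulP k m) x) x :=
    ((mulP_contDiff k m).differentiable (by norm_num) x).hasFDerivAt
  have hline : HasDerivAt (fun s : ℂ => x + s • y) y 0 := by
    simpa using ((hasDerivAt_id (0:ℂ)).smul_const y).const_add x
  have h1 : HasDerivAt (fun s : ℂ => mulP k m (x + s • y)) (fderiv ℂ (mulP k m) x y) 0 := by
    have h2 : HasFDerivAt (mulP k m) (fderiv ℂ (mulP k m) x) (x + (0:ℂ) • y) := by simpa using hdf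
    exact h2.comp_hasDerivAt (0:ℂ) hline
  refine h1.unique ?_
  rw [hasDerivAt_pi]
  intro i
  have e : (fun s : ℂ => mulP k m (x + s • y) i) = fun s : ℂ => (polyP x.1 * polyP x.2).coeff i +
      s * (lowP y.1 * polyP x.2 + polyP x.1 * lowP y.2).coeff i +
      s ^ 2 * (lowP y.1 * lowP y.2).coeff i := by
    funext s
    rw [← Polynomial.coeff_C_mul, ← Polynomial.coeff_C_mul, ← Polynomial.coeff_add,
      ← Polynomial.coeff_add]
    simp only [mulP, Prod.fst_add, Prod.snd_add, Prod.smul_fst, Prod.smul_snd, polyP_eq,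
      lowP_add_smul, Polynomial.C_pow]
    congr 1
    ring
  rw [e]
  have := (((hasDerivAt_id (0:ℂ)).mul_const ((lowP y.1 * polyP x.2 + polyP x.1 * lowP y.2).coeff i)).const_add
    ((polyP x.1 * polyP x.2).coeff i)).add
    (((hasDerivAt_id (0:ℂ)).pow 2).mul_const ((lowP y.1 * lowP y.2).coeff i))
  convert this using 1
  · funext s; simp
  · simp

theorem mulP_deriv_inj {k m : ℕ} (x : (Fin k → ℂ) × (Fin m → ℂ))
    (hx : IsCoprime (polyP x.1) (polyP x.2)) : Function.Injective (fderiv ℂ (mulP k m) x) := by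
  rw [injective_iff_map_eq_zero]
  intro y hy
  rw [mulP_deriv] at hy
  have hl1 : (lowP y.1).degree < k := lowP_degree y.1
  have hl2 : (lowP y.2).degree < m := lowP_degree y.2
  have hdg : ∀ {d : ℕ} (a : Fin d → ℂ), (polyP a).degree = d := fun a => by
    rw [Polynomial.degree_eq_natDegree (polyP_monic a).ne_zero, polyP_natDegree]
  have hz : lowP y.1 * polyP x.2 + polyP x.1 * lowP y.2 = 0 := by
    have hdeg : (lowP y.1 * polyP x.2 + polyP x.1 * lowP y.2).degree < ((k + m : ℕ) : WithBot ℕ) := by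
      refine (Polynomial.degree_add_le _ _).trans_lt (max_lt ?_ ?_)
      · rw [Polynomial.degree_mul, hdg]
        push_cast
        exact WithBot.add_lt_add_right (by exact WithBot.coe_ne_bot) hl1
      · rw [Polynomial.degree_mul, hdg]
        push_cast
        exact WithBot.add_lt_add_left (by exact WithBot.coe_ne_bot) hl2
    ext j
    by_cases hj : j < k + m
    · exact congrFun hy ⟨j, hj⟩
    · rw [Polynomial.coeff_zero]
      refine Polynomial.coeff_eq_zero_of_degree_lt (hdeg.trans_le ?_)
      exact_mod_cast not_lt.1 hj
  have d1 : polyP x.1 ∣ lowP y.1 := by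
    refine hx.dvd_of_dvd_mul_right ?_
    exact ⟨-lowP y.2, by rw [mul_neg]; exact eq_neg_of_add_eq_zero_left hz⟩
  have d2 : polyP x.2 ∣ lowP y.2 := by
    refine hx.symm.dvd_of_dvd_mul_left ?_
    exact ⟨-lowP y.1, by rw [mul_neg, mul_comm (polyP x.2)]; exact eq_neg_of_add_eq_zero_right hz⟩
  have z1 := Polynomial.eq_zero_of_dvd_of_degree_lt d1 (by rw [hdg]; exact hl1)
  have z2 := Polynomial.eq_zero_of_dvd_of_degree_lt d2 (by rw [hdg]; exact hl2)
  exact Prod.ext (lowP_eq_zero z1) (lowP_eq_zero z2)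

/-- the splitting property around `a₀` -/
def SplitAt (d : ℕ) (r B : ℝ) (a₀ : Fin d → ℂ) : Prop :=
  ∃ k m : ℕ, k < d ∧ m < d ∧ ∃ (F₁ : (Fin d → ℂ) → (Fin k → ℂ)) (F₂ : (Fin d → ℂ) → (Fin m → ℂ)),
    DifferentiableOn ℂ F₁ (Metric.ball a₀ r) ∧ DifferentiableOn ℂ F₂ (Metric.ball a₀ r) ∧
    (∀ a ∈ Metric.ball a₀ r, ‖F₁ a‖ ≤ B ∧ ‖F₂ a‖ ≤ B ∧
      (∀ z, evalP a z = evalP (F₁ a) z * evalP (F₂ a) z) ∧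
      (∀ z, ¬ (evalP (F₁ a) z = 0 ∧ evalP (F₂ a) z = 0)) ∧
      ∀ b ∈ Metric.ball a₀ r, ‖F₁ a - F₁ b‖ ≤ B * ‖a - b‖ ∧ ‖F₂ a - F₂ b‖ ≤ B * ‖a - b‖)

theorem SplitAt.mono {d : ℕ} {r B r' B' : ℝ} {a₀ a₁ : Fin d → ℂ} (h : SplitAt d r B a₀)
    (hr : Metric.ball a₁ r' ⊆ Metric.ball a₀ r) (hB : B ≤ B') : SplitAt d r' B' a₁ := by
  obtain ⟨k, m, hk, hm, F₁, F₂, h1, h2, h3⟩ := h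
  refine ⟨k, m, hk, hm, F₁, F₂, h1.mono hr, h2.mono hr, fun a ha => ?_⟩
  obtain ⟨b1, b2, b3, b4, b5⟩ := h3 a (hr ha)
  refine ⟨b1.trans hB, b2.trans hB, b3, b4, fun b hb => ?_⟩
  obtain ⟨c1, c2⟩ := b5 b (hr hb)
  exact ⟨c1.trans (by gcongr), c2.trans (by gcongr)⟩

theorem evalP_cont {d : ℕ} : Continuous fun x : (Fin d → ℂ) × ℂ => evalP x.1 x.2 := by
  unfold evalP
  fun_prop

theorem root_bound' {d : ℕ} {a : Fin d → ℂ} {B : ℝ} (ha : ‖a‖ ≤ B) {z : ℂ} (hz : evalP a z = 0) :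
    ‖z‖ ≤ d * (B + 1) := by
  have hB : 0 ≤ B := (norm_nonneg _).trans ha
  refine root_bound (by positivity) (fun i => ?_) hz
  refine ((norm_le_pi_norm a i).trans ha).trans ?_
  have : B + 1 ≤ (B + 1) ^ (d - (i:ℕ)) := le_self_pow₀ (by linarith) (by have := i.2; omega)
  linarith

theorem split_local' {k m : ℕ} (hk : 1 ≤ k) (hm : 1 ≤ m) (x₀ : (Fin k → ℂ) × (Fin m → ℂ))
    (hx : IsCoprime (polyP x₀.1) (polyP x₀.2)) :
    ∃ r > 0, ∃ B ≥ 0, SplitAt (k + m) r B (mulP k m x₀) := by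
  have hc : ContDiffAt ℂ 1 (mulP k m) x₀ := (mulP_contDiff k m).contDiffAt
  set e := ((fderiv ℂ (mulP k m) x₀).toLinearMap.linearEquivOfInjective (mulP_deriv_inj x₀ hx)
    (by simp)).toContinuousLinearEquiv with he
  have hee : (e : ((Fin k → ℂ) × (Fin m → ℂ)) →L[ℂ] (Fin (k + m) → ℂ)) = fderiv ℂ (mulP k m) x₀ := by
    exact ContinuousLinearMap.ext fun y => rfl
  have hd : HasFDerivAt (mulP k m) (e : ((Fin k → ℂ) × (Fin m → ℂ)) →L[ℂ] (Fin (k + m) → ℂ)) x₀ := by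
    rw [hee]
    exact ((mulP_contDiff k m).differentiable (by norm_num) x₀).hasFDerivAt
  set g := hc.localInverse hd (by norm_num) with hg
  have hgc : ContDiffAt ℂ 1 g (mulP k m x₀) := hc.to_localInverse hd (by norm_num)
  have hg0 : g (mulP k m x₀) = x₀ := hc.localInverse_apply_image hd (by norm_num)
  have hgr : ∀ᶠ a in nhds (mulP k m x₀), mulP k m (g a) = a :=
    (hc.hasStrictFDerivAt' hd (by norm_num)).eventually_right_inverse
  obtain ⟨K, t, ht, hK⟩ := hgc.exists_lipschitzOnWith
  have hgd : ∀ᶠ a in nhds (mulP k m x₀), DifferentiableAt ℂ g a :=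
    (hgc.eventually (by simp)).mono fun a ha => ha.differentiableAt (by norm_num)
  set B₀ := ‖x₀‖ + 1 with hB₀
  have hgB : ∀ᶠ a in nhds (mulP k m x₀), ‖g a‖ < B₀ := by
    have : Filter.Tendsto (fun a => ‖g a‖) (nhds (mulP k m x₀)) (nhds ‖x₀‖) := by
      have := hgc.continuousAt.norm
      rwa [ContinuousAt, hg0] at this
    exact this.eventually_lt_const (by linarith)
  have hcz0 : ∀ z, ¬ (evalP x₀.1 z = 0 ∧ evalP x₀.2 z = 0) := by
    rintro z ⟨h1, h2⟩
    obtain ⟨u, v, huv⟩ := hx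
    have := congrArg (Polynomial.eval z) huv
    simp [polyP_eval, h1, h2] at this
  have hcz : ∀ᶠ x in nhds x₀, ∀ z ∈ Metric.closedBall (0:ℂ) (k * (B₀ + 1)),
      ¬ (evalP x.1 z = 0 ∧ evalP x.2 z = 0) := by
    refine (isCompact_closedBall _ _).eventually_forall_of_forall_eventually fun z _ => ?_
    have ho : IsClosed {q : ((Fin k → ℂ) × (Fin m → ℂ)) × ℂ | evalP q.1.1 q.2 = 0 ∧ evalP q.1.2 q.2 = 0} := by
      refine IsClosed.inter ?_ ?_
      · exact isClosed_eq (evalP_cont.comp (by fun_prop : Continuous fun q : ((Fin k → ℂ) × (Fin m → ℂ)) × ℂ => (q.1.1, q.2))) continuous_const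
      · exact isClosed_eq (evalP_cont.comp (by fun_prop : Continuous fun q : ((Fin k → ℂ) × (Fin m → ℂ)) × ℂ => (q.1.2, q.2))) continuous_const
    exact ho.isOpen_compl.mem_nhds (hcz0 z)
  have hcz' : ∀ᶠ a in nhds (mulP k m x₀), ∀ z ∈ Metric.closedBall (0:ℂ) (k * (B₀ + 1)),
      ¬ (evalP (g a).1 z = 0 ∧ evalP (g a).2 z = 0) := by
    have h := hgc.continuousAt
    rw [ContinuousAt, hg0] at h
    exact h.eventually hcz
  obtain ⟨r, hr, hball⟩ := Metric.eventually_nhds_iff_ball.1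
    (((hgr.and hgd).and (hgB.and hcz')).and (Filter.eventually_mem_set.2 ht))
  refine ⟨r, hr, max (K:ℝ) B₀, le_max_of_le_left K.2, k, m, by omega, by omega, fun a => (g a).1, fun a => (g a).2,
    fun a ha => ?_, fun a ha => ?_, fun a ha => ?_⟩
  · exact ((hball a ha).1.1.2.fst).differentiableWithinAt
  · exact ((hball a ha).1.1.2.snd).differentiableWithinAt
  obtain ⟨⟨⟨h1, -⟩, h3, h4⟩, h5⟩ := hball a ha
  have hn1 : ‖(g a).1‖ ≤ B₀ := (norm_fst_le _).trans h3.le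
  have hn2 : ‖(g a).2‖ ≤ B₀ := (norm_snd_le _).trans h3.le
  refine ⟨hn1.trans (le_max_right _ _), hn2.trans (le_max_right _ _), fun z => ?_, fun z hz => ?_, fun b hb => ?_⟩
  · rw [← polyP_eval, ← polyP_eval, ← polyP_eval, ← Polynomial.eval_mul, ← mulP_spec, h1]
  · refine h4 z ?_ hz
    simpa using root_bound' hn1 hz.1
  · have h6 := hK.norm_sub_le h5 (hball b hb).2
    have h7 : ‖g a - g b‖ ≤ max (K:ℝ) B₀ * ‖a - b‖ := h6.trans (by gcongr; exact le_max_left _ _)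
    exact ⟨(norm_fst_le (g a - g b)).trans h7, (norm_snd_le (g a - g b)).trans h7⟩

theorem split_local {d : ℕ} (a₀ : Fin d → ℂ) (h0 : a₀ ≠ 0) (htr : ∀ i : Fin d, (i:ℕ) + 1 = d → a₀ i = 0) :
    ∃ r > 0, ∃ B ≥ 0, SplitAt d r B a₀ := by
  have hd : 1 ≤ d := by
    rcases Nat.eq_zero_or_pos d with h | h
    · subst h; exact absurd (Subsingleton.elim _ _) h0
    · exact h
  set P := polyP a₀ with hP
  have hPm : P.Monic := polyP_monic a₀
  obtain ⟨w, hw⟩ := IsAlgClosed.exists_root P (by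
    rw [Polynomial.degree_eq_natDegree hPm.ne_zero, polyP_natDegree]
    exact_mod_cast (by omega : d ≠ 0))
  obtain ⟨Q, hQ, hnd⟩ := Polynomial.exists_eq_pow_rootMultiplicity_mul_and_not_dvd P hPm.ne_zero w
  set k := P.rootMultiplicity w with hk
  have hk1 : 1 ≤ k := (Polynomial.rootMultiplicity_pos hPm.ne_zero).2 hw
  have hXm : ((Polynomial.X - Polynomial.C w) ^ k).Monic := (Polynomial.monic_X_sub_C w).pow k
  have hQm : Q.Monic := hXm.of_mul_monic_left (hQ ▸ hPm)
  have hXd : ((Polynomial.X - Polynomial.C w) ^ k).natDegree = k := by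
    rw [(Polynomial.monic_X_sub_C w).natDegree_pow, Polynomial.natDegree_X_sub_C, mul_one]
  have hdsum : k + Q.natDegree = d := by
    have h1 : P.natDegree = d := polyP_natDegree a₀
    rw [hQ, hXm.natDegree_mul hQm, hXd] at h1
    exact h1
  have hm1 : 1 ≤ Q.natDegree := by
    by_contra hcon
    have hq0 : Q.natDegree = 0 := by omega
    have hQ1 : Q = 1 := hQm.natDegree_eq_zero.1 hq0
    have hkd : k = d := by omega
    rw [hQ1, mul_one, hkd] at hQ
    have hnext : P.nextCoeff = 0 := by
      rw [Polynomial.nextCoeff_of_natDegree_pos (by rw [polyP_natDegree]; omega), polyP_natDegree,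
        hP, polyP_eq, Polynomial.coeff_add, Polynomial.coeff_X_pow, if_neg (by omega), zero_add, lowP_coeff,
        dif_pos (by omega)]
      exact htr _ (by simp; omega)
    have hnext2 : P.nextCoeff = d * (-w) := by
      rw [hQ, (Polynomial.monic_X_sub_C w).nextCoeff_pow, Polynomial.nextCoeff_X_sub_C]
      simp
    rw [hnext] at hnext2
    have hw0 : w = 0 := by
      have hd' : (d:ℂ) ≠ 0 := by exact_mod_cast (by omega : d ≠ 0)
      have := hnext2.symm
      simpa [hd'] using this
    apply h0
    apply polyP_inj (d := d)
    rw [← hP, hQ, hw0]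
    simp [polyP]
  obtain ⟨b, hb⟩ := monic_polyP hXm hXd
  obtain ⟨c, hc⟩ := monic_polyP hQm rfl
  have hcop : IsCoprime (polyP b) (polyP c) := by
    rw [hb, hc]
    refine IsCoprime.pow_left ?_
    exact ((Polynomial.irreducible_X_sub_C w).coprime_iff_not_dvd).2 hnd
  obtain ⟨r, hr, B, hB, h⟩ := split_local' hk1 hm1 (b, c) hcop
  have hmul : polyP (mulP k Q.natDegree (b, c)) = P := by
    rw [mulP_spec, hb, hc, ← hQ]
  clear_value k
  subst hdsum
  rw [polyP_inj hmul] at h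
  exact ⟨r, hr, B, hB, h⟩

theorem split_unif (d : ℕ) (B c : ℝ) (hc : 0 < c) : ∃ r > 0, ∃ B' ≥ 0, ∀ a : Fin d → ℂ,
    ‖a‖ ≤ B → c ≤ ‖a‖ → (∀ i : Fin d, (i:ℕ) + 1 = d → a i = 0) → SplitAt d r B' a := by
  set K : Set (Fin d → ℂ) := {a | ‖a‖ ≤ B ∧ c ≤ ‖a‖ ∧ ∀ i : Fin d, (i:ℕ) + 1 = d → a i = 0} with hK
  have hKc : IsCompact K := by
    refine (isCompact_closedBall (0 : Fin d → ℂ) B).of_isClosed_subset ?_ fun a ha => by simpa using ha.1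
    refine (isClosed_le continuous_norm continuous_const).inter
      ((isClosed_le continuous_const continuous_norm).inter ?_)
    have : {a : Fin d → ℂ | ∀ i : Fin d, (i:ℕ) + 1 = d → a i = 0} =
        ⋂ i : Fin d, ⋂ (_ : (i:ℕ) + 1 = d), {a | a i = 0} := by ext; simp
    change IsClosed {a : Fin d → ℂ | ∀ i : Fin d, (i:ℕ) + 1 = d → a i = 0}
    rw [this]
    exact isClosed_iInter fun i => isClosed_iInter fun _ => isClosed_eq (continuous_apply i) continuous_const
  have := hKc.induction_on (p := fun s => ∃ r > 0, ∃ B' ≥ 0, ∀ a ∈ s, SplitAt d r B' a)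
    ⟨1, one_pos, 0, le_rfl, by simp⟩
    (fun s t hst ⟨r, hr, B', hB', h⟩ => ⟨r, hr, B', hB', fun a ha => h a (hst ha)⟩)
    (fun s t ⟨r, hr, B', hB', h⟩ ⟨r2, hr2, B2, hB2, h2⟩ =>
      ⟨min r r2, lt_min hr hr2, max B' B2, le_max_of_le_left hB', fun a ha => by
        rcases ha with ha | ha
        · exact (h a ha).mono (Metric.ball_subset_ball (min_le_left _ _)) (le_max_left _ _)
        · exact (h2 a ha).mono (Metric.ball_subset_ball (min_le_right _ _)) (le_max_right _ _)⟩)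
    (fun a ha => by
      obtain ⟨r, hr, B', hB', h⟩ := split_local a (by
        rintro rfl
        have := ha.2.1
        simp at this
        linarith) ha.2.2
      refine ⟨Metric.ball a (r / 2), mem_nhdsWithin_of_mem_nhds (Metric.ball_mem_nhds _ (by positivity)),
        r / 2, by positivity, B', hB', fun b hb => h.mono ?_ le_rfl⟩
      refine Metric.ball_subset_ball' ?_
      have : dist b a < r / 2 := hb
      linarith)
  obtain ⟨r, hr, B', hB', h⟩ := this
  exact ⟨r, hr, B', hB', fun a h1 h2 h3 => h a ⟨h1, h2, h3⟩⟩

/-- uniform partition estimate for continuous roots of degree `d` families -/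
def CoreAt (n : ℕ) (p : ℝ) (d : ℕ) : Prop :=
  ∀ B : ℝ, 0 ≤ B → ∃ A : ℝ, 0 ≤ A ∧ ∀ (a : ℝ → Fin d → ℂ) (l : ℝ → ℂ) (u v : ℝ),
    (∀ i, Cl n B (fun t => a t i)) → 0 ≤ u → u ≤ v → v ≤ 1 → ContinuousOn l (Icc u v) →
    (∀ t ∈ Icc u v, evalP (a t) (l t) = 0) → ∀ δ > 0, HasPart l p δ u v A

theorem HasPart.congr {f g : ℝ → ℂ} {p δ x y B : ℝ} (h : HasPart g p δ x y B)
    (hfg : ∀ t, f t = g t) : HasPart f p δ x y B := by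
  have : f = g := funext hfg
  rwa [this]

theorem Cl.contOn {n : ℕ} {B : ℝ} {f : ℝ → ℂ} (hn : 1 ≤ n) (h : Cl n B f) :
    ContinuousOn f (Icc 0 1) := by
  have hB := h.nonneg
  have : LipschitzOnWith (Real.toNNReal ((n + 1) * B)) f (Icc 0 1) :=
    LipschitzOnWith.of_dist_le_mul fun x hx y hy => by
      rw [dist_eq_norm, Real.dist_eq, Real.coe_toNNReal _ (by positivity)]
      exact h.lip hn hy hx
  exact this.continuousOn

theorem one_factor {x y : ℝ} {f₁ f₂ : ℝ → ℂ} (h1 : ContinuousOn f₁ (Icc x y))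
    (h2 : ContinuousOn f₂ (Icc x y)) (h : ∀ s ∈ Icc x y, f₁ s * f₂ s = 0)
    (hne : ∀ s ∈ Icc x y, ¬ (f₁ s = 0 ∧ f₂ s = 0)) :
    (∀ s ∈ Icc x y, f₁ s = 0) ∨ (∀ s ∈ Icc x y, f₂ s = 0) := by
  by_contra hcon
  push Not at hcon
  obtain ⟨⟨s, hs, hs1⟩, t, ht, ht2⟩ := hcon
  have hs2 : f₂ s = 0 := (mul_eq_zero.1 (h s hs)).resolve_left hs1
  have ht1 : f₁ t = 0 := (mul_eq_zero.1 (h t ht)).resolve_right ht2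
  obtain ⟨w, hw, ⟨-, hw1⟩, ⟨-, hw2⟩⟩ := isPreconnected_closed_iff.1 (isPreconnected_Icc (a := x) (b := y)) _ _
    (h1.preimage_isClosed_of_isClosed isClosed_Icc (isClosed_singleton (x := (0:ℂ))))
    (h2.preimage_isClosed_of_isClosed isClosed_Icc (isClosed_singleton (x := (0:ℂ))))
    (fun w hw => (mul_eq_zero.1 (h w hw)).imp (fun h => ⟨hw, h⟩) (fun h => ⟨hw, h⟩))
    ⟨t, ht, ht, ht1⟩ ⟨s, hs, hs, hs2⟩
  exact hne w hw ⟨hw1, hw2⟩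

theorem good_lemma {n : ℕ} (hn : 1 ≤ n) {p : ℝ} (hp : 1 ≤ p) {d : ℕ} (IH : ∀ k < d, CoreAt n p k)
    (B c : ℝ) (hB : 0 ≤ B) (hc : 0 < c) :
    ∃ A : ℝ, 0 ≤ A ∧ ∀ (a : ℝ → Fin d → ℂ) (l : ℝ → ℂ) (u v : ℝ),
    (∀ i, Cl n B (fun t => a t i)) → (∀ t ∈ Icc (0:ℝ) 1, c ≤ ‖a t‖) →
    (∀ t ∈ Icc (0:ℝ) 1, ∀ i : Fin d, (i:ℕ) + 1 = d → a t i = 0) →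
    0 ≤ u → u ≤ v → v ≤ 1 → ContinuousOn l (Icc u v) →
    (∀ t ∈ Icc u v, evalP (a t) (l t) = 0) → ∀ δ > 0, HasPart l p δ u v A := by
  obtain ⟨r, hr, B', hB', hsplit⟩ := split_unif d B c hc
  obtain ⟨N, hN⟩ := exists_nat_gt (max 1 ((n + 1) * B / (r / 2)))
  have hN1 : (1:ℝ) < N := (le_max_left _ _).trans_lt hN
  have hN0 : (0:ℝ) < N := by linarith
  have hNp : 0 < N := by exact_mod_cast hN0
  have hNr : (n + 1) * B / N < r / 2 := by
    have := (le_max_right _ _).trans_lt hN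
    rw [div_lt_iff₀ (by positivity)] at this
    rw [div_lt_iff₀ hN0]; linarith
  obtain ⟨B'', hB'', hcomp⟩ := Cl.comp (d := d) hn hB (half_pos hr) hB'
  choose! A hA0 hA using fun k hk => IH k hk B'' hB''
  set A₀ := ∑ k ∈ Finset.range d, A k with hA₀
  have hAle : ∀ k < d, A k ≤ A₀ := fun k hk =>
    Finset.single_le_sum (f := A) (fun i hi => hA0 i (Finset.mem_range.1 hi)) (Finset.mem_range.2 hk)
  have hA₀0 : 0 ≤ A₀ := Finset.sum_nonneg fun i hi => hA0 i (Finset.mem_range.1 hi)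
  refine ⟨∑ j ∈ Finset.range N, (N:ℝ) ^ (p - 1) * A₀, by positivity, ?_⟩
  intro a l u v ha hac htr hu huv hv hl hroot δ hδ
  refine HasPart.grid hp hδ.le N hNp (fun _ => A₀) (fun _ _ => hA₀0) hu huv hv ?_
  intro j hj x y hx hxy hy hux hyv
  have hj' : (j:ℝ) + 1 ≤ N := by exact_mod_cast hj
  have hmem : ∀ s ∈ Icc (0:ℝ) 1, (j + s) / N ∈ Icc (0:ℝ) 1 := fun s hs =>
    ⟨div_nonneg (by linarith [hs.1, (Nat.cast_nonneg j : (0:ℝ) ≤ j)]) hN0.le,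
      by rw [div_le_one hN0]; linarith [hs.2]⟩
  set aj : ℝ → Fin d → ℂ := fun s => a ((j + s) / N) with haj
  have hajC : ∀ i, Cl n B (fun s => aj s i) := fun i => by
    have := (ha i).restrict (x := j / N) (r := 1 / N) (by positivity) (by positivity) (by
      rw [← add_div, div_le_one hN0]; linarith)
    convert this using 4
    ring
  set a₀ := aj 0 with ha₀
  have h0m : (0:ℝ) ∈ Icc (0:ℝ) 1 := by simp
  have hanorm : ‖a₀‖ ≤ B := by
    rw [pi_norm_le_iff_of_nonneg hB]
    intro i
    exact (hajC i).bound hn h0m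
  obtain ⟨k, m, hk, hm, F₁, F₂, hd1, hd2, hF⟩ := hsplit a₀ hanorm (hac _ (hmem 0 h0m)) (htr _ (hmem 0 h0m))
  have hnear : ∀ s ∈ Icc (0:ℝ) 1, dist (aj s) a₀ < r / 2 := fun s hs => by
    rw [dist_pi_lt_iff (by positivity)]
    intro i
    rw [dist_eq_norm]
    refine lt_of_le_of_lt ((ha i).lip hn (hmem 0 h0m) (hmem s hs)) ?_
    refine lt_of_le_of_lt ?_ hNr
    rw [← sub_div, abs_div, abs_of_pos hN0, add_sub_add_left_eq_sub, sub_zero, abs_of_nonneg hs.1,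
      mul_div_assoc']
    exact div_le_div_of_nonneg_right (mul_le_of_le_one_right (by positivity) hs.2) hN0.le
  have hballs : ∀ s ∈ Icc (0:ℝ) 1, Metric.ball (aj s) (r / 2) ⊆ Metric.ball a₀ r := fun s hs =>
    Metric.ball_subset_ball' (by linarith [hnear s hs])
  have hin : ∀ s ∈ Icc (0:ℝ) 1, aj s ∈ Metric.ball a₀ r := fun s hs =>
    hballs s hs (Metric.mem_ball_self (by positivity))
  have hC1 : ∀ i, Cl n B'' (fun s => F₁ (aj s) i) := fun i =>
    hcomp aj (fun a => F₁ a i) _ hajC hballs Metric.isOpen_ball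
      (differentiableOn_pi.1 hd1 i)
      (fun x hx => (norm_le_pi_norm _ i).trans (hF x hx).1)
      (fun x hx y hy => (norm_le_pi_norm (F₁ x - F₁ y) i).trans ((hF x hx).2.2.2.2 y hy).1)
  have hC2 : ∀ i, Cl n B'' (fun s => F₂ (aj s) i) := fun i =>
    hcomp aj (fun a => F₂ a i) _ hajC hballs Metric.isOpen_ball
      (differentiableOn_pi.1 hd2 i)
      (fun x hx => (norm_le_pi_norm _ i).trans (hF x hx).2.1)
      (fun x hx y hy => (norm_le_pi_norm (F₂ x - F₂ y) i).trans ((hF x hx).2.2.2.2 y hy).2)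
  have hsub : Icc x y ⊆ Icc (0:ℝ) 1 := Icc_subset_Icc hx hy
  have hmaps : ∀ s ∈ Icc x y, (j + s) / N ∈ Icc u v := fun s hs =>
    ⟨hux.trans (by gcongr; exact hs.1), le_trans (by gcongr; exact hs.2) hyv⟩
  set lj : ℝ → ℂ := fun s => l ((j + s) / N) with hlj
  have hljc : ContinuousOn lj (Icc x y) := hl.comp (by fun_prop) hmaps
  have hrt : ∀ s ∈ Icc x y, evalP (F₁ (aj s)) (lj s) * evalP (F₂ (aj s)) (lj s) = 0 := fun s hs => by
    rw [← (hF _ (hin s (hsub hs))).2.2.1]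
    exact hroot _ (hmaps s hs)
  have hc1 : ContinuousOn (fun s => evalP (F₁ (aj s)) (lj s)) (Icc x y) := by
    have : ContinuousOn (fun s => F₁ (aj s)) (Icc x y) :=
      continuousOn_pi.2 fun i => ((hC1 i).contOn hn).mono hsub
    exact evalP_cont.comp_continuousOn (this.prodMk hljc)
  have hc2 : ContinuousOn (fun s => evalP (F₂ (aj s)) (lj s)) (Icc x y) := by
    have : ContinuousOn (fun s => F₂ (aj s)) (Icc x y) :=
      continuousOn_pi.2 fun i => ((hC2 i).contOn hn).mono hsub
    exact evalP_cont.comp_continuousOn (this.prodMk hljc)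
  rcases one_factor hc1 hc2 hrt (fun s hs => (hF _ (hin s (hsub hs))).2.2.2.1 _) with h | h
  · exact (hA k hk _ _ _ _ hC1 hx hxy hy hljc h _ (by positivity)).mono (hAle k hk)
  · exact (hA m hm _ _ _ _ hC2 hx hxy hy hljc h _ (by positivity)).mono (hAle m hm)

/-- Composition with a polynomial map -/
theorem Cl.comp_smooth {d n : ℕ} (hn : 1 ≤ n) (F : (Fin d → ℂ) → ℂ) (hF : ContDiff ℂ 1 F) {B : ℝ}
    (hB : 0 ≤ B) : ∃ B' : ℝ, 0 ≤ B' ∧ ∀ a : ℝ → Fin d → ℂ, (∀ i, Cl n B (fun t => a t i)) →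
      Cl n B' (fun t => F (a t)) := by
  have hK := isCompact_closedBall (0 : Fin d → ℂ) (B + 1)
  obtain ⟨C₁, h1⟩ := hK.exists_bound_of_continuousOn (f := F) hF.continuous.continuousOn
  obtain ⟨C₂, h2⟩ := hK.exists_bound_of_continuousOn (f := fderiv ℂ F)
    (hF.continuous_fderiv (by norm_num)).continuousOn
  obtain ⟨B', hB', h⟩ := Cl.comp (d := d) hn hB one_pos (B' := max 0 (max C₁ C₂)) (le_max_left _ _)
  refine ⟨B', hB', fun a ha => h a F (Metric.ball 0 (B + 1)) ha (fun t ht => ?_) Metric.isOpen_ball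
    (hF.differentiable (by norm_num)).differentiableOn (fun x hx => ?_) fun x hx y hy => ?_⟩
  · refine Metric.ball_subset_ball' ?_
    have : ‖a t‖ ≤ B := by
      rw [pi_norm_le_iff_of_nonneg hB]
      intro i
      exact (ha i).bound hn ht
    rw [dist_zero_right]; linarith
  · exact (h1 x (Metric.ball_subset_closedBall hx)).trans ((le_max_left _ _).trans (le_max_right _ _))
  · refine (convex_ball (0 : Fin d → ℂ) (B + 1)).norm_image_sub_le_of_norm_fderiv_le (𝕜 := ℂ)
      (fun z _ => hF.differentiable (by norm_num) z) (fun z hz => ?_) hy hx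
    exact (h2 z (Metric.ball_subset_closedBall hz)).trans ((le_max_right _ _).trans (le_max_right _ _))

/-- the shift of the Tschirnhausen transformation -/
def tr {d : ℕ} (hd : 1 ≤ d) (a : Fin d → ℂ) : ℂ := - a ⟨d - 1, by omega⟩ / d

/-- the Tschirnhausen transformation -/
def Tsch {d : ℕ} (hd : 1 ≤ d) (a : Fin d → ℂ) : Fin d → ℂ := fun j =>
  tr hd a ^ (d - (j:ℕ)) * (d.choose j : ℂ) +
    ∑ i : Fin d, a i * (tr hd a ^ ((i:ℕ) - (j:ℕ)) * ((i:ℕ).choose j : ℂ))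

theorem Tsch_spec {d : ℕ} (hd : 1 ≤ d) (a : Fin d → ℂ) :
    polyP (Tsch hd a) = (polyP a).comp (Polynomial.X + Polynomial.C (tr hd a)) := by
  obtain ⟨b, hb⟩ := monic_polyP (q := (polyP a).comp (Polynomial.X + Polynomial.C (tr hd a)))
    ((polyP_monic a).comp_X_add_C _) (k := d) (by
      rw [Polynomial.natDegree_comp, polyP_natDegree, Polynomial.natDegree_X_add_C, mul_one])
  have : Tsch hd a = b := by
    funext j
    have hj := j.2
    have h1 : (polyP b).coeff j = b j := by
      rw [polyP_eq, Polynomial.coeff_add, lowP_coeff, Polynomial.coeff_X_pow, if_neg (by omega)]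
      simp
    rw [← h1, hb]
    simp [polyP, Tsch, Polynomial.finsetSum_coeff, Polynomial.coeff_X_add_C_pow]
  rw [this, hb]

theorem Tsch_eval {d : ℕ} (hd : 1 ≤ d) (a : Fin d → ℂ) (z : ℂ) :
    evalP (Tsch hd a) (z - tr hd a) = evalP a z := by
  rw [← polyP_eval, Tsch_spec, Polynomial.eval_comp, ← polyP_eval]
  simp

theorem Tsch_trace {d : ℕ} (hd : 1 ≤ d) (a : Fin d → ℂ) (j : Fin d) (hj : (j:ℕ) + 1 = d) :
    Tsch hd a j = 0 := by
  have e1 : d - (j:ℕ) = 1 := by omega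
  have e2 : d.choose j = d := by
    obtain ⟨j, hj'⟩ := j
    simp only at hj ⊢
    subst hj
    simp
  have hd0 : (d:ℂ) ≠ 0 := by exact_mod_cast (by omega : d ≠ 0)
  rw [Tsch, e1, e2, Finset.sum_eq_single j]
  · have : (⟨d - 1, by omega⟩ : Fin d) = j := Fin.ext (by simp; omega)
    simp [tr, this]
    field_simp
    ring
  · intro i _ hi
    have : (i:ℕ) < j := by
      have h1 := i.2
      have : (i:ℕ) ≠ j := fun h => hi (Fin.ext h)
      omega
    rw [Nat.choose_eq_zero_of_lt this]
    simp
  · simp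

theorem tr_contDiff {d : ℕ} (hd : 1 ≤ d) : ContDiff ℂ 1 (tr hd) := by
  unfold tr
  fun_prop

theorem Tsch_contDiff {d : ℕ} (hd : 1 ≤ d) (j : Fin d) : ContDiff ℂ 1 (fun a => Tsch hd a j) := by
  have := tr_contDiff hd
  unfold Tsch
  fun_prop

theorem Tsch_Cl {n d : ℕ} (hn : 1 ≤ n) (hd : 1 ≤ d) {B : ℝ} (hB : 0 ≤ B) : ∃ B' : ℝ, 0 ≤ B' ∧
    ∀ a : ℝ → Fin d → ℂ, (∀ i, Cl n B (fun t => a t i)) →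
      (∀ j, Cl n B' (fun t => Tsch hd (a t) j)) ∧ Cl n B' (fun t => tr hd (a t)) := by
  choose B₁ hB₁ h1 using fun j => Cl.comp_smooth hn _ (Tsch_contDiff hd j) hB
  obtain ⟨B₂, hB₂, h2⟩ := Cl.comp_smooth hn _ (tr_contDiff hd) hB
  have hs : 0 ≤ ∑ j, B₁ j := Finset.sum_nonneg fun j _ => hB₁ j
  refine ⟨∑ j, B₁ j + B₂, by positivity, fun a ha => ⟨fun j => (h1 j a ha).mono ?_, (h2 a ha).mono (by linarith)⟩⟩
  have := Finset.single_le_sum (f := B₁) (fun i _ => hB₁ i) (Finset.mem_univ j)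
  linarith

/-- admissible data for the inner recursion -/
structure Adm (n d : ℕ) (M : ℝ) (a : ℝ → Fin d → ℂ) (l : ℝ → ℂ) (u v : ℝ) : Prop where
  hM : 0 ≤ M
  wc : ∀ i, Wc n 1 (fun t => a t i)
  tr0 : ∀ t ∈ Icc (0:ℝ) 1, ∀ i : Fin d, (i:ℕ) + 1 = d → a t i = 0
  bd : ∀ t ∈ Icc (0:ℝ) 1, ∀ i : Fin d, ‖a t i‖ ≤ M ^ (d - (i:ℕ))
  hu : 0 ≤ u
  huv : u ≤ v
  hv : v ≤ 1
  cont : ContinuousOn l (Icc u v)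
  root : ∀ t ∈ Icc u v, evalP (a t) (l t) = 0

/-- the bound is attained -/
def Att {d : ℕ} (M : ℝ) (a : ℝ → Fin d → ℂ) : Prop :=
  ∃ t ∈ Icc (0:ℝ) 1, ∃ i : Fin d, ‖a t i‖ = M ^ (d - (i:ℕ))

theorem Adm.contA {n d : ℕ} {M : ℝ} {a : ℝ → Fin d → ℂ} {l : ℝ → ℂ} {u v : ℝ} (hn : 1 ≤ n)
    (h : Adm n d M a l u v) (i : Fin d) : ContinuousOn (fun t => a t i) (Icc 0 1) := by
  obtain ⟨C, hC, H⟩ := markov n hn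
  have := H (max 1 (M ^ (d - (i:ℕ)))) _ ((h.wc i).mono (le_max_left _ _))
    (fun t ht => (h.bd t ht i).trans (le_max_right _ _))
  exact this.contOn hn

theorem Adm.exact_sup {n d : ℕ} {M : ℝ} {a : ℝ → Fin d → ℂ} {l : ℝ → ℂ} {u v : ℝ} (hn : 1 ≤ n)
    (hd : 1 ≤ d) (h : Adm n d M a l u v) : ∃ M' ≤ M, Adm n d M' a l u v ∧ Att M' a := by
  have h1 : ∀ i : Fin d, ∃ t ∈ Icc (0:ℝ) 1, ∀ s ∈ Icc (0:ℝ) 1, ‖a s i‖ ≤ ‖a t i‖ := fun i => by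
    obtain ⟨t, ht, hm⟩ := isCompact_Icc.exists_isMaxOn (nonempty_Icc.2 zero_le_one) (h.contA hn i).norm
    exact ⟨t, ht, hm⟩
  choose T hT hmax using h1
  haveI : Nonempty (Fin d) := ⟨⟨0, hd⟩⟩
  obtain ⟨i0, hi0⟩ := Finite.exists_max (fun i : Fin d => ‖a (T i) i‖ ^ (((d - (i:ℕ) : ℕ) : ℝ)⁻¹))
  have hne : ∀ i : Fin d, d - (i:ℕ) ≠ 0 := fun i => by have := i.2; omega
  have hpow : ∀ (i : Fin d) (x : ℝ), 0 ≤ x → (x ^ (((d - (i:ℕ) : ℕ) : ℝ)⁻¹)) ^ (d - (i:ℕ)) = x :=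
    fun i x hx => Real.rpow_inv_natCast_pow hx (hne i)
  set M' := ‖a (T i0) i0‖ ^ (((d - (i0:ℕ) : ℕ) : ℝ)⁻¹) with hM'
  have hM0 : 0 ≤ M' := by positivity
  refine ⟨M', ?_, ⟨hM0, h.wc, h.tr0, fun t ht i => ?_, h.hu, h.huv, h.hv, h.cont, h.root⟩,
    T i0, hT i0, i0, ?_⟩
  · refine le_of_pow_le_pow_left₀ (hne i0) h.hM ?_
    rw [hpow _ _ (norm_nonneg _)]
    exact h.bd _ (hT i0) i0
  · refine (hmax i t ht).trans ?_
    rw [← hpow i _ (norm_nonneg (a (T i) i))]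
    gcongr
    exact hi0 i
  · rw [hpow _ _ (norm_nonneg _)]

theorem sub_grid_mem {N j : ℕ} (hj : j < N) {s : ℝ} (hs : s ∈ Icc (0:ℝ) 1) :
    ((j:ℝ) + s) / N ∈ Icc (0:ℝ) 1 ∧ ((j:ℝ) + s) / N ∈ Icc ((j:ℝ) / N) (((j:ℝ) + 1) / N) := by
  have hN : (0:ℝ) < N := by exact_mod_cast (by omega : 0 < N)
  have hjN : (j:ℝ) + 1 ≤ N := by exact_mod_cast hj
  obtain ⟨h0, h1⟩ := hs
  refine ⟨⟨by positivity, ?_⟩, ?_, ?_⟩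
  · rw [div_le_one hN]; linarith
  · gcongr; linarith
  · gcongr

theorem Adm.rescale {n d : ℕ} {M M' : ℝ} {a : ℝ → Fin d → ℂ} {l : ℝ → ℂ} {u v : ℝ} (hdn : d ≤ n)
    (h : Adm n d M a l u v) {N j : ℕ} (hj : j < N) {x y : ℝ} (hx : 0 ≤ x) (hxy : x ≤ y) (hy : y ≤ 1)
    (hux : u ≤ ((j:ℝ) + x) / N) (hyv : ((j:ℝ) + y) / N ≤ v) (hM' : 0 ≤ M')
    (hb : ∀ t ∈ Icc ((j:ℝ) / N) (((j:ℝ) + 1) / N), ∀ i : Fin d,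
      (N:ℝ) ^ (d - (i:ℕ)) * ‖a t i‖ ≤ M' ^ (d - (i:ℕ))) :
    Adm n d M' (fun s i => (N:ℂ) ^ (d - (i:ℕ)) * a (((j:ℝ) + s) / N) i)
      (fun s => (N:ℂ) * l (((j:ℝ) + s) / N)) x y := by
  have hN : (0:ℝ) < N := by exact_mod_cast (by omega : 0 < N)
  have hN1 : (1:ℝ) ≤ N := by exact_mod_cast (by omega : 1 ≤ N)
  have hjN : (j:ℝ) + 1 ≤ N := by exact_mod_cast hj
  have hmem : ∀ t ∈ Icc x y, ((j:ℝ) + t) / N ∈ Icc u v := fun t ht => by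
    refine ⟨hux.trans ?_, le_trans ?_ hyv⟩ <;> gcongr
    exacts [ht.1, ht.2]
  refine ⟨hM', fun i => ?_, fun t ht i hi => ?_, fun t ht i => ?_, hx, hxy, hy, ?_, fun t ht => ?_⟩
  · have h1 := (h.wc i).restrict (x := (j:ℝ) / N) (r := 1 / N) (by positivity) (by positivity)
      (by rw [← add_div, div_le_one hN]; exact hjN)
    have h2 := h1.const_mul ((N:ℂ) ^ (d - (i:ℕ)))
    have e : (fun s : ℝ => (N:ℂ) ^ (d - (i:ℕ)) * a ((j:ℝ) / N + 1 / N * s) i)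
      = fun s => (N:ℂ) ^ (d - (i:ℕ)) * a (((j:ℝ) + s) / N) i := by
      funext s; congr 3; ring
    rw [e] at h2
    refine h2.mono ?_
    rw [norm_pow, Complex.norm_natCast, one_mul, one_div, inv_pow, ← div_eq_mul_inv,
      div_le_one (by positivity)]
    exact pow_le_pow_right₀ hN1 (by omega)
  · simp only [h.tr0 _ (sub_grid_mem hj ht).1 i hi, mul_zero]
  · rw [norm_mul, norm_pow, Complex.norm_natCast]
    exact hb _ (sub_grid_mem hj ht).2 i
  · refine continuousOn_const.mul (h.cont.comp (by fun_prop) hmem)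
  · rw [evalP_scale, h.root _ (hmem t ht), mul_zero]

theorem HasPart.grid' {f : ℝ → ℂ} {p δ : ℝ} (hp : 1 ≤ p) (hd : 0 ≤ δ) (N : ℕ) (hN : 0 < N)
    (B : ℕ → ℝ) (hB : ∀ j < N, 0 ≤ B j) {u v : ℝ} (hu : 0 ≤ u) (huv : u ≤ v) (hv : v ≤ 1)
    (h : ∀ j < N, ∀ x y, 0 ≤ x → x ≤ y → y ≤ 1 → u ≤ ((j:ℝ) + x) / N → ((j:ℝ) + y) / N ≤ v →
      HasPart (fun s => (N:ℂ) * f (((j:ℝ) + s) / N)) p (N * δ) x y (B j)) :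
    HasPart f p δ u v ((∑ j ∈ Finset.range N, B j) / N) := by
  have hN' : (0:ℝ) < N := by exact_mod_cast hN
  have := HasPart.grid (f := f) hp hd N hN (fun j => ((N:ℝ)⁻¹) ^ p * B j)
    (fun j hj => mul_nonneg (by positivity) (hB j hj)) hu huv hv (fun j hj x y h0 h1 h2 h3 h4 => by
      refine (h j hj x y h0 h1 h2 h3 h4).congr_const_mul (by positivity) (fun t => ?_)
      have : (N:ℂ) ≠ 0 := by exact_mod_cast hN.ne'
      push_cast
      field_simp)
  convert this using 1
  rw [Finset.sum_div]
  refine Finset.sum_congr rfl fun j _ => ?_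
  rw [← mul_assoc, Real.inv_rpow hN'.le, ← div_eq_mul_inv, ← Real.rpow_sub hN']
  rw [show p - 1 - p = -1 by ring, Real.rpow_neg_one]
  ring

theorem choose_N (n d : ℕ) (hd : 1 ≤ d) (p L : ℝ) (hL : 0 < L) (he : 0 < 1 - p + p / d) :
    ∃ N : ℕ, 2 ≤ N ∧ 2 * L ≤ N ∧
      4 * n * (2 ^ p + (N * (2 * L / N) ^ ((d:ℝ)⁻¹)) ^ p) ≤ (N:ℝ) / 2 := by
  have h1 : Filter.Tendsto (fun N : ℕ => 4 * n * (2 ^ p * (N:ℝ) ^ (-(1:ℝ)) +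
      (2 * L) ^ (p / d) * (N:ℝ) ^ (-(1 - p + p / d)))) Filter.atTop
      (nhds (4 * n * (2 ^ p * 0 + (2 * L) ^ (p / d) * 0))) := by
    have a1 := (tendsto_rpow_neg_atTop (zero_lt_one' ℝ)).comp tendsto_natCast_atTop_atTop
    have a2 := (tendsto_rpow_neg_atTop he).comp tendsto_natCast_atTop_atTop
    exact ((a1.const_mul _).add (a2.const_mul _)).const_mul _
  have h2 := h1.eventually_le_const (u := (1:ℝ) / 2) (by norm_num)
  have h3 := tendsto_natCast_atTop_atTop.eventually (Filter.eventually_ge_atTop (2 * L))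
  obtain ⟨N, h2, h3, h4⟩ := (h2.and (h3.and (Filter.eventually_ge_atTop 2))).exists
  refine ⟨N, h4, h3, ?_⟩
  have hN : (0:ℝ) < N := by exact_mod_cast (by omega : 0 < N)
  have hd' : (0:ℝ) < d := by exact_mod_cast hd
  have e : (N * (2 * L / N) ^ ((d:ℝ)⁻¹)) ^ p = N * ((2 * L) ^ (p / d) * (N:ℝ) ^ (-(1 - p + p / d))) := by
    rw [Real.mul_rpow hN.le (by positivity), ← Real.rpow_mul (by positivity),
      Real.div_rpow (by positivity) hN.le, show (d:ℝ)⁻¹ * p = p / d by ring,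
      show -(1 - p + p / d) = p - 1 - p / d by ring, Real.rpow_sub hN, Real.rpow_sub hN, Real.rpow_one]
    field_simp
  rw [e]
  have e2 : (2:ℝ) ^ p = N * (2 ^ p * (N:ℝ) ^ (-(1:ℝ))) := by
    rw [Real.rpow_neg_one]; field_simp
  rw [e2, ← mul_add]
  nlinarith

/-- normalised coefficients -/
theorem Adm.norm_bd {n d : ℕ} {M m : ℝ} {a : ℝ → Fin d → ℂ} {l : ℝ → ℂ} {u v : ℝ}
    (h : Adm n d M a l u v) (hm : 1 ≤ m) (hMm : M ≤ m) (i : Fin d) :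
    Wc n (1 / m) (fun t => ((m:ℂ)⁻¹) ^ (d - (i:ℕ)) * a t i) ∧
    ∀ t ∈ Icc (0:ℝ) 1, ‖((m:ℂ)⁻¹) ^ (d - (i:ℕ)) * a t i‖ ≤ 1 := by
  have hm0 : 0 < m := by linarith
  have hM := h.hM
  have hnm : ‖((m:ℂ)⁻¹) ^ (d - (i:ℕ))‖ = (1 / m) ^ (d - (i:ℕ)) := by
    rw [norm_pow, norm_inv, Complex.norm_real, Real.norm_of_nonneg hm0.le, one_div]
  constructor
  · refine ((h.wc i).const_mul _).mono ?_
    rw [hnm, mul_one]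
    refine pow_le_of_le_one (by positivity) ?_ (by have := i.2; omega)
    rw [div_le_one hm0]; exact hm
  · intro t ht
    rw [norm_mul, hnm]
    calc (1 / m) ^ (d - (i:ℕ)) * ‖a t i‖ ≤ (1 / m) ^ (d - (i:ℕ)) * m ^ (d - (i:ℕ)) := by
          gcongr
          exact (h.bd t ht i).trans (by gcongr)
      _ = 1 := by rw [← mul_pow]; field_simp; simp

theorem Adm.base {n d : ℕ} (hn : 1 ≤ n) (hd : 1 ≤ d) {p : ℝ} (hp : 1 ≤ p) (he : 0 < 1 - p + p / d) :
    ∃ C0 : ℝ, 0 ≤ C0 ∧ ∀ (M : ℝ) (a : ℝ → Fin d → ℂ) (l : ℝ → ℂ) (u v : ℝ), Adm n d M a l u v →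
      ∀ δ, 1 ≤ δ → HasPart l p δ u v (C0 * (max M 1) ^ p) := by
  obtain ⟨C, hC, H⟩ := markov n hn
  obtain ⟨C0, hC0, H0⟩ := holder_base (d := d) hn hd hp he.le C (by linarith)
  refine ⟨C0, hC0, fun M a l u v h δ hδ => ?_⟩
  set m := max M 1 with hm
  have hm1 : 1 ≤ m := le_max_right _ _
  have hm0 : 0 < m := by linarith
  have hcl : ∀ i : Fin d, Cl n C (fun t => ((m:ℂ)⁻¹) ^ (d - (i:ℕ)) * a t i) := fun i => by
    obtain ⟨h1, h2⟩ := h.norm_bd hm1 (le_max_left _ _) i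
    have := H 1 _ (h1.mono (by rw [div_le_one hm0]; exact hm1)) h2
    rwa [mul_one] at this
  have := H0 (fun t i => ((m:ℂ)⁻¹) ^ (d - (i:ℕ)) * a t i) (fun t => (m:ℂ)⁻¹ * l t) u v hcl h.hu h.huv h.hv
    (continuousOn_const.mul h.cont) (fun t ht => by rw [evalP_scale, h.root t ht, mul_zero])
  have hb : HasPart (fun t => (m:ℂ)⁻¹ * l t) p δ u v C0 :=
    .base h.huv (by linarith [h.hu, h.hv]) this
  have hmc : (m:ℂ) ≠ 0 := by exact_mod_cast hm0.ne'
  have := hb.congr_const_mul (f := l) hm0.le (fun t => by field_simp)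
  rwa [mul_comm] at this

theorem heavy_geom (n : ℕ) (hn : 1 ≤ n) : ∃ C L : ℝ, 1 ≤ C ∧ 1 ≤ L ∧
    ∀ (d N : ℕ), 2 ≤ N → ∀ (M : ℝ) (a : ℝ → Fin d → ℂ) (l : ℝ → ℂ) (u v : ℝ), Adm n d M a l u v →
      Att M a → (N:ℝ) ≤ M → 2 / ((1 / (2 * N:ℝ)) ^ n * (1 / N)) ≤ M →
      (∀ i : Fin d, Cl n C (fun t => ((M:ℂ)⁻¹) ^ (d - (i:ℕ)) * a t i)) ∧
      ∃ S : Finset ℕ, S.card ≤ 4 * n ∧ ∀ k < N,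
        (∃ i : Fin d, ∀ t ∈ Icc ((k:ℝ) / N) (((k:ℝ) + 1) / N),
          (1 / (2 * N:ℝ)) ^ n * (1 / N) / 2 ≤ ‖((M:ℂ)⁻¹) ^ (d - (i:ℕ)) * a t i‖) ∨
        (k ∈ S ∧ ∀ i : Fin d, ∀ t ∈ Icc ((k:ℝ) / N) (((k:ℝ) + 1) / N),
          ‖((M:ℂ)⁻¹) ^ (d - (i:ℕ)) * a t i‖ ≤ 2 * L / N) := by
  obtain ⟨C, hC, H⟩ := markov n hn
  obtain ⟨C', hC', H'⟩ := markov' n hn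
  obtain ⟨L, hL, HL⟩ := poly_grid n C'
  refine ⟨C, L, hC, hL, fun d N hN M a l u v h hatt hNM hcM => ?_⟩
  have hN2 : (2:ℝ) ≤ N := by exact_mod_cast hN
  have hN0 : (0:ℝ) < N := by linarith
  have hM1 : 1 ≤ M := by linarith
  have hM0 : 0 < M := by linarith
  set c := (1 / (2 * N:ℝ)) ^ n * (1 / N) with hc
  have hc0 : 0 < c := by positivity
  have hκ1 : 1 / M ≤ 1 := by rw [div_le_one hM0]; exact hM1
  have hκc : 1 / M ≤ c / 2 := by
    rw [div_le_iff₀ hc0] at hcM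
    rw [div_le_div_iff₀ hM0 two_pos]; linarith
  have hκN : 1 / M ≤ 1 / N := by gcongr
  have hκ0 : 0 ≤ 1 / M := by positivity
  have hN12 : 1 / (N:ℝ) ≤ 1 / 2 := by gcongr
  have hnb := fun i => h.norm_bd hM1 le_rfl i
  refine ⟨fun i => ?_, ?_⟩
  · have := H 1 _ ((hnb i).1.mono hκ1) (hnb i).2
    rwa [mul_one] at this
  have h1 : ∀ i : Fin d, ∃ c : ℕ → ℂ, (∀ k, ‖c k‖ ≤ C') ∧ ∀ t ∈ Icc (0:ℝ) 1,
      ‖((M:ℂ)⁻¹) ^ (d - (i:ℕ)) * a t i - tp n c (t:ℂ)‖ ≤ 1 / M := fun i => by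
    obtain ⟨c, h1, h2⟩ := H' 1 (1 / M) _ hκ1 (hnb i).1 (hnb i).2 0 (by simp)
    refine ⟨c, by simpa using h1, fun t ht => ?_⟩
    have := h2 t ht
    simp only [sub_zero] at this
    refine this.trans ?_
    refine mul_le_of_le_one_right hκ0 (pow_le_one₀ (abs_nonneg _) ?_)
    rw [abs_of_nonneg ht.1]; exact ht.2
  choose T hT hTe using h1
  choose S hS hScard using fun i => HL (T i) N (by omega) (hT i)
  obtain ⟨t0, ht0, i0, hi0⟩ := hatt
  have hcell : ∀ k < N, ∀ t ∈ Icc ((k:ℝ) / N) (((k:ℝ) + 1) / N), t ∈ Icc (0:ℝ) 1 := fun k hk t ht => by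
    refine ⟨le_trans (by positivity) ht.1, ht.2.trans ?_⟩
    rw [div_le_one hN0]; exact_mod_cast hk
  refine ⟨S i0, hScard i0 ⟨t0, ht0, ?_⟩, fun k hk => ?_⟩
  · have e1 : ‖((M:ℂ)⁻¹) ^ (d - (i0:ℕ)) * a t0 i0‖ = 1 := by
      rw [norm_mul, hi0, norm_pow, ← mul_pow, norm_inv, Complex.norm_real, Real.norm_of_nonneg hM0.le,
        inv_mul_cancel₀ hM0.ne', one_pow]
    have := hTe i0 t0 ht0
    have h3 := norm_sub_norm_le (((M:ℂ)⁻¹) ^ (d - (i0:ℕ)) * a t0 i0) (tp n (T i0) t0)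
    linarith
  · by_cases hg : ∃ i, k ∉ S i
    · obtain ⟨i, hi⟩ := hg
      left
      refine ⟨i, fun t ht => ?_⟩
      have h4 := (hS i k hk).1 hi t ht
      have := hTe i t (hcell k hk t ht)
      have h3 := norm_sub_norm_le (tp n (T i) t) (((M:ℂ)⁻¹) ^ (d - (i:ℕ)) * a t i)
      rw [norm_sub_rev] at h3
      linarith
    · push Not at hg
      right
      refine ⟨hg i0, fun i t ht => ?_⟩
      have h4 := (hS i k hk).2 (hg i) t ht
      have := hTe i t (hcell k hk t ht)
      have h3 := norm_sub_norm_le (((M:ℂ)⁻¹) ^ (d - (i:ℕ)) * a t i) (tp n (T i) t)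
      have h5 : 1 / (N:ℝ) ≤ L / N := by gcongr
      have : 2 * L / N = L / N + L / N := by ring
      linarith

/-- weight -/
def wt (K p M : ℝ) : ℝ := if M ≤ K then (2 * K) ^ p else M ^ p

theorem wt_le {K p M Q : ℝ} (hK : 0 ≤ K) (hp : 0 ≤ p) (hM : 0 ≤ M) (hMQ : M ≤ Q) :
    wt K p M ≤ (2 * K) ^ p + Q ^ p := by
  unfold wt
  have h1 : M ^ p ≤ Q ^ p := by gcongr
  have h2 : 0 ≤ M ^ p := by positivity
  have h3 : 0 ≤ (2 * K) ^ p := by positivity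
  split_ifs <;> linarith

theorem wt_le' {K p M : ℝ} (hp : 0 ≤ p) (hM : 0 ≤ M) (hMQ : M ≤ 2 * K) :
    wt K p M ≤ (2 * K) ^ p := by
  unfold wt
  split_ifs
  · exact le_rfl
  · gcongr

theorem recursion {n d : ℕ} (hn : 1 ≤ n) (hd : 1 ≤ d) (hdn : d ≤ n) {p : ℝ} (hp : 1 ≤ p)
    (he : 0 < 1 - p + p / d) (IH : ∀ k < d, CoreAt n p k) :
    ∃ K0 A : ℝ, 1 ≤ K0 ∧ 0 ≤ A ∧ ∀ (k : ℕ) (δ : ℝ), (1 / 2 : ℝ) ^ k ≤ δ →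
      ∀ (M : ℝ) (a : ℝ → Fin d → ℂ) (l : ℝ → ℂ) (u v : ℝ), Adm n d M a l u v →
      (M ≤ K0 ∨ Att M a) → HasPart l p δ u v (A * wt K0 p M) := by
  obtain ⟨C, L, hC, hL, HG⟩ := heavy_geom n hn
  obtain ⟨N, hN2, hNL, hNn⟩ := choose_N n d hd p L (by linarith) he
  have hN2' : (2:ℝ) ≤ N := by exact_mod_cast hN2
  have hN0 : (0:ℝ) < N := by linarith
  set c := (1 / (2 * N:ℝ)) ^ n * (1 / N) with hc
  have hc0 : 0 < c := by positivity
  obtain ⟨A1, hA1, HA1⟩ := good_lemma hn hp IH C (c / 2) (by linarith) (by positivity)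
  obtain ⟨C0, hC0, HC0⟩ := Adm.base (n := n) hn hd hp he
  set K0 := max (2 / c) N with hK0
  have hK2 : (N:ℝ) ≤ K0 := le_max_right _ _
  have hK1 : 1 ≤ K0 := by linarith
  set A := max (2 * N ^ p * A1) C0 with hA
  have hAA : 2 * N ^ p * A1 ≤ A := le_max_left _ _
  have hAC : C0 ≤ A := le_max_right _ _
  have hA0 : 0 ≤ A := hC0.trans hAC
  have hp0 : 0 ≤ p := by linarith
  set θ := (2 * L / N) ^ ((d:ℝ)⁻¹) with hθ
  have hθ0 : 0 ≤ θ := by positivity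
  have hq1 : 2 * L / N ≤ 1 := by rw [div_le_one hN0]; exact hNL
  have hθd : θ ^ d = 2 * L / N := Real.rpow_inv_natCast_pow (by positivity) (by omega)
  have hθ1 : θ ≤ 1 := Real.rpow_le_one (by positivity) hq1 (by positivity)
  refine ⟨K0, A, hK1, hA0, fun k => ?_⟩
  induction k with
  | zero =>
    intro δ hδ M a l u v h _
    refine (HC0 M a l u v h δ (by simpa using hδ)).mono ?_
    have : (max M 1) ^ p ≤ wt K0 p M := by
      unfold wt
      have := h.hM
      split_ifs with h1
      · gcongr
        exact max_le (by linarith) (by linarith)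
      · rw [max_eq_left (by linarith)]
    have h0 : 0 ≤ (max M 1) ^ p := by positivity
    gcongr
  | succ k ih =>
    intro δ hδ M a l u v h hMA
    have hδ0 : 0 < δ := lt_of_lt_of_le (by positivity) hδ
    have hM0 := h.hM
    have hδk : ∀ Q : ℕ, 2 ≤ Q → (1 / 2 : ℝ) ^ k ≤ Q * δ := fun Q hQ => by
      have : (2:ℝ) ≤ Q := by exact_mod_cast hQ
      rw [pow_succ] at hδ
      nlinarith
    by_cases hMK : M ≤ K0
    · have e : wt K0 p M = (2 * K0) ^ p := by simp [wt, hMK]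
      have := HasPart.grid' (f := l) (δ := δ) hp hδ0.le 2 (by norm_num) (fun _ => A * (2 * K0) ^ p)
        (fun _ _ => by positivity) h.hu h.huv h.hv (fun j hj x y hx hxy hy hux hyv => by
          have h2 := h.rescale (M' := 2 * M) hdn hj hx hxy hy hux hyv (by linarith) (fun t ht i => by
            rw [mul_pow]
            have := h.bd t ⟨le_trans (by positivity) ht.1, ht.2.trans (by
              rw [div_le_one (by norm_num)]; exact_mod_cast hj)⟩ i
            push_cast
            gcongr)
          obtain ⟨M', hM', h3, h4⟩ := h2.exact_sup hn hd
          refine (ih _ (hδk 2 le_rfl) M' _ _ x y h3 (Or.inr h4)).mono ?_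
          have := wt_le' (K := K0) hp0 h3.hM (by linarith)
          gcongr)
      refine this.mono ?_
      rw [e]
      simp only [Finset.sum_const, Finset.card_range, nsmul_eq_mul]
      push_cast
      apply le_of_eq; ring
    · have hatt := hMA.resolve_left hMK
      push Not at hMK
      have hM0' : 0 < M := by linarith
      have e : wt K0 p M = M ^ p := by simp [wt, not_le.2 hMK]
      obtain ⟨hcl, S, hS, hcell⟩ := HG d N hN2 M a l u v h hatt (by linarith)
        (le_trans (le_max_left _ _) hMK.le)
      set G := (N * M) ^ p * A1 with hG
      set Bd := A * ((2 * M) ^ p + (N * M * θ) ^ p) with hBd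
      have hG0 : 0 ≤ G := by positivity
      have hBd0 : 0 ≤ Bd := by positivity
      have hMc : (M:ℂ) ≠ 0 := by exact_mod_cast hM0'.ne'
      have := HasPart.grid' (f := l) (δ := δ) hp hδ0.le N (by omega) (fun k => G + if k ∈ S then Bd else 0)
        (fun j _ => by positivity) h.hu h.huv h.hv (fun j hj x y hx hxy hy hux hyv => by
          have hjN : (j:ℝ) + 1 ≤ N := by exact_mod_cast hj
          rcases hcell j hj with ⟨i, hi⟩ | ⟨hjS, hb⟩
          · have h5 := HA1 (fun s i => ((M:ℂ)⁻¹) ^ (d - (i:ℕ)) * a (((j:ℝ) + s) / N) i)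
              (fun s => (M:ℂ)⁻¹ * l (((j:ℝ) + s) / N)) x y (fun i => by
                have := (hcl i).restrict (x := (j:ℝ) / N) (r := 1 / N) (by positivity) (by positivity)
                  (by rw [← add_div, div_le_one hN0]; exact hjN)
                convert this using 5
                ring) (fun t ht => by
                refine (hi _ (sub_grid_mem hj ht).2).trans ?_
                exact norm_le_pi_norm (fun i : Fin d => ((M:ℂ)⁻¹) ^ (d - (i:ℕ)) * a (((j:ℝ) + t) / N) i) i)
              (fun t ht i hi => by
                simp only [h.tr0 _ (sub_grid_mem hj ht).1 i hi, mul_zero]) hx hxy hy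
              (by
                refine continuousOn_const.mul (h.cont.comp (by fun_prop) fun t ht => ?_)
                refine ⟨hux.trans ?_, le_trans ?_ hyv⟩ <;> gcongr
                exacts [ht.1, ht.2])
              (fun t ht => by
                rw [evalP_scale, h.root _ ?_, mul_zero]
                refine ⟨hux.trans ?_, le_trans ?_ hyv⟩ <;> gcongr
                exacts [ht.1, ht.2]) (N * δ) (by positivity)
            refine (h5.congr_const_mul (m := N * M) (by positivity) (fun t => ?_)).mono ?_
            · push_cast
              field_simp
            · split_ifs <;> linarith
          · rw [if_pos hjS]
            have h2 := h.rescale (M' := N * M * θ) hdn hj hx hxy hy hux hyv (by positivity) (fun t ht i => by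
              have h6 := hb i t ht
              rw [norm_mul, norm_pow, norm_inv, Complex.norm_real, Real.norm_of_nonneg hM0'.le, inv_pow,
                inv_mul_le_iff₀ (by positivity)] at h6
              rw [mul_pow, mul_pow, mul_assoc]
              gcongr
              refine h6.trans ?_
              gcongr
              rw [← hθd]
              exact pow_le_pow_of_le_one hθ0 hθ1 (by omega))
            obtain ⟨M', hM', h3, h4⟩ := h2.exact_sup hn hd
            refine (ih _ (hδk N hN2) M' _ _ x y h3 (Or.inr h4)).mono ?_
            have h7 := wt_le (K := K0) (by linarith) hp0 h3.hM hM'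
            have h8 : (2 * K0) ^ p ≤ (2 * M) ^ p := by gcongr
            have : A * wt K0 p M' ≤ Bd := by
              rw [hBd]; gcongr; linarith
            linarith)
      refine this.mono ?_
      rw [e, div_le_iff₀ hN0, Finset.sum_add_distrib]
      have h9 : (∑ x ∈ Finset.range N, if x ∈ S then Bd else 0) ≤ 4 * n * Bd := by
        rw [← Finset.sum_filter, Finset.sum_const, nsmul_eq_mul]
        gcongr
        have : ((Finset.range N).filter (· ∈ S)).card ≤ S.card :=
          Finset.card_le_card (fun x hx => (Finset.mem_filter.1 hx).2)
        exact_mod_cast this.trans hS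
      have h10 : Bd = A * M ^ p * (2 ^ p + (N * θ) ^ p) := by
        rw [hBd, Real.mul_rpow two_pos.le hM0, show N * M * θ = M * (N * θ) by ring,
          Real.mul_rpow hM0 (by positivity)]
        ring
      have h11 : 4 * n * Bd ≤ A * M ^ p * (N / 2) := by
        rw [h10]
        calc 4 * n * (A * M ^ p * (2 ^ p + (N * θ) ^ p)) = A * M ^ p * (4 * n * (2 ^ p + (N * θ) ^ p)) := by ring
          _ ≤ _ := by gcongr
      have h12 : G ≤ M ^ p * (A / 2) := by
        rw [hG, Real.mul_rpow hN0.le hM0, show (N:ℝ) ^ p * M ^ p * A1 = M ^ p * (N ^ p * A1) by ring]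
        gcongr
        linarith
      simp only [Finset.sum_const, Finset.card_range, nsmul_eq_mul]
      nlinarith

theorem expo_pos {n d : ℕ} (hn : 2 ≤ n) {p : ℝ} (hp : 1 ≤ p) (hp2 : p < (n:ℝ) / ((n:ℝ) - 1))
    (hd : 1 ≤ d) (hdn : d ≤ n) : 0 < 1 - p + p / d := by
  have hn' : (2:ℝ) ≤ n := by exact_mod_cast hn
  have hd' : (1:ℝ) ≤ d := by exact_mod_cast hd
  have hdn' : (d:ℝ) ≤ n := by exact_mod_cast hdn
  rw [lt_div_iff₀ (by linarith)] at hp2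
  have h1 : p / n ≤ p / d := by gcongr
  have h2 : 0 < 1 - p + p / n := by
    have : 1 - p + p / n = (n - p * (n - 1)) / n := by field_simp; ring
    rw [this]
    exact div_pos (by linarith) (by linarith)
  linarith

theorem core {n : ℕ} (hn : 2 ≤ n) {p : ℝ} (hp : 1 ≤ p) (hp2 : p < (n:ℝ) / ((n:ℝ) - 1)) (d : ℕ)
    (hdn : d ≤ n) : CoreAt n p d := by
  induction d using Nat.strong_induction_on with
  | _ d IH =>
  intro B hB
  rcases Nat.eq_zero_or_pos d with rfl | hd
  · refine ⟨0, le_rfl, fun a l u v _ _ huv _ _ hr => ?_⟩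
    have := hr u ⟨le_rfl, huv⟩
    simp [evalP] at this
  have hn1 : 1 ≤ n := by omega
  obtain ⟨K0, A, hK, hA, H⟩ := recursion hn1 hd hdn hp (expo_pos hn hp hp2 hd hdn)
    (fun k hk => IH k hk (by omega))
  obtain ⟨B', hB', HT⟩ := Tsch_Cl hn1 hd hB
  set B1 := max B' 1 with hB1
  have hB11 : 1 ≤ B1 := le_max_right _ _
  have hB10 : 0 < B1 := by linarith
  refine ⟨2 ^ (p - 1) * (B1 ^ p * (A * (2 * K0) ^ p) + ((n + 1) * B') ^ p), by positivity,
    fun a l u v ha hu huv hv hl hr δ hδ => ?_⟩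
  obtain ⟨h1, h2⟩ := HT a ha
  have hnm : ∀ j : Fin d, ‖((B1:ℂ)⁻¹) ^ (d - (j:ℕ))‖ * B1 ≤ 1 := fun j => by
    rw [norm_pow, norm_inv, Complex.norm_real, Real.norm_of_nonneg hB10.le, inv_pow,
      inv_mul_le_iff₀ (by positivity), mul_one]
    exact le_self_pow₀ hB11 (by have := j.2; omega)
  have hBB : B' ≤ B1 := le_max_left _ _
  have hBc : (B1:ℂ) ≠ 0 := by exact_mod_cast hB10.ne'
  have hadm : Adm n d 1 (fun t j => ((B1:ℂ)⁻¹) ^ (d - (j:ℕ)) * Tsch hd (a t) j)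
      (fun t => (B1:ℂ)⁻¹ * (l t - tr hd (a t))) u v := by
    refine ⟨zero_le_one, fun j => ?_, fun t ht j hj => ?_, fun t ht j => ?_, hu, huv, hv, ?_, fun t ht => ?_⟩
    · exact (((h1 j).mono hBB).wc.const_mul _).mono (hnm j)
    · simp only [Tsch_trace hd (a t) j hj, mul_zero]
    · rw [one_pow, norm_mul]
      refine le_trans ?_ (hnm j)
      gcongr
      exact ((h1 j).bound hn1 ht).trans hBB
    · refine continuousOn_const.mul (hl.sub ((h2.contOn hn1).mono (Icc_subset_Icc hu hv)))
    · rw [evalP_scale, Tsch_eval, hr t ht, mul_zero]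
  obtain ⟨k, hk⟩ := exists_pow_lt_of_lt_one hδ (by norm_num : (1 / 2 : ℝ) < 1)
  have h3 := H k δ hk.le 1 _ _ u v hadm (Or.inl hK)
  have h4 := h3.congr_const_mul (f := fun t => l t - tr hd (a t)) hB10.le (fun t => by field_simp)
  have h5 : wt K0 p 1 = (2 * K0) ^ p := by simp [wt, hK]
  rw [h5] at h4
  refine (h4.add_lip (f := l) (L := (n + 1) * B') hp (by positivity) (Icc 0 1) (Icc_subset_Icc hu hv)
    (fun s hs t ht hst => ?_)).mono ?_
  · have := h2.lip hn1 hs ht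
    rw [abs_of_nonneg (by linarith)] at this
    refine le_trans (le_of_eq ?_) this
    congr 1; ring
  · gcongr
    refine mul_le_of_le_one_right (by positivity) (by linarith)

open scoped ENNReal

theorem setL_congr_ae {g g' : ℝ → ℝ≥0∞} {A : Set ℝ} (hA : MeasurableSet A) (h : ∀ t ∈ A, g t = g' t) :
    ∫⁻ t in A, g t = ∫⁻ t in A, g' t := setLIntegral_congr_fun hA h

theorem lint_Ioc_add (g : ℝ → ℝ≥0∞) {x z y : ℝ} (h1 : x ≤ z) (h2 : z ≤ y) :
    ∫⁻ t in Ioc x y, g t = (∫⁻ t in Ioc x z, g t) + ∫⁻ t in Ioc z y, g t := by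
  rw [← Ioc_union_Ioc_eq_Ioc h1 h2, lintegral_union measurableSet_Ioc]
  rw [Set.disjoint_left]
  exact fun t ht ht' => absurd ht.2 (not_le.2 ht'.1)

theorem HasPart.density {f : ℝ → ℂ} {p δ x y B : ℝ} (hp : 1 ≤ p) (I : Set ℝ) (e : ℝ≥0∞)
    (he : ∀ s ∈ I, ∀ t ∈ I, |t - s| ≤ δ → ‖f t - f s‖ₑ ≤ e)
    (h : HasPart f p δ x y B) (hI : Icc x y ⊆ I) :
    ∃ g : ℝ → ℝ≥0∞, Measurable g ∧ ∫⁻ t in Ioc x y, g t ^ p ≤ ENNReal.ofReal B ∧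
      ‖f y - f x‖ₑ ≤ ∫⁻ t in Ioc x y, g t ∧
      (∀ t ∈ Icc x y, ‖f t - f x‖ₑ ≤ (∫⁻ r in Ioc x t, g r) + e) ∧
      (∀ t ∈ Icc x y, ‖f y - f t‖ₑ ≤ (∫⁻ r in Ioc t y, g r) + e) ∧
      (∀ s ∈ Icc x y, ∀ t ∈ Icc x y, s ≤ t → ‖f t - f s‖ₑ ≤ (∫⁻ r in Ioc s t, g r) + 2 * e) := by
  induction h with
  | @base x y B hxy hd hB =>
    have hee : ∀ s ∈ Icc x y, ∀ t ∈ Icc x y, ‖f t - f s‖ₑ ≤ e := fun s hs t ht =>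
      he s (hI hs) t (hI ht) (by rw [abs_le]; constructor <;> linarith [hs.1, hs.2, ht.1, ht.2])
    refine ⟨fun _ => ENNReal.ofReal (‖f y - f x‖ / (y - x)), measurable_const, ?_, ?_, ?_, ?_, ?_⟩
    · rw [lintegral_const, Measure.restrict_apply MeasurableSet.univ, univ_inter, Real.volume_Ioc,
        ENNReal.ofReal_rpow_of_nonneg (div_nonneg (norm_nonneg _) (by linarith)) (by linarith),
        ← ENNReal.ofReal_mul (Real.rpow_nonneg (div_nonneg (norm_nonneg _) (by linarith)) _)]
      apply ENNReal.ofReal_le_ofReal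
      refine le_trans (le_of_eq ?_) hB
      rcases hxy.eq_or_lt with rfl | hlt
      · have : (0:ℝ) ^ p = 0 := Real.zero_rpow (by linarith)
        simp [this]
      · have h0 : 0 < y - x := by linarith
        rw [Real.div_rpow (norm_nonneg _) h0.le, Real.rpow_sub h0, Real.rpow_one]
        field_simp
    · rw [lintegral_const, Measure.restrict_apply MeasurableSet.univ, univ_inter, Real.volume_Ioc,
        ← ENNReal.ofReal_mul (div_nonneg (norm_nonneg _) (by linarith)), ← ofReal_norm]
      apply ENNReal.ofReal_le_ofReal
      rcases hxy.eq_or_lt with rfl | hlt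
      · simp
      · have h0 : y - x ≠ 0 := by linarith
        rw [div_mul_cancel₀ _ h0]
    · exact fun t ht => (hee x ⟨le_rfl, hxy⟩ t ht).trans le_add_self
    · exact fun t ht => (hee t ht y ⟨hxy, le_rfl⟩).trans le_add_self
    · intro s hs t ht _
      refine (hee s hs t ht).trans (le_add_left ?_)
      rw [two_mul]; exact le_self_add
  | @glue x z y B₁ B₂ B h₁ h₂ hB ih₁ ih₂ =>
    have hxz := h₁.le
    have hzy := h₂.le
    obtain ⟨g₁, m₁, a₁, b₁, c₁, d₁, e₁⟩ := ih₁ ((Icc_subset_Icc le_rfl hzy).trans hI)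
    obtain ⟨g₂, m₂, a₂, b₂, c₂, d₂, e₂⟩ := ih₂ ((Icc_subset_Icc hxz le_rfl).trans hI)
    set g : ℝ → ℝ≥0∞ := fun t => if t ≤ z then g₁ t else g₂ t with hg
    have G1 : ∀ s t, t ≤ z → ∫⁻ r in Ioc s t, g r = ∫⁻ r in Ioc s t, g₁ r := fun s t htz =>
      setLIntegral_congr_fun measurableSet_Ioc fun r hr => by simp [hg, hr.2.trans htz]
    have G2 : ∀ s t, z ≤ s → ∫⁻ r in Ioc s t, g r = ∫⁻ r in Ioc s t, g₂ r := fun s t htz =>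
      setLIntegral_congr_fun measurableSet_Ioc fun r hr => by
        have : ¬ r ≤ z := not_le.2 (lt_of_le_of_lt htz hr.1)
        simp [hg, this]
    have tri : ∀ s t, ‖f t - f s‖ₑ ≤ ‖f z - f s‖ₑ + ‖f t - f z‖ₑ := fun s t => by
      have : f t - f s = (f z - f s) + (f t - f z) := by ring
      rw [this]; exact enorm_add_le _ _
    have Bnn : ∀ {x y B : ℝ}, HasPart f p δ x y B → 0 ≤ B := fun {x y B} h => by
      induction h with
      | base hxy _ hB => exact le_trans (mul_nonneg (by positivity) (Real.rpow_nonneg (by linarith) _)) hB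
      | glue _ _ hB i1 i2 => linarith
    refine ⟨g, Measurable.ite measurableSet_Iic m₁ m₂, ?_, ?_, ?_, ?_, ?_⟩
    · rw [lint_Ioc_add _ hxz hzy]
      refine le_trans (add_le_add ?_ ?_) (le_trans (ENNReal.ofReal_add (Bnn h₁) (Bnn h₂)).ge
        (ENNReal.ofReal_le_ofReal hB))
      · refine le_trans (le_of_eq ?_) a₁
        exact setLIntegral_congr_fun measurableSet_Ioc fun r hr => by simp [hg, hr.2]
      · refine le_trans (le_of_eq ?_) a₂
        exact setLIntegral_congr_fun measurableSet_Ioc fun r hr => by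
          have : ¬ r ≤ z := not_le.2 hr.1
          simp [hg, this]
    · rw [lint_Ioc_add _ hxz hzy, G1 _ _ le_rfl, G2 _ _ le_rfl]
      exact (tri _ _).trans (add_le_add b₁ b₂)
    · intro t ht
      rcases le_total t z with h | h
      · rw [G1 _ _ h]; exact c₁ t ⟨ht.1, h⟩
      · rw [lint_Ioc_add _ hxz h, G1 _ _ le_rfl, G2 _ _ le_rfl, add_assoc]
        exact (tri _ _).trans (add_le_add b₁ (c₂ t ⟨h, ht.2⟩))
    · intro t ht
      rcases le_total t z with h | h
      · rw [lint_Ioc_add _ h hzy, G1 _ _ le_rfl, G2 _ _ le_rfl, add_right_comm]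
        exact (tri _ _).trans (add_le_add (d₁ t ⟨ht.1, h⟩) b₂)
      · rw [G2 _ _ h]; exact d₂ t ⟨h, ht.2⟩
    · intro s hs t ht hst
      rcases le_total t z with h | h
      · rw [G1 _ _ h]; exact e₁ s ⟨hs.1, hst.trans h⟩ t ⟨ht.1, h⟩ hst
      rcases le_total s z with h' | h'
      · rw [lint_Ioc_add _ h' h, G1 _ _ le_rfl, G2 _ _ le_rfl, two_mul, add_add_add_comm]
        exact (tri _ _).trans (add_le_add (d₁ s ⟨hs.1, h'⟩) (c₂ t ⟨h, ht.2⟩))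
      · rw [G2 _ _ h']; exact e₂ s ⟨h', hs.2⟩ t ⟨h, ht.2⟩ hst

/-- uniform version -/
theorem density_seq {f : ℝ → ℂ} {p x y B : ℝ} (hp : 1 ≤ p) (hf : ContinuousOn f (Icc x y))
    (h : ∀ δ > 0, HasPart f p δ x y B) (e : ℝ) (he : 0 < e) :
    ∃ g : ℝ → ℝ≥0∞, Measurable g ∧ ∫⁻ t, g t ^ p ≤ ENNReal.ofReal B ∧
      (∀ s ∈ Icc x y, ∀ t ∈ Icc x y, s ≤ t → ‖f t - f s‖ₑ ≤ (∫⁻ r in Ioc s t, g r) + ENNReal.ofReal e) := by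
  have hu := isCompact_Icc.uniformContinuousOn_of_continuous hf
  rw [Metric.uniformContinuousOn_iff] at hu
  obtain ⟨δ, hδ, hu⟩ := hu (e / 2) (by linarith)
  obtain ⟨g, mg, a, -, -, -, b⟩ := (h (δ / 2) (by linarith)).density hp (Icc x y) (ENNReal.ofReal (e / 2))
    (fun s hs t ht hst => by
      have := hu t ht s hs (by rw [Real.dist_eq]; linarith)
      rw [dist_eq_norm] at this
      rw [← ofReal_norm]
      exact ENNReal.ofReal_le_ofReal this.le) le_rfl
  refine ⟨(Ioc x y).indicator g, mg.indicator measurableSet_Ioc, ?_, fun s hs t ht hst => ?_⟩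
  · refine le_trans (le_of_eq ?_) a
    rw [← lintegral_indicator measurableSet_Ioc]
    congr 1
    funext t
    by_cases ht : t ∈ Ioc x y
    · simp [ht]
    · simp [ht, ENNReal.zero_rpow_of_pos (by linarith : 0 < p)]
  · refine (b s hs t ht hst).trans (le_of_eq ?_)
    congr 1
    · refine setLIntegral_congr_fun measurableSet_Ioc fun r hr => ?_
      have : r ∈ Ioc x y := ⟨lt_of_le_of_lt hs.1 hr.1, hr.2.trans ht.2⟩
      simp [this]
    · rw [two_mul, ← ENNReal.ofReal_add (by linarith) (by linarith)]
      congr 1; ring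

theorem jensen_set {g : ℝ → ℝ≥0∞} (hg : Measurable g) {p : ℝ} (hp : 1 ≤ p) (A : Set ℝ) :
    (∫⁻ t in A, g t) ^ p ≤ (∫⁻ t in A, g t ^ p) * (volume A) ^ (p - 1) := by
  have h := eLpNorm'_le_eLpNorm'_mul_rpow_measure_univ (μ := volume.restrict A) (f := g) (p := 1) (q := p)
    one_pos hp hg.aestronglyMeasurable
  simp only [eLpNorm', enorm_eq_self, ENNReal.rpow_one, div_one, Measure.restrict_apply MeasurableSet.univ,
    univ_inter, one_div] at h
  have h2 := ENNReal.rpow_le_rpow h (by linarith : 0 ≤ p)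
  refine h2.trans (le_of_eq ?_)
  have hp0 : 0 < p := by linarith
  rw [ENNReal.mul_rpow_of_nonneg _ _ hp0.le, ← ENNReal.rpow_mul, ← ENNReal.rpow_mul, inv_mul_cancel₀ hp0.ne',
    ENNReal.rpow_one]
  congr 2
  field_simp

theorem ac_bound {f : ℝ → ℂ} {p x y B : ℝ} (hp : 1 ≤ p) (hB : 0 ≤ B) (hf : ContinuousOn f (Icc x y))
    (h : ∀ δ > 0, HasPart f p δ x y B) (N : ℕ) (u v : Fin N → ℝ)
    (huv : ∀ i, u i ≤ v i ∧ Icc (u i) (v i) ⊆ Icc x y)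
    (hdis : ∀ i j, i ≠ j → Disjoint (Ioo (u i) (v i)) (Ioo (u j) (v j))) :
    (∑ i, ‖f (v i) - f (u i)‖) ^ p ≤ B * (∑ i, (v i - u i)) ^ (p - 1) := by
  have hp0 : 0 < p := by linarith
  have hs0 : 0 ≤ ∑ i, (v i - u i) := Finset.sum_nonneg fun i _ => by linarith [(huv i).1]
  set Q : ℝ := B * (∑ i, (v i - u i)) ^ (p - 1) with hQ
  have hQ0 : 0 ≤ Q := by positivity
  have key : ∀ e > 0, ∑ i, ‖f (v i) - f (u i)‖ ≤ Q ^ p⁻¹ + N * e := fun e he => by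
    obtain ⟨g, mg, a, b⟩ := density_seq hp hf h e he
    have h1 : ∫⁻ t in ⋃ i, Ioo (u i) (v i), g t = ∑ i, ∫⁻ t in Ioc (u i) (v i), g t := by
      rw [lintegral_iUnion (fun i => measurableSet_Ioo) (fun i j hij => hdis i j hij), tsum_fintype]
      refine Finset.sum_congr rfl fun i _ => ?_
      rw [restrict_Ioo_eq_restrict_Ioc]
    have h2 : volume (⋃ i, Ioo (u i) (v i)) ≤ ENNReal.ofReal (∑ i, (v i - u i)) := by
      rw [ENNReal.ofReal_sum_of_nonneg (fun i _ => by linarith [(huv i).1])]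
      refine (measure_iUnion_le _).trans ?_
      rw [tsum_fintype]
      simp
    have h3 : (∫⁻ t in ⋃ i, Ioo (u i) (v i), g t) ^ p ≤ ENNReal.ofReal Q := by
      refine (jensen_set mg hp _).trans ?_
      rw [hQ, ENNReal.ofReal_mul hB, ← ENNReal.ofReal_rpow_of_nonneg hs0 (by linarith)]
      gcongr
      · exact (setLIntegral_le_lintegral _ _).trans a
    have h4 : ∫⁻ t in ⋃ i, Ioo (u i) (v i), g t ≤ ENNReal.ofReal (Q ^ p⁻¹) := by
      rw [← ENNReal.ofReal_rpow_of_nonneg hQ0 (by positivity)]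
      exact (ENNReal.le_rpow_inv_iff hp0).2 h3
    have h5 : ENNReal.ofReal (∑ i, ‖f (v i) - f (u i)‖) ≤ ENNReal.ofReal (Q ^ p⁻¹ + N * e) := by
      rw [ENNReal.ofReal_sum_of_nonneg (fun i _ => norm_nonneg _),
        ENNReal.ofReal_add (by positivity) (by positivity)]
      calc ∑ i, ENNReal.ofReal ‖f (v i) - f (u i)‖
          ≤ ∑ i, ((∫⁻ t in Ioc (u i) (v i), g t) + ENNReal.ofReal e) := by
            refine Finset.sum_le_sum fun i _ => ?_
            rw [ofReal_norm]
            exact b _ ((huv i).2 ⟨le_rfl, (huv i).1⟩) _ ((huv i).2 ⟨(huv i).1, le_rfl⟩) (huv i).1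
        _ = (∫⁻ t in ⋃ i, Ioo (u i) (v i), g t) + ENNReal.ofReal (N * e) := by
            rw [Finset.sum_add_distrib, h1]
            congr 1
            rw [ENNReal.ofReal_mul (by positivity)]
            simp
        _ ≤ _ := by gcongr
    exact (ENNReal.ofReal_le_ofReal_iff (by positivity)).1 h5
  have key2 : ∑ i, ‖f (v i) - f (u i)‖ ≤ Q ^ p⁻¹ := by
    refine le_of_forall_pos_le_add fun e he => ?_
    refine (key (e / (N + 1)) (by positivity)).trans ?_
    gcongr
    rw [mul_div_assoc', div_le_iff₀ (by positivity)]
    nlinarith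
  calc (∑ i, ‖f (v i) - f (u i)‖) ^ p ≤ (Q ^ p⁻¹) ^ p := by
        gcongr
    _ = Q := by rw [← Real.rpow_mul hQ0, inv_mul_cancel₀ hp0.ne', Real.rpow_one]

theorem avg_bound {g : ℝ → ℝ≥0∞} (hg : Measurable g) {p : ℝ} (hp : 1 ≤ p) {r : ℝ} (hr : 0 < r) :
    ∫⁻ t, ((ENNReal.ofReal r)⁻¹ * ∫⁻ s in Ioc 0 r, g (t + s)) ^ p ≤ ∫⁻ t, g t ^ p := by
  have hR0 : ENNReal.ofReal r ≠ 0 := by simpa using hr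
  have hRt : ENNReal.ofReal r ≠ ∞ := ENNReal.ofReal_ne_top
  have h1 : ∀ t, ((ENNReal.ofReal r)⁻¹ * ∫⁻ s in Ioc 0 r, g (t + s)) ^ p ≤
      (ENNReal.ofReal r)⁻¹ * ∫⁻ s in Ioc 0 r, g (t + s) ^ p := fun t => by
    rw [ENNReal.mul_rpow_of_nonneg _ _ (by linarith)]
    have := jensen_set (g := fun s => g (t + s)) (hg.comp (measurable_const_add t)) hp (Ioc 0 r)
    rw [Real.volume_Ioc, sub_zero] at this
    refine (mul_le_mul_right this _).trans (le_of_eq ?_)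
    rw [mul_comm (∫⁻ s in Ioc 0 r, g (t + s) ^ p), ← mul_assoc]
    congr 1
    rw [ENNReal.inv_rpow, ← ENNReal.rpow_neg, ← ENNReal.rpow_add _ _ hR0 hRt, ← ENNReal.rpow_neg_one]
    congr 1; ring
  refine (lintegral_mono h1).trans ?_
  have hm : Measurable fun q : ℝ × ℝ => g (q.1 + q.2) ^ p := (hg.comp measurable_add).pow_const p
  rw [lintegral_const_mul _ (Measurable.lintegral_prod_right' hm),
    lintegral_lintegral_swap hm.aemeasurable]
  have : ∀ s : ℝ, ∫⁻ t, g (t + s) ^ p = ∫⁻ t, g t ^ p := fun s =>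
    lintegral_add_right_eq_self (fun t => g t ^ p) s
  simp only [this, lintegral_const, Measure.restrict_apply MeasurableSet.univ, univ_inter, Real.volume_Ioc,
    sub_zero]
  rw [mul_comm (∫⁻ t, g t ^ p), ← mul_assoc, ENNReal.inv_mul_cancel hR0 hRt, one_mul]

theorem deriv_bound {f : ℝ → ℂ} {p x y B : ℝ} (hp : 1 ≤ p) (hf : ContinuousOn f (Icc x y))
    (h : ∀ δ > 0, HasPart f p δ x y B) :
    ∫⁻ t in Ioo x y, ‖deriv f t‖ₑ ^ p ≤ ENNReal.ofReal B := by
  have hp0 : 0 < p := by linarith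
  set r : ℕ → ℝ := fun k => 1 / ((k:ℝ) + 1) with hr
  have hr0 : ∀ k, 0 < r k := fun k => by positivity
  choose g mg hgB hgd using fun k : ℕ => density_seq hp hf h (r k ^ 2) (by have := hr0 k; positivity)
  set F : ℕ → ℝ → ℝ≥0∞ := fun k t => ((ENNReal.ofReal (r k))⁻¹ * ∫⁻ s in Ioc 0 (r k), g k (t + s)) ^ p with hF
  have mF : ∀ k, Measurable (F k) := fun k => by
    have : Measurable fun q : ℝ × ℝ => g k (q.1 + q.2) := (mg k).comp measurable_add
    exact ((Measurable.lintegral_prod_right' this).const_mul _).pow_const p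
  have hrlim : Filter.Tendsto r Filter.atTop (nhds 0) := tendsto_one_div_add_atTop_nhds_zero_nat
  have pt : ∀ t ∈ Ioo x y, ‖deriv f t‖ₑ ^ p ≤ Filter.liminf (fun k => F k t) Filter.atTop := fun t ht => by
    by_cases hd : DifferentiableAt ℝ f t
    swap
    · rw [deriv_zero_of_not_differentiableAt hd]
      simp [ENNReal.zero_rpow_of_pos hp0]
    have h1 := hd.hasDerivAt.tendsto_slope_zero_right
    have h2 : Filter.Tendsto r Filter.atTop (nhdsWithin 0 (Ioi 0)) :=
      tendsto_nhdsWithin_iff.2 ⟨hrlim, Filter.Eventually.of_forall hr0⟩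
    have h3 := (h1.comp h2).enorm
    have h4 : Filter.Tendsto (fun k => ENNReal.ofReal (r k)) Filter.atTop (nhds 0) := by
      have := ENNReal.tendsto_ofReal hrlim
      simpa using this
    have h5 := ENNReal.Tendsto.sub h3 h4 (Or.inr ENNReal.zero_ne_top)
    rw [tsub_zero] at h5
    have h6 := (ENNReal.continuous_rpow_const (y := p)).continuousAt.tendsto.comp h5
    have h6' := h6.liminf_eq
    rw [← h6']
    refine Filter.liminf_le_liminf ?_
    have h7 : ∀ᶠ k in Filter.atTop, r k < y - t := hrlim.eventually_lt_const (by linarith [ht.2])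
    filter_upwards [h7] with k hk
    simp only [Function.comp, hF]
    gcongr
    rw [tsub_le_iff_right]
    have h8 := hgd k t ⟨ht.1.le, ht.2.le⟩ (t + r k) ⟨by linarith [ht.1, hr0 k], by linarith⟩ (by linarith [hr0 k])
    have h9 : ∫⁻ s in Ioc t (t + r k), g k s = ∫⁻ s in Ioc 0 (r k), g k (t + s) := by
      rw [← lintegral_indicator measurableSet_Ioc, ← lintegral_indicator measurableSet_Ioc,
        ← lintegral_add_left_eq_self _ t]
      congr 1
      funext s
      by_cases hs : s ∈ Ioc 0 (r k)
      · have : t + s ∈ Ioc t (t + r k) := ⟨by linarith [hs.1], by linarith [hs.2]⟩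
        simp only [indicator_of_mem hs, indicator_of_mem this]
      · have : t + s ∉ Ioc t (t + r k) := fun hh => hs ⟨by linarith [hh.1], by linarith [hh.2]⟩
        simp only [indicator_of_notMem hs, indicator_of_notMem this]
    rw [h9] at h8
    have hR0 : ENNReal.ofReal (r k) ≠ 0 := by simpa using hr0 k
    have hRt : ENNReal.ofReal (r k) ≠ ∞ := ENNReal.ofReal_ne_top
    rw [enorm_smul]
    have e1 : ‖(r k)⁻¹‖ₑ = (ENNReal.ofReal (r k))⁻¹ := by
      rw [← ENNReal.ofReal_inv_of_pos (hr0 k), ← ofReal_norm, Real.norm_of_nonneg (inv_nonneg.2 (hr0 k).le)]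
    rw [e1]
    refine (mul_le_mul_right h8 _).trans ?_
    rw [mul_add, pow_two, ENNReal.ofReal_mul (hr0 k).le, ← mul_assoc, ENNReal.inv_mul_cancel hR0 hRt, one_mul]
  calc ∫⁻ t in Ioo x y, ‖deriv f t‖ₑ ^ p ≤ ∫⁻ t in Ioo x y, Filter.liminf (fun k => F k t) Filter.atTop :=
        setLIntegral_mono' measurableSet_Ioo pt
    _ ≤ ∫⁻ t, Filter.liminf (fun k => F k t) Filter.atTop := setLIntegral_le_lintegral _ _
    _ ≤ Filter.liminf (fun k => ∫⁻ t, F k t) Filter.atTop := lintegral_liminf_le mF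
    _ ≤ Filter.liminf (fun _ : ℕ => ENNReal.ofReal B) Filter.atTop := by
        refine Filter.liminf_le_liminf (Filter.Eventually.of_forall fun k => ?_)
        exact (avg_bound (mg k) hp (hr0 k)).trans (hgB k)
    _ = _ := Filter.liminf_const _

/-- Taylor polynomial -/
def tpol (c : ℕ → ℂ) (m : ℕ) (t₀ t : ℝ) : ℂ :=
  ∑ i ∈ Finset.range m, c i / (i.factorial : ℂ) * ((t - t₀ : ℝ) : ℂ) ^ i

theorem tpol_self (c : ℕ → ℂ) (m : ℕ) (t₀ : ℝ) : tpol c (m + 1) t₀ t₀ = c 0 := by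
  unfold tpol
  rw [Finset.sum_range_succ']
  simp

theorem tpol_deriv (c : ℕ → ℂ) (m : ℕ) (t₀ t : ℝ) :
    HasDerivAt (tpol c (m + 1) t₀) (tpol (fun i => c (i + 1)) m t₀ t) t := by
  have h0 : HasDerivAt (fun t : ℝ => ((t - t₀ : ℝ) : ℂ)) 1 t := by
    have := ((hasDerivAt_id t).sub_const t₀).ofReal_comp
    simpa using this
  have h1 : ∀ i ∈ Finset.range m, HasDerivAt (fun t : ℝ => c (i + 1) / ((i + 1).factorial : ℂ) * ((t - t₀ : ℝ) : ℂ) ^ (i + 1))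
      (c (i + 1) / (i.factorial : ℂ) * ((t - t₀ : ℝ) : ℂ) ^ i) t := fun i _ => by
    have := (h0.pow (i + 1)).const_mul (c (i + 1) / ((i + 1).factorial : ℂ))
    refine this.congr_deriv ?_
    have hf : (i.factorial : ℂ) ≠ 0 := by exact_mod_cast i.factorial_ne_zero
    have hi : ((i:ℂ) + 1) ≠ 0 := by exact_mod_cast i.succ_ne_zero
    rw [Nat.factorial_succ]
    push_cast
    simp only [Nat.add_sub_cancel, mul_one]
    field_simp
  have h2 := (HasDerivAt.fun_sum h1).add_const (c 0)
  refine h2.congr_of_eventuallyEq (Filter.Eventually.of_forall fun s => ?_)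
  unfold tpol
  rw [Finset.sum_range_succ']
  simp

theorem taylor_est (k : ℕ) : ∀ (D : ℕ → ℝ → ℂ) (x y L : ℝ), 0 ≤ L →
    (∀ i < k, ∀ t ∈ Icc x y, HasDerivWithinAt (D i) (D (i + 1) t) (Icc x y) t) →
    (∀ s ∈ Icc x y, ∀ t ∈ Icc x y, ‖D k s - D k t‖ ≤ L * |s - t|) →
    ∀ s ∈ Icc x y, ∀ t ∈ Icc x y, ‖D 0 t - tpol (fun i => D i s) (k + 1) s t‖ ≤ L * |t - s| ^ (k + 1) := by
  induction k with
  | zero =>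
    intro D x y L _ _ hL s hs t ht
    have := hL t ht s hs
    simpa [tpol] using this
  | succ k ih =>
    intro D x y L hL0 hD hL s hs t ht
    have h1 := ih (fun i => D (i + 1)) x y L hL0 (fun i hi t ht => hD (i + 1) (by omega) t ht) hL s hs
    have hsub : uIcc s t ⊆ Icc x y := by
      intro r hr
      exact ⟨le_trans (le_inf hs.1 ht.1) hr.1, hr.2.trans (sup_le hs.2 ht.2)⟩
    have h2 : ∀ r ∈ uIcc s t, HasDerivWithinAt (fun t => D 0 t - tpol (fun i => D i s) (k + 1 + 1) s t)
        (D 1 r - tpol (fun i => D (i + 1) s) (k + 1) s r) (uIcc s t) r := fun r hr =>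
      ((hD 0 (by omega) r (hsub hr)).mono hsub).sub (tpol_deriv _ _ _ _).hasDerivWithinAt
    have h3 := Convex.norm_image_sub_le_of_norm_hasDerivWithin_le (C := L * |t - s| ^ (k + 1)) h2 (fun r hr => by
      refine (h1 r (hsub hr)).trans ?_
      have : |r - s| ≤ |t - s| := by
        rw [abs_sub_comm t s]
        exact (abs_sub_left_of_mem_uIcc hr).trans (abs_sub_comm _ _).le
      gcongr) (convex_uIcc s t) left_mem_uIcc right_mem_uIcc
    have e0 : tpol (fun i => D i s) (k + 1 + 1) s s = D 0 s := tpol_self _ _ _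
    rw [e0, sub_self, sub_zero, Real.norm_eq_abs] at h3
    rw [pow_succ, ← mul_assoc]
    exact h3

theorem ext_chain (k : ℕ) (d : ℕ → ℝ → ℂ) (α β K : ℝ) (hαβ : α < β)
    (hd : ∀ i < k, ∀ t ∈ Icc α β, HasDerivWithinAt (d i) (d (i + 1) t) (Icc α β) t)
    (hK : ∀ i ≤ k, ∀ t ∈ Icc α β, ‖d i t‖ ≤ K)
    (hL : ∀ s ∈ Icc α β, ∀ t ∈ Icc α β, ‖d k s - d k t‖ ≤ K * |s - t|) :
    ∃ D : ℕ → ℝ → ℂ, (∀ t ∈ Icc α β, D 0 t = d 0 t) ∧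
      (∀ i < k, ∀ t ∈ Icc α (β + 1), HasDerivWithinAt (D i) (D (i + 1) t) (Icc α (β + 1)) t) ∧
      (∀ i ≤ k, ∀ t ∈ Icc α (β + 1), ‖D i t‖ ≤ (k + 1) * K) ∧
      (∀ s ∈ Icc α (β + 1), ∀ t ∈ Icc α (β + 1), ‖D k s - D k t‖ ≤ K * |s - t|) := by
  have hβ : β ∈ Icc α β := ⟨hαβ.le, le_rfl⟩
  have hK0 : 0 ≤ K := (norm_nonneg _).trans (hK 0 (by omega) β hβ)
  set P : ℕ → ℝ → ℂ := fun i t => tpol (fun m => d (i + m) β) (k + 1 - i) β t with hP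
  set D : ℕ → ℝ → ℂ := fun i t => if t ≤ β then d i t else P i t with hD
  have hPβ : ∀ i ≤ k, P i β = d i β := fun i hi => by
    simp only [hP]
    rw [show k + 1 - i = (k - i) + 1 by omega, tpol_self]; simp
  have hDl : ∀ i, ∀ t ≤ β, D i t = d i t := fun i t ht => by simp [hD, ht]
  have hDr : ∀ i ≤ k, ∀ t, β ≤ t → D i t = P i t := fun i hi t ht => by
    rcases ht.eq_or_lt with rfl | h
    · rw [hDl _ _ le_rfl, hPβ i hi]
    · simp [hD, not_le.2 h]
  have hPd : ∀ i < k, ∀ t, HasDerivAt (P i) (P (i + 1) t) t := fun i hi t => by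
    have := tpol_deriv (fun m => d (i + m) β) (k - i) β t
    simp only [hP]
    rw [show k + 1 - i = (k - i) + 1 by omega, show k + 1 - (i + 1) = k - i by omega]
    convert this using 3
    ring_nf
  have hPk : ∀ t, P k t = d k β := fun t => by simp [hP, tpol]
  have hDk : ∀ t, D k t = d k (min t β) := fun t => by
    rcases le_total t β with h | h
    · rw [hDl _ _ h, min_eq_left h]
    · rw [hDr k le_rfl _ h, min_eq_right h, hPk]
  refine ⟨D, fun t ht => hDl 0 t ht.2, fun i hi t ht => ?_, fun i hi t ht => ?_, fun s hs t ht => ?_⟩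
  · rw [← Icc_union_Icc_eq_Icc hαβ.le (by linarith : β ≤ β + 1)]
    apply HasDerivWithinAt.union
    · by_cases h : t ≤ β
      · rw [hDl (i + 1) t h]
        exact (hd i hi t ⟨ht.1, h⟩).congr (fun s hs => hDl i s hs.2) (hDl i t h)
      · exact HasFDerivWithinAt.of_notMem_closure (by rw [isClosed_Icc.closure_eq]; exact fun hh => h hh.2)
    · by_cases h : β ≤ t
      · rw [hDr (i + 1) hi t h]
        exact (hPd i hi t).hasDerivWithinAt.congr (fun s hs => hDr i hi.le s hs.1) (hDr i hi.le t h)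
      · exact HasFDerivWithinAt.of_notMem_closure (by rw [isClosed_Icc.closure_eq]; exact fun hh => h hh.1)
  · rcases le_total t β with h | h
    · rw [hDl i t h]
      refine (hK i hi t ⟨ht.1, h⟩).trans ?_
      have : (0:ℝ) ≤ k := by positivity
      nlinarith
    · rw [hDr i hi t h]
      simp only [hP, tpol]
      refine (norm_sum_le _ _).trans ?_
      have : ∀ m ∈ Finset.range (k + 1 - i), ‖d (i + m) β / (m.factorial : ℂ) * ((t - β : ℝ) : ℂ) ^ m‖ ≤ K := fun m hm => by
        have hm' := Finset.mem_range.1 hm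
        rw [norm_mul, norm_div, norm_pow, Complex.norm_real, Complex.norm_natCast, Real.norm_eq_abs]
        have h1 : (1:ℝ) ≤ m.factorial := by exact_mod_cast m.factorial_pos
        have h2 := hK (i + m) (by omega) β hβ
        have h3 : |t - β| ^ m ≤ 1 := pow_le_one₀ (abs_nonneg _) (by rw [abs_of_nonneg (by linarith)]; linarith [ht.2])
        calc ‖d (i + m) β‖ / m.factorial * |t - β| ^ m ≤ ‖d (i + m) β‖ / m.factorial * 1 := by gcongr
          _ ≤ ‖d (i + m) β‖ := by rw [mul_one]; exact div_le_self (norm_nonneg _) h1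
          _ ≤ K := h2
      refine (Finset.sum_le_sum this).trans ?_
      rw [Finset.sum_const, Finset.card_range, nsmul_eq_mul]
      gcongr
      exact_mod_cast Nat.sub_le (k + 1) i
  · rw [hDk, hDk]
    refine (hL _ ⟨le_min hs.1 hαβ.le, min_le_right _ _⟩ _ ⟨le_min ht.1 hαβ.le, min_le_right _ _⟩).trans ?_
    exact mul_le_mul_of_nonneg_left (by simpa using abs_min_sub_min_le_max s β t β) hK0

theorem chain_Cl (k : ℕ) (d : ℕ → ℝ → ℂ) (α β K : ℝ) (hαβ : α < β)
    (hd : ∀ i < k, ∀ t ∈ Icc α β, HasDerivWithinAt (d i) (d (i + 1) t) (Icc α β) t)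
    (hK : ∀ i ≤ k, ∀ t ∈ Icc α β, ‖d i t‖ ≤ K)
    (hL : ∀ s ∈ Icc α β, ∀ t ∈ Icc α β, ‖d k s - d k t‖ ≤ K * |s - t|) :
    ∃ D : ℝ → ℂ, (∀ t ∈ Icc α β, D t = d 0 t) ∧
      ∀ x, α ≤ x → x ≤ β → Cl (k + 1) ((k + 1) * K) (fun s => D (x + s)) := by
  obtain ⟨D, h1, h2, h3, h4⟩ := ext_chain k d α β K hαβ hd hK hL
  have hβ : β ∈ Icc α β := ⟨hαβ.le, le_rfl⟩
  have hK0 : 0 ≤ K := (norm_nonneg _).trans (hK 0 (by omega) β hβ)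
  have hk0 : (0:ℝ) ≤ k := by positivity
  refine ⟨D 0, h1, fun x hx hxβ t₀ ht₀ => ?_⟩
  have hm : ∀ t ∈ Icc (0:ℝ) 1, x + t ∈ Icc α (β + 1) := fun t ht =>
    ⟨by linarith [ht.1], by linarith [ht.2]⟩
  refine ⟨fun i => if i ≤ k then D i (x + t₀) / (i.factorial : ℂ) else 0, fun i => ?_, fun t ht => ?_⟩
  · dsimp only
    split_ifs with hi
    · rw [norm_div, Complex.norm_natCast]
      have h1 : (1:ℝ) ≤ i.factorial := by exact_mod_cast i.factorial_pos
      exact (div_le_self (norm_nonneg _) h1).trans (h3 i hi _ (hm _ ht₀))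
    · rw [norm_zero]; positivity
  · have := taylor_est k D α (β + 1) K hK0 h2 h4 _ (hm _ ht₀) _ (hm _ ht)
    rw [show x + t - (x + t₀) = t - t₀ by ring] at this
    refine le_trans (le_trans (le_of_eq ?_) this) ?_
    · congr 2
      unfold tp tpol
      refine Finset.sum_congr rfl fun i hi => ?_
      dsimp only
      rw [if_pos (by have := Finset.mem_range.1 hi; omega), show x + t - (x + t₀) = t - t₀ by ring]
    · gcongr
      nlinarith

theorem sum_reindex (n : ℕ) (c : ℕ → ℂ) (z : ℂ) :
    ∑ i : Fin n, c (n - (i:ℕ)) * z ^ (i:ℕ) = ∑ j ∈ Finset.Icc 1 n, c j * z ^ (n - j) := by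
  rw [Fin.sum_univ_eq_sum_range (fun i => c (n - i) * z ^ i) n]
  refine Finset.sum_nbij' (fun i => n - i) (fun j => n - j) ?_ ?_ ?_ ?_ ?_
  · intro i hi; have := Finset.mem_range.1 hi; rw [Finset.mem_Icc]; omega
  · intro j hj; have := Finset.mem_Icc.1 hj; rw [Finset.mem_range]; omega
  · intro i hi; have := Finset.mem_range.1 hi; omega
  · intro j hj; have := Finset.mem_Icc.1 hj; omega
  · intro i hi
    have := Finset.mem_range.1 hi
    rw [show n - (n - i) = i by omega]

theorem total_part {n : ℕ} (hn : 2 ≤ n) {p : ℝ} (hp : 1 ≤ p) (hp2 : p < (n:ℝ) / ((n:ℝ) - 1)) :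
    ∃ A : ℝ, 0 ≤ A ∧ ∀ (α β : ℝ), α < β → ∀ (d : ℕ → ℕ → ℝ → ℂ) (S : ℝ), 0 < S →
      (∀ j ∈ Finset.Icc 1 n, (∀ i < n - 1, ∀ t ∈ Icc α β, HasDerivWithinAt (d j i) (d j (i + 1) t) (Icc α β) t) ∧
        (∀ i ≤ n - 1, ∀ t ∈ Icc α β, ‖d j i t‖ ≤ S ^ j) ∧
        (∀ s ∈ Icc α β, ∀ t ∈ Icc α β, ‖d j (n - 1) s - d j (n - 1) t‖ ≤ S ^ j * |s - t|)) →
      ∀ l : ℝ → ℂ, ContinuousOn l (Ioo α β) →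
      (∀ t ∈ Ioo α β, l t ^ n + ∑ j ∈ Finset.Icc 1 n, d j 0 t * l t ^ (n - j) = 0) →
      ∀ x y, α < x → x ≤ y → y < β → ∀ δ > 0, HasPart l p δ x y (S ^ p * (2 * max 1 (β - α) * A)) := by
  obtain ⟨A, hA, H⟩ := core hn hp hp2 n le_rfl (n : ℝ) (by positivity)
  refine ⟨A, hA, fun α β hαβ d S hS hd l hl hr x y hx hxy hy δ hδ => ?_⟩
  have hSc : (S:ℂ) ≠ 0 := by exact_mod_cast hS.ne'
  have hch : ∀ i : Fin n, ∃ D : ℝ → ℂ, (∀ t ∈ Icc α β, D t = ((S:ℂ)⁻¹) ^ (n - (i:ℕ)) * d (n - (i:ℕ)) 0 t) ∧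
      ∀ x, α ≤ x → x ≤ β → Cl n n (fun s => D (x + s)) := fun i => by
    have hi := i.2
    obtain ⟨h1, h2, h3⟩ := hd (n - (i:ℕ)) (by rw [Finset.mem_Icc]; omega)
    have hnm : ‖((S:ℂ)⁻¹) ^ (n - (i:ℕ))‖ = (S ^ (n - (i:ℕ)))⁻¹ := by
      rw [norm_pow, norm_inv, Complex.norm_real, Real.norm_of_nonneg hS.le, inv_pow]
    have := chain_Cl (n - 1) (fun m t => ((S:ℂ)⁻¹) ^ (n - (i:ℕ)) * d (n - (i:ℕ)) m t) α β 1 hαβ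
      (fun m hm t ht => (h1 m hm t ht).const_mul _) (fun m hm t ht => by
        rw [norm_mul, hnm, inv_mul_le_iff₀ (by positivity), mul_one]
        exact h2 m hm t ht) (fun s hs t ht => by
        rw [← mul_sub, norm_mul, hnm, inv_mul_le_iff₀ (by positivity), one_mul]
        exact h3 s hs t ht)
    have e : n - 1 + 1 = n := by omega
    have e' : (((n - 1 : ℕ) : ℝ) + 1) * 1 = n := by rw [mul_one]; exact_mod_cast e
    rw [e, e'] at this
    exact this
  choose D hD hDcl using hch
  set N := ⌈β - α⌉₊ with hN
  have hNle : β - α ≤ N := Nat.le_ceil _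
  set c : ℕ → ℝ := fun k => max x (min y (α + k)) with hc
  have hc0 : c 0 = x := by
    simp only [hc]; push_cast; rw [add_zero]
    exact max_eq_left ((min_le_right _ _).trans hx.le)
  have hcN : c N = y := by
    simp only [hc]; rw [min_eq_left (by linarith), max_eq_right hxy]
  have hpiece : ∀ k < N, HasPart (fun t => (S:ℂ)⁻¹ * l t) p δ (c k) (c (k + 1)) A := fun k hk => by
    have hkl : (k:ℝ) < β - α := Nat.lt_ceil.1 hk
    have hk0 : (0:ℝ) ≤ k := by positivity
    by_cases h1 : y < α + k
    · have e1 : c k = y := by simp only [hc]; rw [min_eq_left h1.le, max_eq_right hxy]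
      have e2 : c (k + 1) = y := by
        simp only [hc]; push_cast; rw [min_eq_left (by linarith), max_eq_right hxy]
      rw [e1, e2]
      exact (HasPart.refl hp hδ.le).mono hA
    by_cases h2 : α + k + 1 < x
    · have e1 : c k = x := by simp only [hc]; exact max_eq_left ((min_le_right _ _).trans (by linarith))
      have e2 : c (k + 1) = x := by
        simp only [hc]; push_cast; exact max_eq_left ((min_le_right _ _).trans (by linarith))
      rw [e1, e2]
      exact (HasPart.refl hp hδ.le).mono hA
    push Not at h1 h2
    have hu : α + k ≤ c k := by simp only [hc]; rw [min_eq_right h1]; exact le_max_right _ _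
    have hv : c (k + 1) ≤ α + k + 1 := by
      simp only [hc]; push_cast
      exact max_le h2 ((min_le_right _ _).trans (by linarith))
    have hcc : c k ≤ c (k + 1) := by
      simp only [hc]; gcongr; norm_num
    have hxc : x ≤ c k := le_max_left _ _
    have hcy : c (k + 1) ≤ y := max_le hxy (min_le_left _ _)
    have hmem : ∀ s ∈ Icc (c k - (α + k)) (c (k + 1) - (α + k)), α + k + s ∈ Ioo α β := fun s hs =>
      ⟨by linarith [hs.1], by linarith [hs.2]⟩
    have h3 := H (fun s i => D i (α + k + s)) (fun s => (S:ℂ)⁻¹ * l (α + k + s)) (c k - (α + k))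
      (c (k + 1) - (α + k)) (fun i => hDcl i (α + k) (by linarith) (by linarith)) (by linarith) (by linarith)
      (by linarith) (continuousOn_const.mul (hl.comp (by fun_prop) hmem)) (fun s hs => by
        have h4 := hmem s hs
        have e : (fun i => D i (α + k + s)) = fun i : Fin n => ((S:ℂ)⁻¹) ^ (n - (i:ℕ)) * d (n - (i:ℕ)) 0 (α + k + s) := by
          funext i; exact hD i _ ⟨h4.1.le, h4.2.le⟩
        rw [e, evalP_scale (fun i : Fin n => d (n - (i:ℕ)) 0 (α + k + s))]
        have : evalP (fun i : Fin n => d (n - (i:ℕ)) 0 (α + k + s)) (l (α + k + s)) = 0 := by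
          unfold evalP
          rw [sum_reindex n (fun j => d j 0 (α + k + s))]
          exact hr _ h4
        rw [this, mul_zero]) δ hδ
    have h5 := h3.scale (f := fun t => (S:ℂ)⁻¹ * l t) (m := 1) (r := 1) (s := α + k) zero_le_one one_pos
      (fun t => by simp)
    simp only [one_mul, Real.one_rpow, add_sub_cancel] at h5
    exact h5
  have hit := HasPart.iter hp hδ.le c (fun _ => A) N hpiece
  rw [hc0, hcN] at hit
  have := hit.congr_const_mul (f := l) hS.le (fun t => by field_simp)
  refine this.mono ?_
  rw [Finset.sum_const, Finset.card_range, nsmul_eq_mul]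
  gcongr
  have h1 := Nat.ceil_lt_add_one (by linarith : 0 ≤ β - α)
  have h2 := le_max_left 1 (β - α)
  have h3 := le_max_right 1 (β - α)
  linarith

theorem CNorm_props {d : ℕ → ℝ → ℂ} {k : ℕ} {α β : ℝ} (hαβ : α < β) (h : MemCk1 d k (Icc α β)) :
    0 ≤ CNorm d k (Icc α β) ∧ (∀ i ≤ k, ∀ t ∈ Icc α β, ‖d i t‖ ≤ CNorm d k (Icc α β)) ∧
    (∀ s ∈ Icc α β, ∀ t ∈ Icc α β, ‖d k s - d k t‖ ≤ CNorm d k (Icc α β) * |s - t|) := by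
  obtain ⟨hch, L, hL⟩ := h
  have hα : α ∈ Icc α β := ⟨le_rfl, hαβ.le⟩
  have hcont : ∀ i ≤ k, ContinuousOn (d i) (Icc α β) := fun i hi => by
    rcases hi.eq_or_lt with rfl | hi
    · have : LipschitzOnWith (Real.toNNReal L) (d i) (Icc α β) := by
        refine LipschitzOnWith.of_dist_le_mul fun s hs t ht => ?_
        rw [dist_eq_norm, Real.dist_eq]
        refine (hL s hs t ht).trans ?_
        gcongr
        exact Real.le_coe_toNNReal L
      exact this.continuousOn
    · exact fun t ht => (hch i hi t ht).continuousWithinAt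
  have hbd : ∀ i, ∃ C : ℝ, 0 ≤ C ∧ (i ≤ k → ∀ t ∈ Icc α β, ‖d i t‖ ≤ C) := fun i => by
    by_cases hi : i ≤ k
    · obtain ⟨C, hC⟩ := isCompact_Icc.exists_bound_of_continuousOn (hcont i hi)
      exact ⟨C, (norm_nonneg _).trans (hC α hα), fun _ => hC⟩
    · exact ⟨0, le_rfl, fun h => absurd h hi⟩
  choose C hC0 hC using hbd
  have b1 : BddAbove {r : ℝ | ∃ i ≤ k, ∃ x ∈ Icc α β, r = ‖d i x‖} := by
    refine ⟨∑ i ∈ Finset.range (k + 1), C i, ?_⟩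
    rintro r ⟨i, hi, x, hx, rfl⟩
    exact (hC i hi x hx).trans (Finset.single_le_sum (f := C) (fun i _ => hC0 i) (by simp; omega))
  have b2 : BddAbove {r : ℝ | ∃ x ∈ Icc α β, ∃ y ∈ Icc α β, x ≠ y ∧ r = ‖d k x - d k y‖ / |x - y| ^ (1:ℝ)} := by
    refine ⟨L, ?_⟩
    rintro r ⟨x, hx, y, hy, hxy, rfl⟩
    have : 0 < |x - y| := abs_pos.2 (sub_ne_zero.2 hxy)
    rw [Real.rpow_one, div_le_iff₀ this]
    exact hL x hx y hy
  have n2 : 0 ≤ HolderConst 1 (Icc α β) (d k) := by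
    refine Real.sSup_nonneg ?_
    rintro r ⟨x, hx, y, hy, hxy, rfl⟩
    positivity
  have n1 : 0 ≤ sSup {r : ℝ | ∃ i ≤ k, ∃ x ∈ Icc α β, r = ‖d i x‖} := by
    refine Real.sSup_nonneg ?_
    rintro r ⟨i, hi, x, hx, rfl⟩
    positivity
  refine ⟨add_nonneg n1 n2, fun i hi t ht => ?_, fun s hs t ht => ?_⟩
  · have := le_csSup b1 ⟨i, hi, t, ht, rfl⟩
    unfold CNorm
    linarith
  · by_cases hst : s = t
    · simp [hst]
    · have h1 : 0 < |s - t| := abs_pos.2 (sub_ne_zero.2 hst)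
      have := le_csSup b2 ⟨s, hs, t, ht, hst, rfl⟩
      rw [Real.rpow_one, div_le_iff₀ h1] at this
      refine this.trans ?_
      gcongr
      unfold CNorm HolderConst
      linarith

theorem absCont_of_part {l : ℝ → ℂ} {α β q B : ℝ} (hq : 1 < q) (hB : 0 ≤ B) (hl : ContinuousOn l (Ioo α β))
    (hαβ : α < β) (h : ∀ x y, α < x → x ≤ y → y < β → ∀ δ > 0, HasPart l q δ x y B) : AbsContOn l (Ioo α β) := by
  intro ε hε
  have hq1 : 0 < q - 1 := by linarith
  have hq0 : 0 < q := by linarith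
  have hb : 0 < ε ^ q / (B + 1) := by positivity
  refine ⟨(ε ^ q / (B + 1)) ^ (q - 1)⁻¹, by positivity, fun N u v huv hdis hsum => ?_⟩
  have h0 : 0 ≤ ∑ i, (v i - u i) := Finset.sum_nonneg fun i _ => by linarith [(huv i).1]
  obtain ⟨x, y, hx, hxy, hy, hin⟩ : ∃ x y, α < x ∧ x ≤ y ∧ y < β ∧ ∀ i, x ≤ u i ∧ v i ≤ y := by
    have e1 : ∀ᶠ x in nhdsWithin α (Ioi α), ∀ i, x < u i := Filter.eventually_all.2 fun i =>
      Filter.Eventually.filter_mono nhdsWithin_le_nhds (eventually_lt_nhds ((huv i).2 ⟨le_rfl, (huv i).1⟩).1)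
    have e2 : ∀ᶠ y in nhdsWithin β (Iio β), ∀ i, v i < y := Filter.eventually_all.2 fun i =>
      Filter.Eventually.filter_mono nhdsWithin_le_nhds (eventually_gt_nhds ((huv i).2 ⟨(huv i).1, le_rfl⟩).2)
    have e3 : ∀ᶠ x in nhdsWithin α (Ioi α), x < (α + β) / 2 :=
      Filter.Eventually.filter_mono nhdsWithin_le_nhds (eventually_lt_nhds (by linarith))
    have e4 : ∀ᶠ y in nhdsWithin β (Iio β), (α + β) / 2 < y :=
      Filter.Eventually.filter_mono nhdsWithin_le_nhds (eventually_gt_nhds (by linarith))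
    obtain ⟨x, ⟨a1, a2⟩, a3⟩ := ((e1.and e3).and self_mem_nhdsWithin).exists
    obtain ⟨y, ⟨b1, b2⟩, b3⟩ := ((e2.and e4).and self_mem_nhdsWithin).exists
    exact ⟨x, y, a3, by linarith, b3, fun i => ⟨(a1 i).le, (b1 i).le⟩⟩
  have key := ac_bound hq.le hB (hl.mono (Icc_subset_Ioo hx hy)) (h x y hx hxy hy) N u v
    (fun i => ⟨(huv i).1, Icc_subset_Icc (hin i).1 (hin i).2⟩) hdis
  have h1 : (∑ i, (v i - u i)) ^ (q - 1) ≤ ε ^ q / (B + 1) := by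
    calc (∑ i, (v i - u i)) ^ (q - 1) ≤ ((ε ^ q / (B + 1)) ^ (q - 1)⁻¹) ^ (q - 1) := by gcongr
      _ = _ := by rw [← Real.rpow_mul hb.le, inv_mul_cancel₀ hq1.ne', Real.rpow_one]
  have h2 : (∑ i, ‖l (v i) - l (u i)‖) ^ q < ε ^ q := by
    refine key.trans_lt ?_
    refine (mul_le_mul_of_nonneg_left h1 hB).trans_lt ?_
    rw [mul_div_assoc', div_lt_iff₀ (by linarith)]
    have : 0 < ε ^ q := by positivity
    nlinarith
  exact lt_of_not_ge fun hge => absurd h2 (not_lt.2 (Real.rpow_le_rpow hε.le hge hq0.le))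

theorem lint_of_part {l : ℝ → ℂ} {α β p B : ℝ} (hp : 1 ≤ p) (hl : ContinuousOn l (Ioo α β))
    (hαβ : α < β) (h : ∀ x y, α < x → x ≤ y → y < β → ∀ δ > 0, HasPart l p δ x y B) :
    ∫⁻ t in Ioo α β, ‖deriv l t‖ₑ ^ p ≤ ENNReal.ofReal B := by
  set r : ℕ → ℝ := fun k => (β - α) / ((k:ℝ) + 3) with hr
  have hr0 : ∀ k, 0 < r k := fun k => div_pos (by linarith) (by positivity)
  have hr3 : ∀ k, r k ≤ (β - α) / 3 := fun k => by
    have : (0:ℝ) ≤ k := by positivity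
    simp only [hr]
    exact div_le_div_of_nonneg_left (by linarith) (by norm_num) (by linarith)
  have hanti : ∀ j k, j ≤ k → r k ≤ r j := fun j k hjk => by
    have : (j:ℝ) ≤ k := by exact_mod_cast hjk
    simp only [hr]
    exact div_le_div_of_nonneg_left (by linarith) (by positivity) (by linarith)
  have hU : Ioo α β = ⋃ k, Ioo (α + r k) (β - r k) := by
    apply Subset.antisymm
    · intro t ht
      have hlim : Filter.Tendsto r Filter.atTop (nhds 0) := by
        have h1 : Filter.Tendsto (fun k : ℕ => (k:ℝ) + 3) Filter.atTop Filter.atTop :=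
          Filter.tendsto_atTop_add_const_right _ _ tendsto_natCast_atTop_atTop
        exact h1.const_div_atTop _
      obtain ⟨k, h1, h2⟩ := ((hlim.eventually_lt_const (by linarith [ht.1] : 0 < t - α)).and
        (hlim.eventually_lt_const (by linarith [ht.2] : 0 < β - t))).exists
      exact mem_iUnion.2 ⟨k, by linarith, by linarith⟩
    · exact iUnion_subset fun k => Ioo_subset_Ioo (by linarith [hr0 k]) (by linarith [hr0 k])
  rw [hU, setLIntegral_iUnion_of_directed]
  · refine iSup_le fun k => ?_
    have h1 := hr0 k
    have h2 := hr3 k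
    exact deriv_bound hp (hl.mono (Icc_subset_Ioo (by linarith) (by linarith)))
      (h (α + r k) (β - r k) (by linarith) (by linarith) (by linarith))
  · refine directed_of_isDirected_le fun j k hjk => ?_
    have := hanti j k hjk
    exact Ioo_subset_Ioo (by linarith) (by linarith)

theorem root_main
    (n : ℕ) (hn : 2 ≤ n) (p : ℝ) (hp1 : 1 ≤ p)
    (hp2 : p < (n : ℝ) / ((n : ℝ) - 1))
    (hne : (Finset.Icc 1 n).Nonempty) :
    ∃ C : ℝ, 0 < C ∧
      ∀ (α β : ℝ), α < β →
      ∀ d : ℕ → ℕ → ℝ → ℂ,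
      (∀ j ∈ Finset.Icc 1 n, MemCk1 (d j) (n - 1) (Icc α β)) →
      ∀ l : ℝ → ℂ, ContinuousOn l (Ioo α β) →
      (∀ t ∈ Ioo α β, l t ^ n + ∑ j ∈ Finset.Icc 1 n, d j 0 t * l t ^ (n - j) = 0) →
      AbsContOn l (Ioo α β) ∧
      IntegrableOn (fun t => ‖deriv l t‖ ^ p) (Ioo α β) volume ∧
      (∫ t in Ioo α β, ‖deriv l t‖ ^ p) ^ (1 / p) ≤
        C * max 1 ((β - α) ^ (1 / p)) *
          (Finset.Icc 1 n).sup' hne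
            (fun j => CNorm (d j) (n - 1) (Icc α β) ^ ((j : ℝ)⁻¹)) := by
  have hn' : (2:ℝ) ≤ n := by exact_mod_cast hn
  have hp0 : 0 < p := by linarith
  obtain ⟨A, hA, H⟩ := total_part hn hp1 hp2
  obtain ⟨q, hq1, hq2⟩ := exists_between (show (1:ℝ) < (n:ℝ) / ((n:ℝ) - 1) by
    rw [lt_div_iff₀ (by linarith)]; linarith)
  obtain ⟨A', hA', H'⟩ := total_part hn hq1.le hq2
  refine ⟨(2 * A) ^ (1 / p) + 1, by positivity, fun α β hαβ d hd l hl hr => ?_⟩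
  set S0 := (Finset.Icc 1 n).sup' hne
            (fun j => CNorm (d j) (n - 1) (Icc α β) ^ ((j : ℝ)⁻¹)) with hS0
  have hle : ∀ j ∈ Finset.Icc 1 n, CNorm (d j) (n - 1) (Icc α β) ^ ((j : ℝ)⁻¹) ≤ S0 := fun j hj =>
    Finset.le_sup' (fun j => CNorm (d j) (n - 1) (Icc α β) ^ ((j : ℝ)⁻¹)) hj
  have hCN := fun j hj => CNorm_props hαβ (hd j hj)
  have hS00 : 0 ≤ S0 := by
    have h1 : 1 ∈ Finset.Icc 1 n := by rw [Finset.mem_Icc]; omega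
    exact (Real.rpow_nonneg (hCN 1 h1).1 _).trans (hle 1 h1)
  have hdat : ∀ S, S0 < S → 0 < S ∧ (∀ j ∈ Finset.Icc 1 n, (∀ i < n - 1, ∀ t ∈ Icc α β, HasDerivWithinAt (d j i) (d j (i + 1) t) (Icc α β) t) ∧
        (∀ i ≤ n - 1, ∀ t ∈ Icc α β, ‖d j i t‖ ≤ S ^ j) ∧
        (∀ s ∈ Icc α β, ∀ t ∈ Icc α β, ‖d j (n - 1) s - d j (n - 1) t‖ ≤ S ^ j * |s - t|)) := fun S hS => by
    refine ⟨by linarith, fun j hj => ?_⟩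
    have hj0 : j ≠ 0 := by have := Finset.mem_Icc.1 hj; omega
    obtain ⟨c0, c1, c2⟩ := hCN j hj
    have hc : CNorm (d j) (n - 1) (Icc α β) ≤ S ^ j := by
      rw [← Real.rpow_inv_natCast_pow c0 hj0]
      have := hle j hj
      gcongr
      linarith
    refine ⟨(hd j hj).1, fun i hi t ht => (c1 i hi t ht).trans hc, fun s hs t ht => (c2 s hs t ht).trans ?_⟩
    gcongr
  have hm1 : 1 ≤ max 1 (β - α) := le_max_left _ _
  have hm0 : 0 < max 1 (β - α) := by linarith
  have hlint : ∀ S, S0 < S → ∫⁻ t in Ioo α β, ‖deriv l t‖ₑ ^ p ≤ ENNReal.ofReal (S ^ p * (2 * max 1 (β - α) * A)) :=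
    fun S hS => lint_of_part hp1 hl hαβ
      (H α β hαβ d S (hdat S hS).1 (hdat S hS).2 l hl hr)
  have hmeas : Measurable fun t => ‖deriv l t‖ ^ p := (measurable_deriv l).norm.pow_const p
  have henorm : ∀ t, ‖(‖deriv l t‖ ^ p : ℝ)‖ₑ = ‖deriv l t‖ₑ ^ p := fun t => by
    rw [← ofReal_norm, Real.norm_of_nonneg (by positivity),
      ← ENNReal.ofReal_rpow_of_nonneg (norm_nonneg _) hp0.le, ofReal_norm]
  refine ⟨?_, ?_, ?_⟩
  · have hS : S0 < S0 + 1 := by linarith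
    refine absCont_of_part hq1 ?_ hl hαβ (H' α β hαβ d (S0 + 1) (hdat _ hS).1 (hdat _ hS).2 l hl hr)
    positivity
  · refine ⟨hmeas.aestronglyMeasurable, ?_⟩
    unfold HasFiniteIntegral
    simp only [henorm]
    exact (hlint (S0 + 1) (by linarith)).trans_lt ENNReal.ofReal_lt_top
  · have hI : ∀ S, S0 < S → ∫ t in Ioo α β, ‖deriv l t‖ ^ p ≤ S ^ p * (2 * max 1 (β - α) * A) := fun S hS => by
      have hSp := (hdat S hS).1
      rw [integral_eq_lintegral_of_nonneg_ae (Filter.Eventually.of_forall fun t => by positivity)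
        hmeas.aestronglyMeasurable]
      refine ENNReal.toReal_le_of_le_ofReal (by positivity) ?_
      refine le_trans (le_of_eq ?_) (hlint S hS)
      refine lintegral_congr fun t => ?_
      rw [← ENNReal.ofReal_rpow_of_nonneg (norm_nonneg _) hp0.le, ofReal_norm]
    have hI0 : 0 ≤ ∫ t in Ioo α β, ‖deriv l t‖ ^ p := integral_nonneg fun t => by positivity
    have hmax : (max 1 (β - α)) ^ (1 / p) ≤ max 1 ((β - α) ^ (1 / p)) := by
      rcases le_total 1 (β - α) with h | h
      · rw [max_eq_right h]; exact le_max_right _ _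
      · rw [max_eq_left h, Real.one_rpow]; exact le_max_left _ _
    set m := max 1 ((β - α) ^ (1 / p)) with hm
    have hm1' : 1 ≤ m := le_max_left _ _
    set C := (2 * A) ^ (1 / p) + 1 with hC
    have hC1 : 0 < C := by positivity
    have hfin : ∀ S, S0 < S → (∫ t in Ioo α β, ‖deriv l t‖ ^ p) ^ (1 / p) ≤ C * m * S := fun S hS => by
      have hSp := (hdat S hS).1
      calc (∫ t in Ioo α β, ‖deriv l t‖ ^ p) ^ (1 / p) ≤ (S ^ p * (2 * max 1 (β - α) * A)) ^ (1 / p) := by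
            have := hI S hS
            gcongr
        _ = S * ((2 * A) ^ (1 / p) * (max 1 (β - α)) ^ (1 / p)) := by
            rw [Real.mul_rpow (by positivity) (by positivity), ← Real.rpow_mul hSp.le, mul_one_div_cancel hp0.ne',
              Real.rpow_one, ← Real.mul_rpow (by positivity) (by positivity)]
            congr 2; ring
        _ ≤ S * (C * m) := by
            gcongr
            rw [hC]; linarith
        _ = _ := by ring
    refine le_of_forall_pos_le_add fun e he => ?_
    have hCm : 0 < C * m := by positivity
    refine (hfin (S0 + e / (C * m)) (by linarith [div_pos he hCm])).trans (le_of_eq ?_)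
    field_simp

/-- Any continuous root of a monic polynomial of degree `n` with
`C^{n-1,1}` coefficients on a bounded interval `(α,β)` is absolutely continuous with
derivative in `L^p` for `1 ≤ p < n/(n-1)`, with the uniform bound
`‖λ'‖_{L^p} ≤ C(n,p) max{1,(β-α)^{1/p}} max_j ‖a_j‖_{C^{n-1,1}}^{1/j}`. -/
theorem continuous_root_absolutely_continuous_Lp
    (n : ℕ) (hn : 2 ≤ n) (p : ℝ) (hp1 : 1 ≤ p)
    (hp2 : p < (n : ℝ) / ((n : ℝ) - 1)) :
    ∃ C : ℝ, 0 < C ∧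
      ∀ (α β : ℝ), α < β →
      ∀ d : ℕ → ℕ → ℝ → ℂ,
      (∀ j ∈ Finset.Icc 1 n, MemCk1 (d j) (n - 1) (Icc α β)) →
      ∀ l : ℝ → ℂ, ContinuousOn l (Ioo α β) →
      (∀ t ∈ Ioo α β, l t ^ n + ∑ j ∈ Finset.Icc 1 n, d j 0 t * l t ^ (n - j) = 0) →
      AbsContOn l (Ioo α β) ∧
      IntegrableOn (fun t => ‖deriv l t‖ ^ p) (Ioo α β) volume ∧
      (∫ t in Ioo α β, ‖deriv l t‖ ^ p) ^ (1 / p) ≤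
        C * max 1 ((β - α) ^ (1 / p)) *
          (Finset.Icc 1 n).sup' (Finset.nonempty_Icc.mpr (by omega))
            (fun j => CNorm (d j) (n - 1) (Icc α β) ^ ((j : ℝ)⁻¹)) := by
  exact root_main n hn p hp1 hp2 _
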